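/- arXiv:math/0604047 — 3 statements merged into one kernel-verified Lean document; each statement's English description precedes it below -/
import Mathlib

section
/- Let X be an infinite compact metric space, let α_1, …, α_d be pairwise commuting homeomorphisms of X, and let μ be a strictly positive Borel probability measure on X that is invariant under the action of α_1, …, α_d. Then there exist: a unital simple AF-algebra C_0 with a unique tracial state τ; a commutative C*-subalgebra C_00 ⊆ C_0 containing the unit of C_0 which is itself an AF-algebra; a unital injective *-homomorphism h : C(X, ℂ) → C_00 with τ(h(f)) = ∫_X f dμ for all f ∈ C(X, ℂ); and, for each j = 1, …, d, a norm-continuous path (u_{j,t})_{t ∈ [1, ∞)} of unitaries in C_0 such that lim_{t→∞} ‖h(f ∘ α_j) − u_{j,t}* h(f) u_{j,t}‖ = 0 for every f ∈ C(X, ℂ). -/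
open scoped ComplexOrder

/-- A bundled unital C*-algebra. -/
structure UnitalCStarAlg where
  carrier : Type
  [normedRing : NormedRing carrier]
  [starRing : StarRing carrier]
  [cstarRing : CStarRing carrier]
  [normedAlgebra : NormedAlgebra ℂ carrier]
  [starModule : StarModule ℂ carrier]
  [completeSpace : CompleteSpace carrier]

attribute [instance] UnitalCStarAlg.normedRing UnitalCStarAlg.starRing
  UnitalCStarAlg.cstarRing UnitalCStarAlg.normedAlgebra UnitalCStarAlg.starModule
  UnitalCStarAlg.completeSpace

/-- A unital C*-algebra is AF if it has an increasing sequence of finite-dimensional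
*-subalgebras (each containing the unit) with dense union. -/
def UnitalCStarAlg.IsAF (B : UnitalCStarAlg) : Prop :=
  ∃ S : ℕ → StarSubalgebra ℂ B.carrier,
    Monotone S ∧ (∀ n, FiniteDimensional ℂ (S n)) ∧ Dense (⋃ n, (S n : Set B.carrier))

/-- A unital C*-algebra is simple if its only closed two-sided ideals are `{0}` and the
whole algebra. -/
def UnitalCStarAlg.IsSimple (B : UnitalCStarAlg) : Prop :=
  ∀ I : TwoSidedIdeal B.carrier, IsClosed (I : Set B.carrier) → I = ⊥ ∨ I = ⊤

/-- A tracial state on a unital C*-algebra. -/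
def UnitalCStarAlg.IsTracialState (B : UnitalCStarAlg) (τ : B.carrier →ₗ[ℂ] ℂ) : Prop :=
  τ 1 = 1 ∧ (∀ a : B.carrier, 0 ≤ τ (star a * a)) ∧
    ∀ a b : B.carrier, τ (a * b) = τ (b * a)

open MeasureTheory Filter

namespace AFX

theorem exists_indep_aux {ι κ : Type} [Fintype ι] [Finite κ] (v : ι → ℝ) (hv : ∀ i, 0 < v i)
    (hli : LinearIndependent ℚ v) (q : κ → ι → ℚ) (hq : ∀ k, 0 < ∑ i, (q k i : ℝ) * v i) :
    ∃ b : ι → ℝ, (∀ i, 0 < b i) ∧ LinearIndependent ℚ b ∧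
      ∃ t : κ → ι → ℚ, (∀ k i, 0 < t k i) ∧ ∀ k, ∑ i, (q k i : ℝ) * v i = ∑ i, (t k i : ℝ) * b i := by
  classical
  rcases isEmpty_or_nonempty ι with hι | hι
  · refine ⟨v, hv, hli, fun k i => isEmptyElim i, fun k i => isEmptyElim i, fun k => by simp⟩
  have h1 : ∀ᶠ η : ℝ in nhds 0, ∀ k j, 0 < (∑ i, (q k i : ℝ) * v i) + η * q k j := by
    rw [Filter.eventually_all]; intro k
    rw [Filter.eventually_all]; intro j
    have hc : Continuous fun η : ℝ => (∑ i, (q k i : ℝ) * v i) + η * q k j := by fun_prop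
    apply hc.continuousAt.eventually (p := fun y => 0 < y)
    apply lt_mem_nhds
    simpa using hq k
  obtain ⟨η, hη0, hη⟩ : ∃ η : ℚ, 0 < η ∧ ∀ k j, 0 < (∑ i, (q k i : ℝ) * v i) + (η:ℝ) * q k j := by
    rw [Metric.eventually_nhds_iff] at h1
    obtain ⟨ε, hε, h⟩ := h1
    obtain ⟨η, h0, h1⟩ := exists_rat_btwn hε
    refine ⟨η, by exact_mod_cast h0, h ?_⟩
    rw [Real.dist_eq, sub_zero, abs_of_pos h0]; exact h1
  have hη0' : (0:ℝ) < η := by exact_mod_cast hη0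
  have hsum : 0 < ∑ i, v i := Finset.sum_pos (fun i _ => hv i) Finset.univ_nonempty
  have h2 : ∀ᶠ r : ι → ℝ in nhds v, (∀ k j, 0 < (∑ i, (q k i : ℝ) * r i) + (η:ℝ) * q k j) ∧
      (0 < η + ∑ i, r i) ∧ ∀ i, 0 < v i - (∑ i, v i) / (η + ∑ i, r i) * r i := by
    refine Filter.Eventually.and ?_ (Filter.Eventually.and ?_ ?_)
    · rw [Filter.eventually_all]; intro k
      rw [Filter.eventually_all]; intro j
      have hc : Continuous fun r : ι → ℝ => (∑ i, (q k i : ℝ) * r i) + η * q k j := by fun_prop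
      apply hc.continuousAt.eventually (p := fun y => 0 < y)
      exact lt_mem_nhds (hη k j)
    · have hc : Continuous fun r : ι → ℝ => η + ∑ i, r i := by fun_prop
      apply hc.continuousAt.eventually (p := fun y => 0 < y)
      apply lt_mem_nhds
      positivity
    · rw [Filter.eventually_all]; intro i
      have hc : ContinuousAt (fun r : ι → ℝ => v i - (∑ i, v i) / (η + ∑ i, r i) * r i) v := by
        apply ContinuousAt.sub continuousAt_const
        apply ContinuousAt.mul _ (continuous_apply i).continuousAt
        apply ContinuousAt.div continuousAt_const (by fun_prop)
        positivity
      apply hc.eventually (p := fun y => 0 < y)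
      apply lt_mem_nhds
      have : (∑ i, v i) / (η + ∑ i, v i) < 1 := by
        rw [div_lt_one (by positivity)]; linarith
      nlinarith [hv i]
  have hd : DenseRange (fun r : ι → ℚ => fun i => (r i : ℝ)) :=
    DenseRange.piMap (fun _ => Rat.denseRange_cast)
  obtain ⟨_, ⟨r, rfl⟩, hr1, hr2, hr3⟩ := hd.inter_nhds_nonempty h2
  set C : ℝ := (∑ i, v i) / (η + ∑ i, (r i:ℝ)) with hC
  set b : ι → ℝ := fun i => (v i - C * r i) / η with hb
  have hbs : ∑ i, b i = C := by
    simp only [hb, ← Finset.sum_div, Finset.sum_sub_distrib, ← Finset.mul_sum]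
    rw [hC]; have := hr2.ne'; field_simp; ring
  have hvb : ∀ i, v i = η * b i + (∑ j, b j) * r i := by
    intro i; rw [hbs]; simp only [hb]; field_simp; ring
  refine ⟨b, fun i => div_pos (hr3 i) hη0', ?_, fun k j => (∑ i, q k i * r i) + η * q k j, ?_, ?_⟩
  · rw [linearIndependent_iff_card_le_finrank_span]
    rw [linearIndependent_iff_card_le_finrank_span] at hli
    refine hli.trans ?_
    have : FiniteDimensional ℚ (Submodule.span ℚ (Set.range b)) :=
      FiniteDimensional.span_of_finite ℚ (Set.finite_range b)
    apply Submodule.finrank_mono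
    rw [Submodule.span_le]
    rintro _ ⟨i, rfl⟩
    have hbm : ∀ j, b j ∈ Submodule.span ℚ (Set.range b) := fun j =>
      Submodule.subset_span ⟨j, rfl⟩
    rw [SetLike.mem_coe, hvb i]
    apply Submodule.add_mem
    · rw [← Rat.smul_def]; exact Submodule.smul_mem _ _ (hbm i)
    · rw [mul_comm, ← Rat.smul_def]
      exact Submodule.smul_mem _ _ (Submodule.sum_mem _ fun j _ => hbm j)
  · intro k j
    have := hr1 k j
    beta_reduce at this ⊢
    exact_mod_cast this
  · intro k
    push_cast
    simp_rw [add_mul, Finset.sum_add_distrib]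
    rw [← Finset.mul_sum, Finset.sum_mul, ← Finset.sum_add_distrib]
    apply Finset.sum_congr rfl
    intro i _
    conv_lhs => rw [hvb i]
    ring

theorem exists_indep (G : Finset ℝ) (hG : ∀ g ∈ G, 0 < g) :
    ∃ B : Set ℝ, (∀ b ∈ B, 0 < b) ∧ LinearIndepOn ℚ id B ∧
      ∀ g ∈ G, g ∈ AddSubmonoid.closure B := by
  classical
  obtain ⟨b, hbG, hspan, hli⟩ := exists_linearIndependent ℚ (G : Set ℝ)
  have hbf : b.Finite := G.finite_toSet.subset hbG
  have := hbf.fintype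
  have hex : ∀ g : G, ∃ q : b → ℚ, ∑ i, q i • (i : ℝ) = g := by
    intro g
    have : (g : ℝ) ∈ Submodule.span ℚ (Set.range (Subtype.val : b → ℝ)) := by
      rw [Subtype.range_coe, hspan]; exact Submodule.subset_span g.2
    exact (Submodule.mem_span_range_iff_exists_fun ℚ).1 this
  choose q hq using hex
  simp only [Rat.smul_def] at hq
  obtain ⟨c, hc0, hcli, t, ht, hsum⟩ := exists_indep_aux (ι := b) (κ := G) (fun i => (i : ℝ))
    (fun i => hG _ (hbG i.2)) hli q (fun k => by rw [hq]; exact hG _ k.2)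
  set N : ℕ := ∏ k : G, ∏ i : b, (t k i).den with hN
  have hN0 : 0 < N := Finset.prod_pos fun k _ => Finset.prod_pos fun i _ => (t k i).den_pos
  have hNint : ∀ k i, ∃ m : ℕ, (N : ℚ) * t k i = m := by
    intro k i
    have hd : (t k i).den ∣ N :=
      (Finset.dvd_prod_of_mem (fun i => (t k i).den) (Finset.mem_univ i)).trans
        (Finset.dvd_prod_of_mem (fun k => ∏ i : b, (t k i).den) (Finset.mem_univ k))
    obtain ⟨e, he⟩ := hd
    refine ⟨e * (t k i).num.toNat, ?_⟩
    have h1 : ((t k i).num.toNat : ℚ) = (t k i).num := by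
      have := Int.toNat_of_nonneg (Rat.num_nonneg.2 (ht k i).le)
      exact_mod_cast this
    push_cast
    rw [h1, he, ← Rat.mul_den_eq_num (t k i)]
    push_cast; ring
  have hNr : (0:ℝ) < N := by exact_mod_cast hN0
  refine ⟨Set.range fun i => (N : ℚ)⁻¹ • c i, ?_, ?_, ?_⟩
  · rintro _ ⟨i, rfl⟩
    simp only [Rat.smul_def]
    have := hc0 i
    push_cast
    positivity
  · have h2 : LinearIndependent ℚ fun i => (N : ℚ)⁻¹ • c i := by
      have := hcli.units_smul (fun _ => Units.mk0 (N : ℚ)⁻¹ (by positivity))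
      exact this
    exact h2.linearIndepOn_id
  · intro g hg
    have h := hsum ⟨g, hg⟩
    rw [hq] at h
    simp only at h
    rw [h]
    apply AddSubmonoid.sum_mem
    intro i _
    obtain ⟨m, hm⟩ := hNint ⟨g, hg⟩ i
    have : (t ⟨g, hg⟩ i : ℝ) * c i = m • ((N : ℚ)⁻¹ • c i) := by
      have hm' : (N : ℝ) * t ⟨g, hg⟩ i = m := by exact_mod_cast hm
      rw [nsmul_eq_mul, ← hm', Rat.smul_def]
      push_cast; field_simp
    rw [this]
    exact AddSubmonoid.nsmul_mem _ (AddSubmonoid.subset_closure (Set.mem_range_self i)) _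

end AFX

namespace AFX

noncomputable def lo (E : Finset ℝ) (x : ℝ) : ℝ := sSup {e | e ∈ E ∧ e ≤ x}
noncomputable def hi (E : Finset ℝ) (x : ℝ) : ℝ := sInf {e | e ∈ E ∧ x < e}

theorem lo_eq {E : Finset ℝ} {x a : ℝ} (ha : a ∈ E) (hax : a ≤ x)
    (h : ∀ e ∈ E, e ≤ x → e ≤ a) : lo E x = a :=
  IsGreatest.csSup_eq ⟨⟨ha, hax⟩, fun e he => h e he.1 he.2⟩

theorem hi_eq {E : Finset ℝ} {x a : ℝ} (ha : a ∈ E) (hax : x < a)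
    (h : ∀ e ∈ E, x < e → a ≤ e) : hi E x = a :=
  IsLeast.csInf_eq ⟨⟨ha, hax⟩, fun e he => h e he.1 he.2⟩

theorem lo_spec {E : Finset ℝ} {x e0 : ℝ} (h0 : e0 ∈ E) (hx : e0 ≤ x) :
    lo E x ∈ E ∧ lo E x ≤ x ∧ ∀ e ∈ E, e ≤ x → e ≤ lo E x := by
  have hfin : {e | e ∈ E ∧ e ≤ x}.Finite := E.finite_toSet.subset fun e he => he.1
  have hne : {e | e ∈ E ∧ e ≤ x}.Nonempty := ⟨e0, h0, hx⟩
  have h1 := hne.csSup_mem hfin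
  exact ⟨h1.1, h1.2, fun e he hex => le_csSup hfin.bddAbove ⟨he, hex⟩⟩

theorem hi_spec {E : Finset ℝ} {x e0 : ℝ} (h0 : e0 ∈ E) (hx : x < e0) :
    hi E x ∈ E ∧ x < hi E x ∧ ∀ e ∈ E, x < e → hi E x ≤ e := by
  have hfin : {e | e ∈ E ∧ x < e}.Finite := E.finite_toSet.subset fun e he => he.1
  have hne : {e | e ∈ E ∧ x < e}.Nonempty := ⟨e0, h0, hx⟩
  have h1 := hne.csInf_mem hfin
  exact ⟨h1.1, h1.2, fun e he hex => csInf_le hfin.bddBelow ⟨he, hex⟩⟩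

structure Valid (E : Finset ℝ) : Prop where
  zero : (0:ℝ) ∈ E
  one : (1:ℝ) ∈ E
  nonneg : ∀ e ∈ E, 0 ≤ e
  le_one : ∀ e ∈ E, e ≤ 1

section
variable {E : Finset ℝ} (hE : Valid E)
include hE

theorem Valid.lo_mem {x : ℝ} (hx : 0 ≤ x) : lo E x ∈ E := (lo_spec hE.zero hx).1
theorem Valid.lo_le {x : ℝ} (hx : 0 ≤ x) : lo E x ≤ x := (lo_spec hE.zero hx).2.1
theorem Valid.le_lo {x : ℝ} (hx : 0 ≤ x) {e : ℝ} (he : e ∈ E) (h : e ≤ x) : e ≤ lo E x :=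
  (lo_spec hE.zero hx).2.2 e he h
theorem Valid.lo_nonneg {x : ℝ} (hx : 0 ≤ x) : 0 ≤ lo E x := hE.nonneg _ (hE.lo_mem hx)
theorem Valid.hi_mem {x : ℝ} (hx : x < 1) : hi E x ∈ E := (hi_spec hE.one hx).1
theorem Valid.lt_hi {x : ℝ} (hx : x < 1) : x < hi E x := (hi_spec hE.one hx).2.1
theorem Valid.hi_le {x : ℝ} (hx : x < 1) {e : ℝ} (he : e ∈ E) (h : x < e) : hi E x ≤ e :=
  (hi_spec hE.one hx).2.2 e he h
theorem Valid.hi_le_one {x : ℝ} (hx : x < 1) : hi E x ≤ 1 := hE.le_one _ (hE.hi_mem hx)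

theorem Valid.lo_of_mem {x : ℝ} (hx : x ∈ E) : lo E x = x :=
  lo_eq hx le_rfl fun _ _ h => h

theorem Valid.between {e x : ℝ} (he : e ∈ E) (he1 : e < 1) (h1 : e ≤ x) (h2 : x < hi E e) :
    lo E x = e ∧ hi E x = hi E e := by
  refine ⟨lo_eq he h1 fun f hf hfx => ?_, hi_eq (hE.hi_mem he1) h2 fun f hf hfx => ?_⟩
  · by_contra h
    exact absurd (hE.hi_le he1 hf (not_le.1 h)) (by linarith)
  · exact hE.hi_le he1 hf (by linarith)

theorem Valid.hi_lo {x : ℝ} (hx : 0 ≤ x) (hx1 : x < 1) : hi E (lo E x) = hi E x := by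
  have h1 : lo E x < 1 := (hE.lo_le hx).trans_lt hx1
  refine hi_eq (hE.hi_mem hx1) ((hE.lo_le hx).trans_lt (hE.lt_hi hx1)) fun e he h => ?_
  apply hE.hi_le hx1 he
  by_contra hh
  exact absurd (hE.le_lo hx he (not_lt.1 hh)) (by linarith)

/-- same atom iff same comparison with endpoints -/
theorem Valid.lo_eq_iff {x y : ℝ} (hx : 0 ≤ x) (hy : 0 ≤ y) :
    lo E x = lo E y ↔ ∀ e ∈ E, (e ≤ x ↔ e ≤ y) := by
  constructor
  · intro h e he
    constructor
    · intro h1; exact (hE.le_lo hx he h1).trans (h ▸ hE.lo_le hy)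
    · intro h1; exact (hE.le_lo hy he h1).trans (h ▸ hE.lo_le hx)
  · intro h
    apply le_antisymm
    · exact hE.le_lo hy (hE.lo_mem hx) ((h _ (hE.lo_mem hx)).1 (hE.lo_le hx))
    · exact hE.le_lo hx (hE.lo_mem hy) ((h _ (hE.lo_mem hy)).2 (hE.lo_le hy))

end

noncomputable def cut (E : Finset ℝ) (c : ℝ → Finset ℝ) : Finset ℝ :=
  insert 1 ((E.filter (· < 1)).biUnion fun e => (c (hi E e - e)).image (e + ·))

/-- offset relation -/
def Rel (E : Finset ℝ) (x y : ℝ) : Prop := x - lo E x = y - lo E y ∧ hi E x - x = hi E y - y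

section
variable {E : Finset ℝ} (hE : Valid E) {c : ℝ → Finset ℝ}
  (hc : ∀ e ∈ E, e < 1 → 0 ∈ c (hi E e - e) ∧ ∀ t ∈ c (hi E e - e), 0 ≤ t ∧ t < hi E e - e)
include hE hc

theorem subset_cut : E ⊆ cut E c := by
  intro e he
  rcases (hE.le_one e he).eq_or_lt with h | h
  · simp [cut, h]
  · simp only [cut, Finset.mem_insert, Finset.mem_biUnion, Finset.mem_filter, Finset.mem_image]
    exact Or.inr ⟨e, ⟨he, h⟩, 0, (hc e he h).1, by simp⟩

theorem mem_cut {x : ℝ} (hx : 0 ≤ x) (hx1 : x < 1) :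
    x ∈ cut E c ↔ x - lo E x ∈ c (hi E x - lo E x) := by
  simp only [cut, Finset.mem_insert, Finset.mem_biUnion, Finset.mem_filter, Finset.mem_image]
  constructor
  · rintro (h | ⟨e, ⟨he, he1⟩, t, ht, rfl⟩)
    · linarith
    · have h1 := (hc e he he1).2 t ht
      obtain ⟨h2, h3⟩ := hE.between he he1 (x := e + t) (by linarith) (by linarith)
      rw [h2, h3]; simpa using ht
  · intro h
    right
    refine ⟨lo E x, ⟨hE.lo_mem hx, (hE.lo_le hx).trans_lt hx1⟩, x - lo E x, ?_, by ring⟩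
    rw [hE.hi_lo hx hx1]; exact h

theorem valid_cut : Valid (cut E c) := by
  refine ⟨subset_cut hE hc hE.zero, subset_cut hE hc hE.one, ?_, ?_⟩ <;>
  · intro x hx
    simp only [cut, Finset.mem_insert, Finset.mem_biUnion, Finset.mem_filter, Finset.mem_image] at hx
    rcases hx with h | ⟨e, ⟨he, he1⟩, t, ht, rfl⟩
    · linarith
    · have h1 := (hc e he he1).2 t ht
      have := hE.nonneg e he
      have := hE.hi_le_one he1
      linarith

theorem hc_of {x : ℝ} (hx : 0 ≤ x) (hx1 : x < 1) : 0 ∈ c (hi E x - lo E x) ∧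
    ∀ t ∈ c (hi E x - lo E x), 0 ≤ t ∧ t < hi E x - lo E x := by
  have := hc (lo E x) (hE.lo_mem hx) ((hE.lo_le hx).trans_lt hx1)
  rwa [hE.hi_lo hx hx1] at this

theorem same_of {x y : ℝ} (hx : 0 ≤ x) (hx1 : x < 1) (h1 : lo E x ≤ y) (h2 : y < hi E x) :
    lo E y = lo E x ∧ hi E y = hi E x := by
  have := hE.between (hE.lo_mem hx) ((hE.lo_le hx).trans_lt hx1) (x := y) h1
    (by rwa [hE.hi_lo hx hx1])
  rwa [hE.hi_lo hx hx1] at this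

theorem lo_cut {x : ℝ} (hx : 0 ≤ x) (hx1 : x < 1) :
    lo (cut E c) x = lo E x + lo (c (hi E x - lo E x)) (x - lo E x) := by
  obtain ⟨hc0, hc1⟩ := hc_of hE hc hx hx1
  have hl := hE.lo_le hx
  have hh := hE.lt_hi hx1
  have h0 := hE.lo_nonneg hx
  obtain ⟨h1, h2, h3⟩ := lo_spec hc0 (show 0 ≤ x - lo E x by linarith)
  set t := lo (c (hi E x - lo E x)) (x - lo E x)
  have ht := hc1 t h1
  obtain ⟨h4, h5⟩ := same_of hE hc hx hx1 (y := lo E x + t) (by linarith) (by linarith)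
  refine lo_eq ?_ (by linarith) ?_
  · rw [mem_cut hE hc (by linarith) (by linarith), h4, h5]; simpa using h1
  · intro e he hex
    by_cases h : lo E x ≤ e
    · obtain ⟨h6, h7⟩ := same_of hE hc hx hx1 h (by linarith)
      rw [mem_cut hE hc (by linarith) (by linarith), h6, h7] at he
      linarith [h3 _ he (by linarith)]
    · linarith

theorem hi_cut {x : ℝ} (hx : 0 ≤ x) (hx1 : x < 1) :
    hi (cut E c) x = lo E x + hi (insert (hi E x - lo E x) (c (hi E x - lo E x))) (x - lo E x) := by
  obtain ⟨hc0, hc1⟩ := hc_of hE hc hx hx1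
  have hl := hE.lo_le hx
  have hh := hE.lt_hi hx1
  have h0 := hE.lo_nonneg hx
  obtain ⟨h1, h2, h3⟩ := hi_spec
    (Finset.mem_insert_self (hi E x - lo E x) (c (hi E x - lo E x)))
    (show x - lo E x < hi E x - lo E x by linarith)
  set t := hi (insert (hi E x - lo E x) (c (hi E x - lo E x))) (x - lo E x)
  refine hi_eq ?_ (by linarith) ?_
  · rw [Finset.mem_insert] at h1
    rcases h1 with h1 | h1
    · rw [h1]; apply subset_cut hE hc; simpa using hE.hi_mem hx1
    · have ht := hc1 t h1
      have := hE.hi_le_one hx1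
      obtain ⟨h4, h5⟩ := same_of hE hc hx hx1 (y := lo E x + t) (by linarith) (by linarith)
      rw [mem_cut hE hc (by linarith) (by linarith), h4, h5]; simpa using h1
  · intro e he hex
    by_cases h : e < hi E x
    · have := hE.hi_le_one hx1
      obtain ⟨h6, h7⟩ := same_of hE hc hx hx1 (y := e) (by linarith) h
      rw [mem_cut hE hc (by linarith) (by linarith), h6, h7] at he
      linarith [h3 _ (Finset.mem_insert_of_mem he) (by linarith)]
    · linarith [h3 _ (Finset.mem_insert_self _ _) (by linarith)]

theorem rel_cut {x y : ℝ} (hx : 0 ≤ x) (hx1 : x < 1) (hy : 0 ≤ y) (hy1 : y < 1)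
    (h : Rel E x y) : Rel (cut E c) x y := by
  obtain ⟨h1, h2⟩ := h
  have h3 : hi E x - lo E x = hi E y - lo E y := by linarith
  unfold Rel
  rw [lo_cut hE hc hx hx1, lo_cut hE hc hy hy1, hi_cut hE hc hx hx1, hi_cut hE hc hy hy1, h3, h1]
  constructor <;> linarith

theorem gap_cut {B : Set ℝ}
    (hB : ∀ e ∈ E, e < 1 → ∀ t ∈ c (hi E e - e),
      hi (insert (hi E e - e) (c (hi E e - e))) t - t ∈ B)
    {x : ℝ} (hx : x ∈ cut E c) (hx1 : x < 1) : hi (cut E c) x - x ∈ B := by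
  have hx0 := (valid_cut hE hc).nonneg x hx
  rw [mem_cut hE hc hx0 hx1] at hx
  have h1 := hB (lo E x) (hE.lo_mem hx0) ((hE.lo_le hx0).trans_lt hx1) (x - lo E x)
  rw [hE.hi_lo hx0 hx1] at h1
  have h2 := h1 hx
  rw [hi_cut hE hc hx0 hx1]
  convert h2 using 1; ring

end

theorem exists_cut {B : Set ℝ} (hB : ∀ b ∈ B, 0 < b) {g : ℝ} (hg : g ∈ AddSubmonoid.closure B) :
    0 ≤ g ∧ ∃ c : Finset ℝ, (∀ t ∈ c, 0 ≤ t ∧ t < g) ∧ (0 < g → 0 ∈ c) ∧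
      ∀ t ∈ c, ∃ b ∈ B, t + b ∈ insert g c ∧ ∀ z ∈ c, z ≤ t ∨ t + b ≤ z := by
  classical
  induction hg using AddSubmonoid.closure_induction with
  | mem b hb =>
    have := hB b hb
    exact ⟨this.le, {0}, by simpa using this, by simp, by
      intro t ht; rw [Finset.mem_singleton] at ht; subst ht
      exact ⟨b, hb, by simp, by simp⟩⟩
  | zero => exact ⟨le_rfl, ∅, by simp⟩
  | add g1 g2 _ _ h1 h2 =>
    obtain ⟨h10, c1, h11, h12, h13⟩ := h1
    obtain ⟨h20, c2, h21, h22, h23⟩ := h2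
    refine ⟨by linarith, c1 ∪ c2.image (g1 + ·), ?_, ?_, ?_⟩
    · intro t ht
      simp only [Finset.mem_union, Finset.mem_image] at ht
      rcases ht with ht | ⟨s, hs, rfl⟩
      · have := h11 t ht; constructor <;> linarith
      · have := h21 s hs; constructor <;> linarith
    · intro h
      simp only [Finset.mem_union, Finset.mem_image]
      rcases h10.eq_or_lt with h' | h'
      · right; exact ⟨0, h22 (by linarith), by linarith⟩
      · left; exact h12 h'
    · intro t ht
      simp only [Finset.mem_union, Finset.mem_image] at ht
      rcases ht with ht | ⟨s, hs, rfl⟩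
      · obtain ⟨b, hb, hm, hz⟩ := h13 t ht
        have hle : t + b ≤ g1 := by
          rw [Finset.mem_insert] at hm
          rcases hm with hm | hm
          · exact hm.le
          · exact (h11 _ hm).2.le
        refine ⟨b, hb, ?_, ?_⟩
        · rw [Finset.mem_insert] at hm
          simp only [Finset.mem_union, Finset.mem_image, Finset.mem_insert]
          rcases hm with hm | hm
          · rcases h20.eq_or_lt with h' | h'
            · left; linarith
            · right; right; exact ⟨0, h22 h', by linarith⟩
          · right; left; exact hm
        · intro z hz'
          simp only [Finset.mem_union, Finset.mem_image] at hz'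
          rcases hz' with h' | ⟨s, hs, rfl⟩
          · exact hz z h'
          · right; linarith [h21 s hs]
      · obtain ⟨b, hb, hm, hz⟩ := h23 s hs
        refine ⟨b, hb, ?_, ?_⟩
        · rw [Finset.mem_insert] at hm
          simp only [Finset.mem_union, Finset.mem_image, Finset.mem_insert]
          rcases hm with hm | hm
          · left; linarith
          · right; right; exact ⟨_, hm, by ring⟩
        · intro z hz'
          simp only [Finset.mem_union, Finset.mem_image] at hz'
          rcases hz' with h' | ⟨s', hs', rfl⟩
          · left; linarith [h11 z h', h21 s hs]
          · rcases hz s' hs' with h | h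
            · left; linarith
            · right; linarith

/-- lengths of the gaps are rationally independent -/
def Indep (E : Finset ℝ) : Prop :=
  ∃ B : Set ℝ, LinearIndepOn ℚ id B ∧ ∀ x ∈ E, x < 1 → hi E x - x ∈ B

/-- one partition refines another compatibly -/
def Compat (E E' : Finset ℝ) : Prop :=
  E ⊆ E' ∧ ∀ x y : ℝ, 0 ≤ x → x < 1 → 0 ≤ y → y < 1 → Rel E x y → Rel E' x y

theorem step1 {E : Finset ℝ} (hE : Valid E) {q : ℝ} (hq : 0 ≤ q) (hq1 : q ≤ 1) :
    ∃ E', Valid E' ∧ Compat E E' ∧ q ∈ E' := by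
  classical
  rcases hq1.eq_or_lt with h | h
  · exact ⟨E, hE, ⟨subset_rfl, fun _ _ _ _ _ _ h => h⟩, h ▸ hE.one⟩
  · set c : ℝ → Finset ℝ := fun l => if l = hi E q - lo E q then {0, q - lo E q} else {0} with hcd
    have hc : ∀ e ∈ E, e < 1 →
        0 ∈ c (hi E e - e) ∧ ∀ t ∈ c (hi E e - e), 0 ≤ t ∧ t < hi E e - e := by
      intro e he he1
      have h1 := hE.lt_hi he1
      have h2 := hE.lt_hi h
      have h3 := hE.lo_le hq
      simp only [hcd]
      split_ifs with h'
      · refine ⟨by simp, ?_⟩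
        intro t ht
        simp only [Finset.mem_insert, Finset.mem_singleton] at ht
        rcases ht with rfl | rfl <;> constructor <;> linarith
      · refine ⟨by simp, ?_⟩
        intro t ht
        simp only [Finset.mem_singleton] at ht
        subst ht; constructor <;> linarith
    refine ⟨cut E c, valid_cut hE hc, ⟨subset_cut hE hc, fun x y a b c d => rel_cut hE hc a b c d⟩, ?_⟩
    rw [mem_cut hE hc hq h]
    simp [hcd]

theorem step2 {E : Finset ℝ} (hE : Valid E) :
    ∃ E', Valid E' ∧ Compat E E' ∧ Indep E' := by
  classical
  obtain ⟨B, hB0, hBi, hB⟩ := exists_indep ((E.filter (· < 1)).image fun e => hi E e - e) (by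
    intro g hg
    simp only [Finset.mem_image, Finset.mem_filter] at hg
    obtain ⟨e, ⟨he, he1⟩, rfl⟩ := hg
    linarith [hE.lt_hi he1])
  have h1 : ∀ g : ℝ, ∃ c : Finset ℝ, g ∈ AddSubmonoid.closure B → ((∀ t ∈ c, 0 ≤ t ∧ t < g) ∧
      (0 < g → 0 ∈ c) ∧ ∀ t ∈ c, ∃ b ∈ B, t + b ∈ insert g c ∧ ∀ z ∈ c, z ≤ t ∨ t + b ≤ z) := by
    intro g
    by_cases hg : g ∈ AddSubmonoid.closure B
    · obtain ⟨c, hc⟩ := (exists_cut hB0 hg).2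
      exact ⟨c, fun _ => hc⟩
    · exact ⟨∅, fun h => absurd h hg⟩
  choose c hcc using h1
  have hm : ∀ e ∈ E, e < 1 → hi E e - e ∈ AddSubmonoid.closure B := fun e he he1 => by
    apply hB
    simp only [Finset.mem_image, Finset.mem_filter]
    exact ⟨e, ⟨he, he1⟩, rfl⟩
  have hc : ∀ e ∈ E, e < 1 →
        0 ∈ c (hi E e - e) ∧ ∀ t ∈ c (hi E e - e), 0 ≤ t ∧ t < hi E e - e := by
    intro e he he1
    obtain ⟨h2, h3, h4⟩ := hcc _ (hm e he he1)
    exact ⟨h3 (by linarith [hE.lt_hi he1]), h2⟩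
  refine ⟨cut E c, valid_cut hE hc, ⟨subset_cut hE hc, fun x y a b c d => rel_cut hE hc a b c d⟩,
    B, hBi, fun x hx hx1 => gap_cut hE hc ?_ hx hx1⟩
  intro e he he1 t ht
  obtain ⟨h2, h3, h4⟩ := hcc _ (hm e he he1)
  obtain ⟨b, hb, hb1, hb2⟩ := h4 t ht
  have hb0 := hB0 b hb
  have : hi (insert (hi E e - e) (c (hi E e - e))) t = t + b := by
    refine hi_eq hb1 (by linarith) ?_
    intro z hz htz
    rw [Finset.mem_insert] at hz
    rcases hz with rfl | hz
    · rw [Finset.mem_insert] at hb1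
      rcases hb1 with h | h
      · exact h.le
      · exact (h2 _ h).2.le
    · rcases hb2 z hz with h | h
      · linarith
      · exact h
  rw [this]; simpa using hb

theorem Compat.trans {E E' E'' : Finset ℝ} (h : Compat E E') (h' : Compat E' E'') : Compat E E'' :=
  ⟨h.1.trans h'.1, fun x y a b c d r => h'.2 x y a b c d (h.2 x y a b c d r)⟩

theorem Compat.refl (E : Finset ℝ) : Compat E E := ⟨subset_rfl, fun _ _ _ _ _ _ r => r⟩

theorem step {E : Finset ℝ} (hE : Valid E) {q : ℝ} (hq : 0 ≤ q ∧ q ≤ 1) :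
    ∃ E', Valid E' ∧ Compat E E' ∧ Indep E' ∧ q ∈ E' := by
  obtain ⟨E1, h1, h2, h3⟩ := step1 hE hq.1 hq.2
  obtain ⟨E2, h4, h5, h6⟩ := step2 h1
  exact ⟨E2, h4, h2.trans h5, h6, h5.1 h3⟩

theorem exists_seq (q : ℕ → ℝ) (hq : ∀ n, 0 ≤ q n ∧ q n ≤ 1) :
    ∃ E : ℕ → Finset ℝ, (∀ n, Valid (E n)) ∧ (∀ n, Indep (E n)) ∧
      (∀ m n, m ≤ n → Compat (E m) (E n)) ∧ ∀ n, q n ∈ E n := by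
  have h0 : Valid {0, 1} := ⟨by simp, by simp, by simp, by simp⟩
  choose f hf using fun (E : {E : Finset ℝ // Valid E}) (n : ℕ) => step E.2 (hq n)
  let s : ℕ → {E : Finset ℝ // Valid E} := fun n =>
    Nat.rec ⟨{0, 1}, h0⟩ (fun n E => ⟨f E n, (hf E n).1⟩) n
  have hs : ∀ n, (s (n+1) : Finset ℝ) = f (s n) n := fun n => rfl
  refine ⟨fun n => s (n+1), fun n => (s (n+1)).2, fun n => (hf (s n) n).2.2.1, ?_, 
    fun n => (hf (s n) n).2.2.2⟩
  intro m n hmn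
  induction n, hmn using Nat.le_induction with
  | base => exact Compat.refl _
  | succ n _ ih => exact ih.trans (hf (s (n+1)) (n+1)).2.1

end AFX

namespace AFX

theorem pinv {A : Type*} (σ : Equiv.Perm A) (x : A) : σ (σ⁻¹ x) = x := by simp

abbrev Om : Type := Set.Ico (0:ℝ) 1

theorem Om.n (x : Om) : 0 ≤ x.1 := x.2.1
theorem Om.l (x : Om) : x.1 < 1 := x.2.2

/-- measurable w.r.t. atoms -/
def Meas {β : Type*} (E : Finset ℝ) (c : Om → β) : Prop :=
  ∀ x y : Om, lo E x = lo E y → c x = c y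

abbrev At (E : Finset ℝ) : Type := {x : Om // x.1 ∈ E}

noncomputable instance (E : Finset ℝ) : Fintype (At E) :=
  Fintype.ofInjective (fun x : At E => (⟨x.1.1, x.2⟩ : E)) (by
    intro x y h
    have : x.1.1 = y.1.1 := by simpa using h
    exact Subtype.ext (Subtype.ext this))

noncomputable def toAt {E : Finset ℝ} (hE : Valid E) (x : Om) : At E :=
  ⟨⟨lo E x, hE.lo_nonneg x.n, (hE.lo_le x.n).trans_lt x.l⟩, hE.lo_mem x.n⟩

theorem toAt_val {E : Finset ℝ} (hE : Valid E) (x : Om) : (toAt hE x).1.1 = lo E x := rfl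

theorem toAt_at {E : Finset ℝ} (hE : Valid E) (x : At E) : toAt hE x.1 = x := by
  apply Subtype.ext; apply Subtype.ext; exact hE.lo_of_mem x.2

theorem toAt_eq {E : Finset ℝ} (hE : Valid E) {x y : Om} : toAt hE x = toAt hE y ↔ lo E x = lo E y := by
  constructor
  · intro h; simpa [toAt_val] using congrArg (fun z : At E => z.1.1) h
  · intro h; apply Subtype.ext; apply Subtype.ext; exact h

theorem lo_toAt {E : Finset ℝ} (hE : Valid E) (x : Om) : lo E (toAt hE x).1 = lo E x :=
  hE.lo_of_mem (hE.lo_mem x.n)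

theorem Meas.toAt {β : Type*} {E : Finset ℝ} (hE : Valid E) {c : Om → β} (hc : Meas E c) (x : Om) :
    c (toAt hE x).1 = c x := hc _ _ (lo_toAt hE x)

theorem Meas.mono {β : Type*} {E E' : Finset ℝ} (hE : Valid E) (hE' : Valid E') (h : E ⊆ E')
    {c : Om → β} (hc : Meas E c) : Meas E' c := fun x y hxy =>
  hc x y ((hE.lo_eq_iff x.n y.n).2 fun e he => (hE'.lo_eq_iff x.n y.n).1 hxy e (h he))

theorem Meas.comp {β γ : Type*} {E : Finset ℝ} {c : Om → β} (hc : Meas E c) (f : β → γ) :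
    Meas E (fun x => f (c x)) := fun x y h => congrArg f (hc x y h)

/-- the groups -/
def Gam (E : Finset ℝ) : Subgroup (Equiv.Perm Om) where
  carrier := {σ | (∀ x : Om, Rel E x (σ x)) ∧ ∀ x y : Om, lo E x = lo E y ↔ lo E (σ x) = lo E (σ y)}
  one_mem' := ⟨fun x => ⟨rfl, rfl⟩, fun x y => Iff.rfl⟩
  mul_mem' := by
    rintro σ ρ ⟨h1, h2⟩ ⟨h3, h4⟩
    refine ⟨fun x => ⟨?_, ?_⟩, fun x y => (h4 x y).trans (h2 _ _)⟩
    · exact (h3 x).1.trans (h1 _).1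
    · exact (h3 x).2.trans (h1 _).2
  inv_mem' := by
    rintro σ ⟨h1, h2⟩
    refine ⟨fun x => ⟨?_, ?_⟩, fun x y => ?_⟩
    · have := (h1 (σ⁻¹ x)).1; simp only [pinv] at this; exact this.symm
    · have := (h1 (σ⁻¹ x)).2; simp only [pinv] at this; exact this.symm
    · have := h2 (σ⁻¹ x) (σ⁻¹ y); simp only [pinv] at this
      exact this.symm

theorem Gam.free {E : Finset ℝ} {σ : Equiv.Perm Om} (h : σ ∈ Gam E) {x : Om}
    (hx : lo E (σ x) = lo E x) : σ x = x := by
  apply Subtype.ext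
  have := (h.1 x).1
  linarith

theorem Gam.mono {E E' : Finset ℝ} (hE : Valid E) (hE' : Valid E') (hc : Compat E E') :
    Gam E ≤ Gam E' := by
  rintro σ hσ
  have hr : ∀ x : Om, Rel E' x (σ x) := fun x =>
    hc.2 x (σ x) x.n x.l (σ x).n (σ x).l (hσ.1 x)
  have hsub : ∀ x y : Om, lo E' x = lo E' y → lo E x = lo E y := fun x y hxy =>
    (hE.lo_eq_iff x.n y.n).2 fun e he => (hE'.lo_eq_iff x.n y.n).1 hxy e (hc.1 he)
  refine ⟨hr, fun x y => ⟨fun h => ?_, fun h => ?_⟩⟩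
  · have h1 := hsub _ _ h
    have h2 := (hσ.2 x y).1 h1
    have := (hσ.1 x).1; have := (hσ.1 y).1; have := (hr x).1; have := (hr y).1
    linarith
  · have h2 := hsub _ _ h
    have h1 := (hσ.2 x y).2 h2
    have := (hσ.1 x).1; have := (hσ.1 y).1; have := (hr x).1; have := (hr y).1
    linarith

theorem Gam.finite {E : Finset ℝ} (hE : Valid E) : Finite (Gam E) := by
  apply Finite.of_injective (fun (σ : Gam E) (e : At E) => toAt hE (σ.1 e.1))
  intro σ ρ h
  apply Subtype.ext
  apply Equiv.ext
  intro x
  have h1 := congrFun h (toAt hE x)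
  simp only [toAt_eq] at h1
  have h2 := (σ.2.2 (toAt hE x).1 x).1 (lo_toAt hE x)
  have h3 := (ρ.2.2 (toAt hE x).1 x).1 (lo_toAt hE x)
  have h4 := (σ.2.1 x).1
  have h5 := (ρ.2.1 x).1
  apply Subtype.ext
  linarith

/-- composition with an element of Gam preserves measurability -/
theorem Gam.meas {β : Type*} {E : Finset ℝ} {σ : Equiv.Perm Om} (h : σ ∈ Gam E) {c : Om → β}
    (hc : Meas E c) : Meas E (fun x => c (σ x)) := fun x y hxy => hc _ _ ((h.2 x y).1 hxy)

noncomputable def len {E : Finset ℝ} (e : At E) : ℝ := hi E e.1 - e.1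

theorem exists_perm_of_fiber {A K : Type*} [Fintype A] [DecidableEq K] (f g : A → K)
    (h : ∀ k, (Finset.univ.filter fun a => f a = k).card = (Finset.univ.filter fun a => g a = k).card) :
    ∃ π : Equiv.Perm A, ∀ a, f (π a) = g a := by
  classical
  have hk : ∀ k, Nonempty ({a // g a = k} ≃ {a // f a = k}) := fun k => by
    apply Nonempty.intro
    apply Fintype.equivOfCardEq
    rw [Fintype.card_subtype, Fintype.card_subtype, h k]
  let e := fun k => (hk k).some
  refine ⟨(Equiv.sigmaFiberEquiv g).symm.trans ((Equiv.sigmaCongrRight e).trans (Equiv.sigmaFiberEquiv f)), fun a => ?_⟩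
  simp only [Equiv.trans_apply]
  exact (e (g a) ⟨a, rfl⟩).2

theorem lift_perm {E : Finset ℝ} (hE : Valid E) (π : Equiv.Perm (At E)) (hπ : ∀ e, len (π e) = len e) :
    ∃ σ ∈ Gam E, ∀ x, toAt hE (σ x) = π (toAt hE x) := by
  have key : ∀ (π : Equiv.Perm (At E)), (∀ e, len (π e) = len e) → ∀ x : Om,
      ∃ y : Om, lo E y = (π (toAt hE x)).1.1 ∧ y.1 - lo E y = x.1 - lo E x ∧
        hi E y - y.1 = hi E x - x.1 := by
    intro π hπ x
    have h1 := hπ (toAt hE x)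
    simp only [len] at h1
    rw [toAt_val, hE.hi_lo x.n x.l] at h1
    have h2 := hE.lo_le x.n
    have h3 := hE.lt_hi x.l
    set e := π (toAt hE x)
    obtain ⟨h4, h5⟩ := hE.between e.2 e.1.l (x := e.1.1 + (x.1 - lo E x)) (by linarith) (by linarith)
    have h6 := hE.hi_le_one e.1.l
    have := e.1.n
    refine ⟨⟨e.1.1 + (x.1 - lo E x), by linarith, by linarith⟩, h4, ?_, ?_⟩
    · simp only [h4]; ring
    · simp only [h5]; linarith
  choose f hf1 hf2 hf3 using key π hπ
  choose g hg1 hg2 hg3 using key π.symm (fun e => by rw [← hπ (π.symm e), Equiv.apply_symm_apply])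
  have hft : ∀ x, toAt hE (f x) = π (toAt hE x) := fun x => by
    apply Subtype.ext; apply Subtype.ext; exact hf1 x
  have hgt : ∀ x, toAt hE (g x) = π.symm (toAt hE x) := fun x => by
    apply Subtype.ext; apply Subtype.ext; exact hg1 x
  let σ : Equiv.Perm Om :=
    { toFun := f
      invFun := g
      left_inv := fun x => by
        apply Subtype.ext
        have : toAt hE (g (f x)) = toAt hE x := by rw [hgt, hft]; simp
        have := (toAt_eq hE).1 this
        have := hg2 (f x); have := hf2 x
        linarith
      right_inv := fun x => by
        apply Subtype.ext
        have : toAt hE (f (g x)) = toAt hE x := by rw [hft, hgt]; simp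
        have := (toAt_eq hE).1 this
        have := hf2 (g x); have := hg2 x
        linarith }
  refine ⟨σ, ⟨fun x => ⟨(hf2 x).symm, (hf3 x).symm⟩, fun x y => ?_⟩, hft⟩
  rw [← toAt_eq hE, ← toAt_eq hE]
  change _ ↔ toAt hE (f x) = toAt hE (f y)
  rw [hft, hft]
  simp

theorem len_pos {E : Finset ℝ} (hE : Valid E) (e : At E) : 0 < len e := by
  have := hE.lt_hi e.1.l; simp only [len]; linarith

theorem coloring {ι : Type*} [DecidableEq ι] {E : Finset ℝ} (hE : Valid E) (hI : Indep E) {c c' : Om → ι}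
    (hc : Meas E c) (hc' : Meas E c')
    (h : ∀ s, ∑ e : At E with c e.1 = s, len e = ∑ e : At E with c' e.1 = s, len e) :
    ∃ σ ∈ Gam E, ∀ x, c (σ x) = c' x := by
  classical
  obtain ⟨B, hB, hlen⟩ := hI
  have hcount : ∀ k : ι × ℝ, (Finset.univ.filter fun e : At E => (c e.1, len e) = k).card
      = (Finset.univ.filter fun e : At E => (c' e.1, len e) = k).card := by
    rintro ⟨s, b⟩
    by_cases hb : ∃ e : At E, len e = b
    swap
    · push Not at hb
      rw [Finset.filter_false_of_mem, Finset.filter_false_of_mem]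
      · intro e _ he; exact hb e (Prod.ext_iff.1 he).2
      · intro e _ he; exact hb e (Prod.ext_iff.1 he).2
    -- sum as combination
    have hsum : ∀ c : Om → ι, ∑ e : At E with c e.1 = s, len e =
        ∑ b ∈ Finset.univ.image (fun e : At E => len e),
          ((Finset.univ.filter fun e : At E => (c e.1, len e) = (s, b)).card : ℚ) • b := by
      intro c
      rw [← Finset.sum_fiberwise_of_maps_to (g := fun e : At E => len e)
        (t := Finset.univ.image (fun e : At E => len e)) (fun e _ => by simp)]
      apply Finset.sum_congr rfl
      intro b _
      rw [Finset.filter_filter]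
      rw [Finset.sum_congr rfl (g := fun _ => b) (fun e he => (Finset.mem_filter.1 he).2.2)]
      simp [Prod.ext_iff, Rat.smul_def]
    have h1 := h s
    rw [hsum c, hsum c', ← sub_eq_zero, ← Finset.sum_sub_distrib] at h1
    simp only [← sub_smul] at h1
    have h2 := linearIndepOn_iff'.1 hB (Finset.univ.image (fun e : At E => len e)) _ (by
      intro b hb
      obtain ⟨e, _, rfl⟩ := Finset.mem_image.1 (Finset.mem_coe.1 hb)
      exact hlen _ e.2 e.1.l) h1 b (by
        obtain ⟨e, rfl⟩ := hb
        simp)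
    exact_mod_cast sub_eq_zero.1 h2
  obtain ⟨π, hπ⟩ := exists_perm_of_fiber (fun e : At E => (c e.1, len e)) (fun e => (c' e.1, len e)) hcount
  obtain ⟨σ, hσ, hσ2⟩ := lift_perm hE π (fun e => (Prod.ext_iff.1 (hπ e)).2)
  refine ⟨σ, hσ, fun x => ?_⟩
  rw [← hc.toAt hE, hσ2, ← hc'.toAt hE x]
  exact (Prod.ext_iff.1 (hπ _)).1

noncomputable instance : MeasureSpace Om := Measure.Subtype.measureSpace


theorem atom_eq {E : Finset ℝ} (hE : Valid E) (e : At E) :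
    {x : Om | toAt hE x = e} = Subtype.val ⁻¹' (Set.Ico e.1.1 (hi E e.1)) := by
  ext x
  simp only [Set.mem_ofPred_eq, Set.mem_preimage, Set.mem_Ico]
  constructor
  · rintro rfl
    exact ⟨hE.lo_le x.n, by rw [toAt_val, hE.hi_lo x.n x.l]; exact hE.lt_hi x.l⟩
  · rintro ⟨h1, h2⟩
    rw [← toAt_at hE e, toAt_eq, hE.lo_of_mem e.2]
    exact (hE.between e.2 e.1.l h1 h2).1

theorem measurableSet_atom {E : Finset ℝ} (hE : Valid E) (e : At E) :
    MeasurableSet {x : Om | toAt hE x = e} := by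
  rw [atom_eq hE]
  exact measurable_subtype_coe measurableSet_Ico

theorem volume_atom {E : Finset ℝ} (hE : Valid E) (e : At E) :
    volume {x : Om | toAt hE x = e} = ENNReal.ofReal (len e) := by
  rw [atom_eq hE, volume_preimage_coe measurableSet_Ico.nullMeasurableSet measurableSet_Ico,
    Set.inter_eq_left.2, Real.volume_Ico]; rfl
  intro x hx
  exact ⟨e.1.n.trans hx.1, hx.2.trans_le (hE.hi_le_one e.1.l)⟩

instance : IsProbabilityMeasure (volume : Measure Om) := ⟨by
  have := volume_preimage_coe (s := Set.Ico (0:ℝ) 1) (t := Set.Ico 0 1) measurableSet_Ico.nullMeasurableSet measurableSet_Ico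
  simpa using this⟩

theorem Meas.measurable {β : Type*} [MeasurableSpace β] {E : Finset ℝ} (hE : Valid E) {g : Om → β}
    (hg : Meas E g) : Measurable g := by
  have h : g = (fun e : At E => g e.1) ∘ AFX.toAt hE := by
    ext x; exact (hg.toAt hE x).symm
  let _ : MeasurableSpace (At E) := ⊤
  rw [h]
  refine Measurable.comp measurable_from_top ?_
  refine measurable_to_countable' fun e => measurableSet_atom hE e

theorem integral_meas {F : Type*} [NormedAddCommGroup F] [NormedSpace ℝ F] [CompleteSpace F] {E : Finset ℝ} (hE : Valid E) {g : Om → F} (hg : Meas E g) :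
    ∫ x, g x = ∑ e : At E, len e • g e.1 := by
  classical
  have h : ∀ x, g x = ∑ e : At E, ({x : Om | toAt hE x = e}).indicator (fun _ => g e.1) x := by
    intro x
    rw [Finset.sum_eq_single (toAt hE x)]
    · simp [hg.toAt hE x]
    · intro e _ he; simp [Set.indicator, he.symm]
    · simp
  rw [integral_congr_ae (Filter.Eventually.of_forall h)]
  rw [integral_finsetSum]
  · apply Finset.sum_congr rfl
    intro e _
    rw [integral_indicator (measurableSet_atom hE e), setIntegral_const, Measure.real, volume_atom,
      ENNReal.toReal_ofReal (len_pos hE e).le]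
  · intro e _
    exact (integrable_const _).indicator (measurableSet_atom hE e)

theorem Gam.len {E : Finset ℝ} (hE : Valid E) {σ : Equiv.Perm Om} (h : σ ∈ Gam E) (x : Om) :
    AFX.len (toAt hE (σ x)) = AFX.len (toAt hE x) := by
  have h1 := h.1 x
  simp only [AFX.len, toAt_val, hE.hi_lo x.n x.l, hE.hi_lo (σ x).n (σ x).l]
  linarith [h1.1, h1.2]

theorem Gam.at {E : Finset ℝ} (hE : Valid E) {σ : Equiv.Perm Om} (h : σ ∈ Gam E) (e : At E) :
    (σ e.1).1 ∈ E := by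
  have := (h.1 e.1).1
  rw [hE.lo_of_mem e.2] at this
  have h2 : (σ e.1).1 = lo E (σ e.1) := by linarith
  rw [h2]; exact hE.lo_mem (σ e.1).n

theorem integral_comp_gam {F : Type*} [NormedAddCommGroup F] [NormedSpace ℝ F] [CompleteSpace F] {E : Finset ℝ} (hE : Valid E) {g : Om → F} (hg : Meas E g)
    {σ : Equiv.Perm Om} (hσ : σ ∈ Gam E) : ∫ x, g (σ x) = ∫ x, g x := by
  rw [integral_meas hE hg, integral_meas hE (Gam.meas hσ hg)]
  refine Finset.sum_bij (fun e _ => ⟨σ e.1, Gam.at hE hσ e⟩) (by simp) ?_ ?_ ?_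
  · intro a _ b _ h
    apply Subtype.ext
    exact σ.injective (by simpa using h)
  · intro b _
    refine ⟨⟨σ⁻¹ b.1, Gam.at hE (inv_mem hσ) b⟩, by simp, ?_⟩
    apply Subtype.ext; simp
  · intro e _
    congr 1
    have := Gam.len hE hσ e.1
    rw [toAt_at] at this
    rw [← this]
    congr 1
    apply Subtype.ext; apply Subtype.ext
    exact hE.lo_of_mem (Gam.at hE hσ e)

theorem coloring' {ι : Type*} {E : Finset ℝ} (hE : Valid E) (hI : Indep E) {c c' : Om → ι}
    (hc : Meas E c) (hc' : Meas E c')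
    (h : ∀ s, volume.real {x | c x = s} = volume.real {x | c' x = s}) :
    ∃ σ ∈ Gam E, ∀ x, c (σ x) = c' x := by
  classical
  refine coloring hE hI hc hc' fun s => ?_
  have key : ∀ c : Om → ι, Meas E c → volume.real {x | c x = s} = ∑ e : At E with c e.1 = s, AFX.len e := by
    intro c hc
    have hm : Meas E (Set.indicator {x | c x = s} (1 : Om → ℝ)) := by
      intro x y hxy
      simp [Set.indicator, hc x y hxy]
    have hs : MeasurableSet {x | c x = s} := by
      let _ : MeasurableSpace ι := ⊤
      exact hc.measurable hE (measurableSet_singleton s)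
    rw [← integral_indicator_one hs, integral_meas hE hm, Finset.sum_filter]
    apply Finset.sum_congr rfl
    intro e _
    simp [Set.indicator]
  rw [← key c hc, ← key c' hc', h s]

end AFX

namespace AFX
open scoped ENNReal

abbrev Hs : Type := lp (fun _ : Om => ℂ) 2
abbrev Lb : Type := lp (fun _ : Om => ℂ) ∞
abbrev BH : Type := Hs →L[ℂ] Hs

noncomputable def Mf (g : Lb) : BH :=
  lp.holderL (p := ∞) (q := 2) 2 (fun _ : Om => ContinuousLinearMap.mul ℂ ℂ) (K := 1)
    (fun _ => by simp) g

theorem Mf_apply (g : Lb) (v : Hs) (x : Om) : Mf g v x = g x * v x := rfl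

theorem Mf_norm_le (g : Lb) : ‖Mf g‖ ≤ ‖g‖ := by
  refine (ContinuousLinearMap.le_opNorm _ _).trans ?_
  refine (mul_le_mul_of_nonneg_right (lp.norm_holderL_le _ _ _) (norm_nonneg _)).trans ?_
  simp

theorem inner_H (v w : Hs) : inner ℂ v w = ∑' x, inner ℂ (v x) (w x) := lp.inner_eq_tsum v w

theorem BH_ext {a b : BH} (h : ∀ (v : Hs) (x : Om), a v x = b v x) : a = b := by
  ext v : 1
  apply lp.ext
  funext x
  exact h v x

noncomputable def M : Lb →⋆ₐ[ℂ] BH where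
  toFun := Mf
  map_one' := BH_ext fun v x => by rw [Mf_apply]; simp
  map_mul' := fun f g => BH_ext fun v x => by
    rw [Mf_apply, mul_apply_eq_comp, Mf_apply, Mf_apply]; simp [mul_assoc]
  map_zero' := BH_ext fun v x => by rw [Mf_apply]; simp
  map_add' := fun f g => BH_ext fun v x => by
    rw [Mf_apply, add_apply, lp.coeFn_add, Pi.add_apply, lp.coeFn_add, Pi.add_apply, Mf_apply, Mf_apply]; ring
  commutes' := fun c => BH_ext fun v x => by
    rw [Mf_apply, Algebra.algebraMap_eq_smul_one, Algebra.algebraMap_eq_smul_one]; simp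
  map_star' := fun g => by
    rw [ContinuousLinearMap.star_eq_adjoint, ContinuousLinearMap.eq_adjoint_iff]
    intro v w
    rw [inner_H, inner_H]
    apply tsum_congr
    intro x
    rw [Mf_apply, Mf_apply]
    simp only [lp.coeFn_star, Pi.star_apply, RCLike.inner_apply, map_mul, RCLike.star_def, RCLike.conj_conj]
    ring

theorem M_apply (g : Lb) (v : Hs) (x : Om) : M g v x = g x * v x := rfl

theorem M_norm_le (g : Lb) : ‖M g‖ ≤ ‖g‖ := Mf_norm_le g

theorem norm_sq_H (v : Hs) : ‖v‖ ^ 2 = ∑' x, ‖v x‖ ^ 2 := by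
  have := lp.norm_rpow_eq_tsum (p := 2) (by simp) v
  simpa using this

noncomputable def Uf (σ : Equiv.Perm Om) : BH :=
  LinearMap.mkContinuous
    { toFun := fun v => ⟨fun x => v (σ⁻¹ x), by
        have h := (lp.memℓp v).summable (by simp)
        apply memℓp_gen
        exact (Equiv.summable_iff (σ⁻¹)).2 h⟩
      map_add' := fun v w => by apply lp.ext; funext x; rfl
      map_smul' := fun c v => by apply lp.ext; funext x; rfl } 1 (by
    intro v
    rw [one_mul]
    refine (sq_le_sq₀ (norm_nonneg _) (norm_nonneg _)).1 ?_
    rw [norm_sq_H, norm_sq_H]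
    exact (Equiv.tsum_eq (σ⁻¹) (fun x => ‖v x‖ ^ 2)).le)

theorem Uf_apply (σ : Equiv.Perm Om) (v : Hs) (x : Om) : Uf σ v x = v (σ⁻¹ x) := rfl

noncomputable def U : Equiv.Perm Om →* BH where
  toFun := Uf
  map_one' := BH_ext fun v x => rfl
  map_mul' := fun σ ρ => BH_ext fun v x => by
    rw [Uf_apply, mul_apply_eq_comp, Uf_apply, Uf_apply, mul_inv_rev]; rfl

theorem U_apply (σ : Equiv.Perm Om) (v : Hs) (x : Om) : U σ v x = v (σ⁻¹ x) := rfl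

theorem U_star (σ : Equiv.Perm Om) : star (U σ) = U σ⁻¹ := by
  symm
  rw [ContinuousLinearMap.star_eq_adjoint, ContinuousLinearMap.eq_adjoint_iff]
  intro v w
  rw [inner_H, inner_H, ← Equiv.tsum_eq (σ⁻¹)]
  apply tsum_congr
  intro x
  rw [U_apply, U_apply, inv_inv, pinv]

theorem U_star_mul (σ : Equiv.Perm Om) : star (U σ) * U σ = 1 := by
  rw [U_star, ← map_mul]; simp
theorem U_mul_star (σ : Equiv.Perm Om) : U σ * star (U σ) = 1 := by
  rw [U_star, ← map_mul]; simp

theorem bdd_comp (g : Lb) (σ : Om → Om) : Memℓp (fun x => g (σ x)) ∞ := by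
  apply memℓp_infty
  refine ⟨‖g‖, ?_⟩
  rintro _ ⟨x, rfl⟩
  exact lp.norm_apply_le_norm (by simp) g (σ x)

def cmp (g : Lb) (σ : Om → Om) : Lb := ⟨fun x => g (σ x), bdd_comp g σ⟩

theorem cmp_apply (g : Lb) (σ : Om → Om) (x : Om) : cmp g σ x = g (σ x) := rfl

theorem U_M (σ : Equiv.Perm Om) (g : Lb) : U σ * M g = M (cmp g (σ⁻¹ : Equiv.Perm Om)) * U σ :=
  BH_ext fun v x => rfl

theorem star_U_M_U (σ : Equiv.Perm Om) (g : Lb) : star (U σ) * M g * U σ = M (cmp g σ) := by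
  rw [U_star, U_M, mul_assoc, ← map_mul]; simp

theorem U_M_star (σ : Equiv.Perm Om) (g : Lb) :
    U σ * M g * star (U σ) = M (cmp g (σ⁻¹ : Equiv.Perm Om)) := by
  rw [U_M, mul_assoc, U_mul_star, mul_one]

/-! diagonal -/
open Classical in
noncomputable def dl (x : Om) : Hs := lp.single 2 x (1:ℂ)

theorem dl_self (x : Om) : dl x x = 1 := by simp [dl]
theorem dl_ne {x y : Om} (h : y ≠ x) : dl x y = 0 := by simp [dl, h]
theorem norm_dl (x : Om) : ‖dl x‖ = 1 := by classical simp [dl]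

noncomputable def diag (a : BH) (x : Om) : ℂ := a (dl x) x

theorem diag_norm_le (a : BH) (x : Om) : ‖diag a x‖ ≤ ‖a‖ := by
  refine (lp.norm_apply_le_norm (by simp) (a (dl x)) x).trans ?_
  simpa [norm_dl] using a.le_opNorm (dl x)

theorem diag_add (a b : BH) (x : Om) : diag (a + b) x = diag a x + diag b x := rfl
theorem diag_sub (a b : BH) (x : Om) : diag (a - b) x = diag a x - diag b x := rfl
theorem diag_smul (c : ℂ) (a : BH) (x : Om) : diag (c • a) x = c * diag a x := rfl
theorem diag_one (x : Om) : diag 1 x = 1 := by simp [diag, dl_self]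
theorem diag_zero (x : Om) : diag 0 x = 0 := rfl

theorem diag_M_mul (g : Lb) (a : BH) (x : Om) : diag (M g * a) x = g x * diag a x := rfl

theorem M_dl (g : Lb) (x : Om) : M g (dl x) = g x • dl x := by
  apply lp.ext; funext y
  rw [M_apply, lp.coeFn_smul, Pi.smul_apply]
  by_cases h : y = x
  · subst h; rfl
  · simp [dl_ne h]

theorem diag_mul_M (g : Lb) (a : BH) (x : Om) : diag (a * M g) x = g x * diag a x := by
  simp only [diag, mul_apply_eq_comp, M_dl, map_smul]
  rfl

theorem U_dl (σ : Equiv.Perm Om) (x : Om) : U σ (dl x) = dl (σ x) := by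
  apply lp.ext; funext y
  rw [U_apply]
  by_cases h : y = σ x
  · subst h; rw [dl_self]; simp [dl_self]
  · rw [dl_ne h, dl_ne]
    intro h2; apply h; rw [← h2]; simp

theorem diag_U_mul_star (σ : Equiv.Perm Om) (a : BH) (x : Om) :
    diag (U σ * a * star (U σ)) x = diag a (σ⁻¹ x) := by
  simp only [diag, mul_apply_eq_comp, U_star, U_dl, U_apply]

theorem diag_M (g : Lb) (x : Om) : diag (M g) x = g x := by
  simpa [diag_one] using diag_M_mul g 1 x

theorem diag_U (σ : Equiv.Perm Om) (x : Om) [Decidable (σ x = x)] : diag (U σ) x = if σ x = x then 1 else 0 := by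
  simp only [diag, U_dl]
  split_ifs with h
  · rw [h, dl_self]
  · exact dl_ne (Ne.symm h)

theorem diag_star_mul (a : BH) (x : Om) : diag (star a * a) x = ((‖a (dl x)‖ ^ 2 : ℝ) : ℂ) := by
  classical
  have h : diag (star a * a) x = inner ℂ (dl x) ((star a * a) (dl x)) := by
    rw [diag, dl, lp.inner_single_left]; simp
  rw [h, ContinuousLinearMap.star_eq_adjoint, mul_apply_eq_comp,
    ContinuousLinearMap.adjoint_inner_right, inner_self_eq_norm_sq_to_K]
  simp

theorem eq_zero_of_dl {a : BH} (h : ∀ x, a (dl x) = 0) : a = 0 := by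
  classical
  ext v : 1
  have h1 := (lp.hasSum_single (p := 2) (by simp) v).mapL a
  have h2 : ∀ x, a (lp.single 2 x (v x)) = 0 := fun x => by
    have : lp.single 2 x (v x) = (v x) • dl x := by
      rw [dl, ← lp.single_smul]; simp
    rw [this, map_smul, h, smul_zero]
  simp only [h2] at h1
  exact h1.unique hasSum_zero

end AFX

namespace AFX
open scoped ENNReal

/-! averaging maps -/
section
variable {A : Type*} [CStarAlgebra A]

noncomputable def conjAvg (u : A) (K : ℕ) : A →ₗ[ℂ] A :=
  ((K : ℂ)⁻¹) • ∑ k ∈ Finset.range K, (LinearMap.mulLeft ℂ (u ^ k)) ∘ₗ LinearMap.mulRight ℂ (star (u ^ k))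

theorem conjAvg_apply (u : A) (K : ℕ) (a : A) :
    conjAvg u K a = ((K : ℂ)⁻¹) • ∑ k ∈ Finset.range K, u ^ k * a * star (u ^ k) := by
  simp [conjAvg, mul_assoc]

inductive IsAvg : (A →ₗ[ℂ] A) → Prop
  | comp {S T} : IsAvg S → IsAvg T → IsAvg (S ∘ₗ T)
  | conj (u : A) (hu : u ∈ unitary A) (K : ℕ) (hK : K ≠ 0) : IsAvg (conjAvg u K)

theorem IsAvg.norm_le {T : A →ₗ[ℂ] A} (h : IsAvg T) : ∀ a, ‖T a‖ ≤ ‖a‖ := by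
  induction h with
  | comp h1 h2 ih1 ih2 => exact fun a => (ih1 _).trans (ih2 a)
  | conj u hu K hK =>
    intro a
    rw [conjAvg_apply, norm_smul]
    have h1 : ‖∑ k ∈ Finset.range K, u ^ k * a * star (u ^ k)‖ ≤ ∑ k ∈ Finset.range K, ‖a‖ := by
      apply norm_sum_le_of_le
      intro k _
      have hk : u ^ k ∈ unitary A := pow_mem hu k
      rw [CStarRing.norm_mul_mem_unitary _ (Unitary.star_mem hk), CStarRing.norm_mem_unitary_mul _ hk]
    have hK' : (0:ℝ) < K := by positivity
    calc ‖(K:ℂ)⁻¹‖ * _ ≤ (K:ℝ)⁻¹ * ∑ k ∈ Finset.range K, ‖a‖ := by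
          simp only [norm_inv, Complex.norm_natCast]
          gcongr
      _ = ‖a‖ := by simp; field_simp

theorem IsAvg.map_one {T : A →ₗ[ℂ] A} (h : IsAvg T) : T 1 = 1 := by
  induction h with
  | comp h1 h2 ih1 ih2 => simp [ih1, ih2]
  | conj u hu K hK =>
    rw [conjAvg_apply]
    have : ∀ k ∈ Finset.range K, u ^ k * 1 * star (u ^ k) = 1 := fun k _ => by
      rw [mul_one]; exact Unitary.mul_star_self_of_mem (pow_mem hu k)
    rw [Finset.sum_congr rfl this]
    simp only [Finset.sum_const, Finset.card_range, ← Nat.cast_smul_eq_nsmul ℂ, smul_smul]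
    rw [inv_mul_cancel₀ (by exact_mod_cast hK), one_smul]

theorem IsAvg.mem_ideal {T : A →ₗ[ℂ] A} (h : IsAvg T) (I : TwoSidedIdeal A) : ∀ a ∈ I, T a ∈ I := by
  induction h with
  | comp h1 h2 ih1 ih2 => exact fun a ha => ih1 _ (ih2 a ha)
  | conj u hu K hK =>
    intro a ha
    rw [conjAvg_apply, ← one_mul (∑ k ∈ _, _), ← smul_mul_assoc]
    apply I.mul_mem_left
    apply sum_mem
    intro k _
    exact I.mul_mem_right _ _ (I.mul_mem_left _ _ ha)

theorem IsAvg.trace {T : A →ₗ[ℂ] A} (h : IsAvg T) (τ : A →ₗ[ℂ] ℂ) (hτ : ∀ a b, τ (a * b) = τ (b * a)) :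
    ∀ a, τ (T a) = τ a := by
  induction h with
  | comp h1 h2 ih1 ih2 => exact fun a => (ih1 _).trans (ih2 a)
  | conj u hu K hK =>
    intro a
    rw [conjAvg_apply, map_smul, map_sum]
    have : ∀ k ∈ Finset.range K, τ (u ^ k * a * star (u ^ k)) = τ a := fun k _ => by
      rw [hτ, ← mul_assoc, Unitary.star_mul_self_of_mem (pow_mem hu k), one_mul]
    rw [Finset.sum_congr rfl this]
    have hK' : (K:ℂ) ≠ 0 := by exact_mod_cast hK
    simp; field_simp

theorem trace_bounded (τ : A →ₗ[ℂ] ℂ) (h : ∀ a, 0 ≤ τ (star a * a)) : ∃ C : ℝ, ∀ a, ‖τ a‖ ≤ C * ‖a‖ := by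
  let _ := CStarAlgebra.spectralOrder A
  have _ := CStarAlgebra.spectralOrderedRing A
  let f : A →ₚ[ℂ] ℂ := PositiveLinearMap.mk₀ τ (fun a ha => by
    obtain ⟨b, rfl⟩ := CStarAlgebra.nonneg_iff_eq_star_mul_self.1 ha
    exact h b)
  obtain ⟨C, hC⟩ := PositiveLinearMap.exists_norm_apply_le f
  exact ⟨C, hC⟩

theorem abstract_unique (τ : A →ₗ[ℂ] ℂ)
    (havg : ∀ a, ∀ ε > 0, ∃ T : A →ₗ[ℂ] A, IsAvg T ∧ ‖T a - τ a • (1:A)‖ < ε)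
    (τ' : A →ₗ[ℂ] ℂ) (h1 : τ' 1 = 1) (hp : ∀ a, 0 ≤ τ' (star a * a)) (ht : ∀ a b, τ' (a * b) = τ' (b * a)) :
    τ' = τ := by
  obtain ⟨C, hC⟩ := trace_bounded τ' hp
  ext a
  rw [← sub_eq_zero, ← norm_le_zero_iff]
  apply le_of_forall_pos_le_add
  intro ε hε
  obtain ⟨T, hT, hTa⟩ := havg a (ε / (|C| + 1)) (by positivity)
  have h2 : τ' a - τ a = τ' (T a - τ a • (1:A)) := by
    rw [map_sub, map_smul, h1, hT.trace τ' ht]; simp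
  rw [h2, zero_add]
  refine (hC _).trans ?_
  calc C * ‖T a - τ a • (1:A)‖ ≤ (|C| + 1) * (ε / (|C| + 1)) := by
        apply mul_le_mul _ hTa.le (norm_nonneg _) (by positivity)
        linarith [le_abs_self C]
    _ = ε := by field_simp

theorem abstract_simple (τ : A →ₗ[ℂ] ℂ)
    (havg : ∀ a, ∀ ε > 0, ∃ T : A →ₗ[ℂ] A, IsAvg T ∧ ‖T a - τ a • (1:A)‖ < ε)
    (hf : ∀ a, τ (star a * a) = 0 → a = 0) (I : TwoSidedIdeal A) : I = ⊥ ∨ I = ⊤ := by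
  by_cases h : ∀ a ∈ I, a = 0
  · left
    apply TwoSidedIdeal.ext
    intro x
    rw [TwoSidedIdeal.mem_bot]
    exact ⟨h x, fun hx => hx ▸ I.zero_mem⟩
  right
  push Not at h
  obtain ⟨a, haI, ha⟩ := h
  set b := star a * a
  have hb : τ b ≠ 0 := fun h => ha (hf a h)
  obtain ⟨T, hT, hTb⟩ := havg b ‖τ b‖ (norm_pos_iff.2 hb)
  have hTI : T b ∈ I := hT.mem_ideal I _ (I.mul_mem_left _ _ haI)
  have hu : IsUnit ((τ b)⁻¹ • T b) := by
    have : ‖1 - (τ b)⁻¹ • T b‖ < 1 := by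
      have h3 : 1 - (τ b)⁻¹ • T b = -((τ b)⁻¹ • (T b - τ b • (1:A))) := by
        rw [smul_sub, smul_smul, inv_mul_cancel₀ hb, one_smul]; abel
      rw [h3, norm_neg, norm_smul, norm_inv, inv_mul_lt_iff₀ (norm_pos_iff.2 hb), mul_one]
      exact hTb
    simpa using isUnit_one_sub_of_norm_lt_one this
  have hI : (τ b)⁻¹ • T b ∈ I := by
    rw [← one_mul (T b), ← smul_mul_assoc]
    exact I.mul_mem_left _ _ hTI
  obtain ⟨v, hv⟩ := hu
  have h1 : (1:A) ∈ I := by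
    have := I.mul_mem_left (↑v⁻¹) _ hI
    rwa [← hv, Units.inv_mul] at this
  apply TwoSidedIdeal.ext
  intro x
  refine ⟨fun _ => by trivial, fun _ => ?_⟩
  simpa using I.mul_mem_left x 1 h1

end
end AFX

namespace AFX
open scoped ENNReal

/-- bounded functions -/
noncomputable def mkL (g : Om → ℂ) (h : ∃ C : ℝ, ∀ x, ‖g x‖ ≤ C) : Lb := ⟨g, by
  obtain ⟨C, hC⟩ := h
  apply memℓp_infty
  refine ⟨C, ?_⟩
  rintro _ ⟨x, rfl⟩
  exact hC x⟩

theorem mkL_apply (g : Om → ℂ) (h) (x : Om) : mkL g h x = g x := rfl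

open Classical in
noncomputable def ind (E : Finset ℝ) (e : At E) : Lb :=
  mkL (fun x => if lo E x = e.1.1 then 1 else 0) ⟨1, fun x => by split_ifs <;> simp⟩

theorem Meas.eq_sum {E : Finset ℝ} (hE : Valid E) {g : Lb} (hg : Meas E g) :
    g = ∑ e : At E, g e.1 • ind E e := by
  classical
  apply lp.ext
  funext x
  rw [lp.coeFn_sum, Finset.sum_apply, Finset.sum_eq_single (AFX.toAt hE x)]
  · rw [lp.coeFn_smul, Pi.smul_apply, hg.toAt hE]
    simp [ind, mkL_apply, toAt_val]
  · intro e _ he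
    rw [lp.coeFn_smul, Pi.smul_apply, ind, mkL_apply, if_neg, smul_zero]
    intro h
    apply he
    rw [← toAt_at hE e, toAt_eq, hE.lo_of_mem e.2, h]
  · simp

theorem ind_meas {E : Finset ℝ} (e : At E) : Meas E (ind E e) := by
  intro x y h
  simp only [ind, mkL_apply, h]

noncomputable def gen (E : Finset ℝ) : Set BH := {a | ∃ (g : Lb) (σ : Equiv.Perm Om), Meas E g ∧ σ ∈ Gam E ∧ a = M g * U σ}

theorem gen_mul {E : Finset ℝ} {a b : BH} (ha : a ∈ gen E) (hb : b ∈ gen E) : a * b ∈ gen E := by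
  obtain ⟨g, σ, hg, hσ, rfl⟩ := ha
  obtain ⟨f, ρ, hf, hρ, rfl⟩ := hb
  refine ⟨g * cmp f (σ⁻¹ : Equiv.Perm Om), σ * ρ, ?_, mul_mem hσ hρ, ?_⟩
  · intro x y h
    have h1 := hg x y h
    have h2 := Gam.meas (inv_mem hσ) hf x y h
    rw [lp.infty_coeFn_mul, Pi.mul_apply, Pi.mul_apply, h1, cmp_apply, cmp_apply]
    exact congrArg (g y * ·) h2
  · rw [map_mul, map_mul, mul_assoc (M g), ← mul_assoc (U σ), U_M]
    simp only [mul_assoc]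

theorem gen_star {E : Finset ℝ} {a : BH} (ha : a ∈ gen E) : star a ∈ gen E := by
  obtain ⟨g, σ, hg, hσ, rfl⟩ := ha
  refine ⟨cmp (star g) σ, σ⁻¹, ?_, inv_mem hσ, ?_⟩
  · intro x y h
    have h2 := Gam.meas hσ hg x y h
    simp only [cmp_apply, lp.star_apply, h2]
  · rw [star_mul, U_star, ← map_star M, U_M, inv_inv]

theorem gen_one (E : Finset ℝ) : (1 : BH) ∈ gen E :=
  ⟨1, 1, fun x y _ => by simp, one_mem _, by simp⟩

noncomputable def Asub (E : Finset ℝ) : Submodule ℂ BH := Submodule.span ℂ (gen E)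

noncomputable def Alg (E : Finset ℝ) : StarSubalgebra ℂ BH where
  carrier := Asub E
  mul_mem' := by
    intro a b ha hb
    have : a * b ∈ Asub E * Asub E := Submodule.mul_mem_mul ha hb
    rw [Asub, Submodule.span_mul_span] at this
    refine Submodule.span_mono ?_ this
    rintro _ ⟨x, hx, y, hy, rfl⟩
    exact gen_mul hx hy
  add_mem' := fun ha hb => (Asub E).add_mem ha hb
  algebraMap_mem' := fun c => by
    change algebraMap ℂ BH c ∈ Asub E
    rw [Algebra.algebraMap_eq_smul_one]
    exact (Asub E).smul_mem _ (Submodule.subset_span (gen_one E))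
  star_mem' := by
    intro a ha
    change star a ∈ Asub E
    induction ha using Submodule.span_induction with
    | mem x hx => exact Submodule.subset_span (gen_star hx)
    | zero => simp
    | add x y _ _ h1 h2 => rw [star_add]; exact add_mem h1 h2
    | smul c x _ h => rw [star_smul]; exact (Asub E).smul_mem _ h

theorem mem_Alg {E : Finset ℝ} {a : BH} : a ∈ Alg E ↔ a ∈ Submodule.span ℂ (gen E) := Iff.rfl

theorem gen_sub_Alg {E : Finset ℝ} {a : BH} (h : a ∈ gen E) : a ∈ Alg E := Submodule.subset_span h

theorem M_mem {E : Finset ℝ} {g : Lb} (hg : Meas E g) : M g ∈ Alg E :=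
  gen_sub_Alg ⟨g, 1, hg, one_mem _, by simp⟩

theorem U_mem {E : Finset ℝ} {σ : Equiv.Perm Om} (h : σ ∈ Gam E) : U σ ∈ Alg E :=
  gen_sub_Alg ⟨1, σ, fun x y _ => by simp, h, by simp⟩

theorem Alg.mono {E E' : Finset ℝ} (hE : Valid E) (hE' : Valid E') (hc : Compat E E') : Alg E ≤ Alg E' := by
  intro a ha
  refine Submodule.span_mono ?_ (mem_Alg.1 ha)
  rintro _ ⟨g, σ, hg, hσ, rfl⟩
  exact ⟨g, σ, hg.mono hE hE' hc.1, Gam.mono hE hE' hc hσ, rfl⟩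

/-- smaller generating set -/
theorem Alg_span {E : Finset ℝ} (hE : Valid E) {a : BH} (ha : a ∈ Alg E) :
    a ∈ Submodule.span ℂ (Set.range fun p : At E × Gam E => M (ind E p.1) * U p.2.1) := by
  refine Submodule.span_le.2 ?_ (mem_Alg.1 ha)
  rintro _ ⟨g, σ, hg, hσ, rfl⟩
  rw [SetLike.mem_coe, hg.eq_sum hE, map_sum, Finset.sum_mul]
  apply sum_mem
  intro e _
  rw [map_smul, smul_mul_assoc]
  exact Submodule.smul_mem _ _ (Submodule.subset_span ⟨(e, ⟨σ, hσ⟩), rfl⟩)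

theorem Alg_fd {E : Finset ℝ} (hE : Valid E) : FiniteDimensional ℂ (Alg E) := by
  have := Gam.finite hE
  have h1 : FiniteDimensional ℂ (Submodule.span ℂ (Set.range fun p : At E × Gam E => M (ind E p.1) * U p.2.1)) :=
    FiniteDimensional.span_of_finite ℂ (Set.finite_range _)
  have h2 : Asub E ≤ Submodule.span ℂ (Set.range fun p : At E × Gam E => M (ind E p.1) * U p.2.1) :=
    fun a ha => Alg_span hE ha
  exact Submodule.finiteDimensional_of_le h2

theorem diag_meas {E : Finset ℝ} {a : BH} (ha : a ∈ Alg E) : Meas E (diag a) := by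
  classical
  intro x y h
  refine Submodule.span_induction (p := fun a _ => diag a x = diag a y) ?_ ?_ ?_ ?_ (mem_Alg.1 ha)
  · rintro _ ⟨g, σ, hg, hσ, rfl⟩
    rw [diag_M_mul, diag_M_mul, diag_U, diag_U, hg x y h]
    congr 1
    have h1 : ∀ z : Om, σ z = z ↔ lo E (σ z) = lo E z := fun z =>
      ⟨fun h => by rw [h], fun h => Gam.free hσ h⟩
    have h2 := (hσ.2 x y).1 h
    have h3 : (σ x = x) ↔ (σ y = y) := by rw [h1, h1, h2, h]
    simp [h3]
  · rfl
  · intro a b _ _ h1 h2; rw [diag_add, diag_add, h1, h2]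
  · intro c a _ h1; rw [diag_smul, diag_smul, h1]

noncomputable def diagL (a : BH) : Lb := mkL (diag a) ⟨‖a‖, diag_norm_le a⟩

/-- the system -/
structure Sys where
  E : ℕ → Finset ℝ
  valid : ∀ n, Valid (E n)
  indep : ∀ n, Indep (E n)
  compat : ∀ m n, m ≤ n → Compat (E m) (E n)

variable (S : Sys)

noncomputable def Sys.A (n : ℕ) : StarSubalgebra ℂ BH := Alg (S.E n)

theorem Sys.A_mono : Monotone S.A := fun m n h =>
  Alg.mono (S.valid m) (S.valid n) (S.compat m n h)

noncomputable def Sys.C : StarSubalgebra ℂ BH := (⨆ n, S.A n).topologicalClosure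

theorem Sys.coe_C : (S.C : Set BH) = closure (⋃ n, (S.A n : Set BH)) := by
  rw [Sys.C, StarSubalgebra.topologicalClosure_coe, StarSubalgebra.coe_iSup_of_directed S.A_mono.directed_le]

theorem Sys.A_le (n : ℕ) : S.A n ≤ S.C := fun a ha => by
  rw [← SetLike.mem_coe, S.coe_C]
  exact subset_closure (Set.mem_iUnion.2 ⟨n, ha⟩)

theorem Sys.C_approx {a : BH} (ha : a ∈ S.C) {ε : ℝ} (hε : 0 < ε) : ∃ n, ∃ b ∈ S.A n, ‖a - b‖ < ε := by
  rw [← SetLike.mem_coe, S.coe_C] at ha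
  obtain ⟨b, hb, h⟩ := Metric.mem_closure_iff.1 ha ε hε
  obtain ⟨n, hn⟩ := Set.mem_iUnion.1 hb
  exact ⟨n, b, hn, by rwa [dist_eq_norm] at h⟩

theorem Sys.C_closed : IsClosed (S.C : Set BH) := StarSubalgebra.isClosed_topologicalClosure _

theorem Sys.meas_diag {a : BH} (ha : a ∈ S.C) : Measurable (diag a) := by
  choose n b hb hab using fun k : ℕ => S.C_approx ha (ε := 1 / ((k:ℝ) + 1)) (by positivity)
  refine measurable_of_tendsto_metrizable (f := fun k => diag (b k))
    (fun k => (diag_meas (hb k)).measurable (S.valid _)) ?_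
  rw [tendsto_pi_nhds]
  intro x
  rw [tendsto_iff_norm_sub_tendsto_zero]
  refine squeeze_zero (fun _ => norm_nonneg _) (fun k => ?_) tendsto_one_div_add_atTop_nhds_zero_nat
  rw [← diag_sub]
  refine (diag_norm_le _ _).trans ?_
  rw [← norm_neg, neg_sub]
  exact (hab k).le

theorem Sys.integrable_diag {a : BH} (ha : a ∈ S.C) : Integrable (diag a) :=
  (integrable_const ‖a‖).mono' (S.meas_diag ha).aestronglyMeasurable
    (Filter.Eventually.of_forall (diag_norm_le a))

noncomputable def tr (a : BH) : ℂ := ∫ x, diag a x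

theorem tr_norm_le (a : BH) : ‖tr a‖ ≤ ‖a‖ := by
  have := norm_integral_le_of_norm_le_const (μ := (volume : Measure Om)) (f := diag a) (C := ‖a‖)
    (Filter.Eventually.of_forall (diag_norm_le a))
  simpa [tr] using this

theorem Sys.tr_add {a b : BH} (ha : a ∈ S.C) (hb : b ∈ S.C) : tr (a + b) = tr a + tr b :=
  integral_add (S.integrable_diag ha) (S.integrable_diag hb)

theorem tr_smul (c : ℂ) (a : BH) : tr (c • a) = c * tr a :=
  integral_const_mul c _

theorem Sys.tr_sub {a b : BH} (ha : a ∈ S.C) (hb : b ∈ S.C) : tr (a - b) = tr a - tr b :=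
  integral_sub (S.integrable_diag ha) (S.integrable_diag hb)

theorem tr_comm_gen {E : Finset ℝ} (hE : Valid E) {a b : BH} (ha : a ∈ Alg E) (hb : b ∈ gen E) :
    tr (a * b) = tr (b * a) := by
  obtain ⟨g, σ, hg, hσ, rfl⟩ := hb
  have h1 : tr (M g * U σ * a) = tr (U σ * a * M g) := by
    unfold tr
    congr 1; funext x
    rw [mul_assoc, diag_M_mul, diag_mul_M]
  have h2 : U σ * a * M g = U σ * (a * (M g * U σ)) * star (U σ) := by
    simp only [mul_assoc, U_mul_star, mul_one]
  rw [h1, h2]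
  unfold tr
  simp only [diag_U_mul_star]
  exact (integral_comp_gam hE (diag_meas (mul_mem ha (mul_mem (M_mem hg) (U_mem hσ)))) (inv_mem hσ)).symm

theorem Sys.tr_comm_A {n : ℕ} {a b : BH} (ha : a ∈ S.A n) (hb : b ∈ S.A n) : tr (a * b) = tr (b * a) := by
  refine Submodule.span_induction (p := fun b _ => tr (a * b) = tr (b * a)) ?_ ?_ ?_ ?_ (mem_Alg.1 hb)
  · intro b hb
    exact tr_comm_gen (S.valid n) ha hb
  · simp
  · intro x y hx hy h1 h2
    have hx' := S.A_le n hx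
    have hy' := S.A_le n hy
    have ha' := S.A_le n ha
    rw [mul_add, add_mul, S.tr_add (mul_mem ha' hx') (mul_mem ha' hy'),
      S.tr_add (mul_mem hx' ha') (mul_mem hy' ha'), h1, h2]
  · intro c x _ h
    rw [mul_smul_comm, smul_mul_assoc, tr_smul, tr_smul, h]

theorem Sys.tr_comm {a b : BH} (ha : a ∈ S.C) (hb : b ∈ S.C) : tr (a * b) = tr (b * a) := by
  have key : ∀ ε > 0, ε ≤ 1 → ‖tr (a * b) - tr (b * a)‖ ≤ 2 * (ε * (‖a‖ + ‖b‖ + 1)) := by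
    intro ε hε hε1
    obtain ⟨n, a', ha', h1⟩ := S.C_approx ha hε
    obtain ⟨m, b', hb', h2⟩ := S.C_approx hb hε
    have h3 := S.tr_comm_A (S.A_mono (le_max_left n m) ha') (S.A_mono (le_max_right n m) hb')
    have ha'' := S.A_le _ ha'
    have hb'' := S.A_le _ hb'
    have e : tr (a * b) - tr (b * a) = tr (a * b - a' * b') - tr (b * a - b' * a') := by
      rw [S.tr_sub (mul_mem ha hb) (mul_mem ha'' hb''), S.tr_sub (mul_mem hb ha) (mul_mem hb'' ha''), h3]
      ring
    rw [e]
    have hb'n : ‖b'‖ ≤ ‖b‖ + 1 := by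
      have := norm_sub_norm_le b' b
      rw [← norm_neg, neg_sub] at h2
      linarith
    have ha'n : ‖a'‖ ≤ ‖a‖ + 1 := by
      have := norm_sub_norm_le a' a
      rw [← norm_neg, neg_sub] at h1
      linarith
    have e1 : ‖a * b - a' * b'‖ ≤ ε * (‖a‖ + ‖b‖ + 1) := by
      have : a * b - a' * b' = a * (b - b') + (a - a') * b' := by noncomm_ring
      rw [this]
      refine (norm_add_le _ _).trans ?_
      refine (add_le_add (norm_mul_le _ _) (norm_mul_le _ _)).trans ?_
      have := mul_le_mul_of_nonneg_left h2.le (norm_nonneg a)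
      have := mul_le_mul h1.le hb'n (norm_nonneg b') hε.le
      linarith
    have e2 : ‖b * a - b' * a'‖ ≤ ε * (‖a‖ + ‖b‖ + 1) := by
      have : b * a - b' * a' = (b - b') * a' + b * (a - a') := by noncomm_ring
      rw [this]
      refine (norm_add_le _ _).trans ?_
      refine (add_le_add (norm_mul_le _ _) (norm_mul_le _ _)).trans ?_
      have := mul_le_mul_of_nonneg_left h1.le (norm_nonneg b)
      have := mul_le_mul h2.le ha'n (norm_nonneg a') hε.le
      linarith
    refine (norm_sub_le _ _).trans ?_
    have := (tr_norm_le _).trans e1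
    have := (tr_norm_le _).trans e2
    linarith
  rw [← sub_eq_zero, ← norm_le_zero_iff]
  apply le_of_forall_pos_le_add
  intro δ hδ
  set K := ‖a‖ + ‖b‖ + 1
  have hK : 0 < K := by positivity
  refine (key (min 1 (δ / (2 * K))) (by positivity) (min_le_left _ _)).trans ?_
  rw [zero_add]
  calc 2 * (min 1 (δ / (2 * K)) * K) ≤ 2 * ((δ / (2 * K)) * K) := by gcongr; exact min_le_right _ _
    _ = δ := by field_simp

theorem tr_star_mul (a : BH) : tr (star a * a) = ((∫ x, ‖a (dl x)‖ ^ 2 : ℝ) : ℂ) := by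
  unfold tr
  simp only [diag_star_mul]
  exact integral_ofReal

theorem tr_nonneg (a : BH) : 0 ≤ tr (star a * a) := by
  rw [tr_star_mul]
  exact_mod_cast integral_nonneg fun x => by positivity

theorem Sys.tr_faithful {a : BH} (ha : a ∈ S.C) (h : tr (star a * a) = 0) : a = 0 := by
  apply eq_zero_of_dl
  by_contra hne
  push Not at hne
  obtain ⟨x, hx⟩ := hne
  set δ := ‖a (dl x)‖ ^ 2
  have hδ : 0 < δ := by have := norm_pos_iff.2 hx; positivity
  have haa : star a * a ∈ S.C := mul_mem (star_mem ha) ha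
  obtain ⟨n, b, hb, hab⟩ := S.C_approx haa (ε := δ / 3) (by positivity)
  have hE := S.valid n
  have hint : Integrable (fun x => ‖a (dl x)‖ ^ 2) := by
    have := (S.integrable_diag haa).re
    simp only [diag_star_mul] at this
    exact this
  have hlow : ∀ y, toAt hE y = toAt hE x → δ / 3 ≤ ‖a (dl y)‖ ^ 2 := by
    intro y hy
    have h1 : diag b y = diag b x := diag_meas hb _ _ ((toAt_eq hE).1 hy)
    have h2 := (diag_norm_le (star a * a - b) x).trans hab.le
    have h3 := (diag_norm_le (star a * a - b) y).trans hab.le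
    have h4 : ‖diag (star a * a) x - diag (star a * a) y‖ ≤ δ / 3 + δ / 3 := by
      have : diag (star a * a) x - diag (star a * a) y = diag (star a * a - b) x - diag (star a * a - b) y := by
        rw [diag_sub, diag_sub, h1]; ring
      rw [this]
      exact (norm_sub_le _ _).trans (add_le_add h2 h3)
    rw [diag_star_mul, diag_star_mul, ← Complex.ofReal_sub, Complex.norm_real, Real.norm_eq_abs] at h4
    have := (abs_le.1 h4).2
    linarith
  rw [tr_star_mul] at h
  have h0 : ∫ x, ‖a (dl x)‖ ^ 2 = 0 := by exact_mod_cast h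
  rw [integral_eq_zero_iff_of_nonneg (fun x => by positivity) hint] at h0
  have h5 : volume {y : Om | toAt hE y = toAt hE x} = 0 := by
    refine measure_mono_null ?_ (ae_iff.1 h0)
    intro y hy
    have := hlow y hy
    simp only [Pi.zero_apply]
    change ¬ _ = _
    intro h
    linarith
  rw [volume_atom] at h5
  have := len_pos hE (toAt hE x)
  rw [ENNReal.ofReal_eq_zero] at h5
  linarith

end AFX

namespace AFX
open scoped ENNReal

theorem exists_root_fun {E : Finset ℝ} (hE : Valid E) : ∃ (g : Lb) (K : ℕ), K ≠ 0 ∧ Meas E g ∧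
    (∀ x, g x ^ K = 1) ∧ (∀ x, ‖g x‖ = 1) ∧ ∀ x y : Om, g x = g y ↔ lo E x = lo E y := by
  classical
  let K := Fintype.card (At E)
  have : Nonempty (At E) := ⟨⟨(⟨0, by simp⟩ : Om), hE.zero⟩⟩
  have hK : K ≠ 0 := Fintype.card_ne_zero
  let ζ : ℂ := Complex.exp (2 * Real.pi * Complex.I / K)
  have hζ : IsPrimitiveRoot ζ K := Complex.isPrimitiveRoot_exp K hK
  let i : At E ≃ Fin K := Fintype.equivFin (At E)
  have hn : ∀ j : ℕ, ‖ζ ^ j‖ = 1 := fun j => by rw [norm_pow, hζ.norm'_eq_one hK, one_pow]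
  refine ⟨mkL (fun x => ζ ^ (i (toAt hE x)).1) ⟨1, fun x => (hn _).le⟩, K, hK, ?_, ?_, fun x => hn _, ?_⟩
  · intro x y h
    simp only [mkL_apply, (toAt_eq hE).2 h]
  · intro x
    rw [mkL_apply, ← pow_mul, mul_comm, pow_mul, hζ.pow_eq_one, one_pow]
  · intro x y
    rw [mkL_apply, mkL_apply, ← toAt_eq hE]
    constructor
    · intro h
      exact i.injective (Fin.ext (hζ.pow_inj (i _).2 (i _).2 h))
    · intro h; rw [h]

theorem M_mem_unitary {g : Lb} (h : ∀ x, ‖g x‖ = 1) : M g ∈ unitary BH := by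
  have h1 : star g * g = 1 := by
    apply lp.ext; funext x
    rw [lp.infty_coeFn_mul, Pi.mul_apply, lp.star_apply, lp.infty_coeFn_one, Pi.one_apply,
      RCLike.star_def, RCLike.conj_mul, h x]
    simp
  rw [Unitary.mem_iff, ← map_star, ← map_mul, ← map_mul, mul_comm g, h1, map_one]
  exact ⟨rfl, rfl⟩

theorem U_mem_unitary (σ : Equiv.Perm Om) : U σ ∈ unitary BH :=
  Unitary.mem_iff.2 ⟨U_star_mul σ, U_mul_star σ⟩

theorem sum_root {z : ℂ} {K : ℕ} (hz : z ^ K = 1) (h1 : z ≠ 1) : ∑ k ∈ Finset.range K, z ^ k = 0 := by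
  rw [geom_sum_eq h1, hz]; simp

theorem BH_smul_apply (c : ℂ) (a : BH) (v : Hs) (x : Om) : (c • a) v x = c * a v x := rfl

theorem BH_sum_apply {ι : Type*} (s : Finset ι) (a : ι → BH) (v : Hs) (x : Om) :
    (∑ i ∈ s, a i) v x = ∑ i ∈ s, a i v x := by
  classical
  induction s using Finset.induction_on with
  | empty => simp
  | insert i s hi ih =>
    rw [Finset.sum_insert hi, Finset.sum_insert hi, ← ih]
    rfl

theorem T1_gen {E : Finset ℝ} {g : Lb} {K : ℕ} (hK : K ≠ 0) (h1 : ∀ x, g x ^ K = 1)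
    (h2 : ∀ x, ‖g x‖ = 1) (h3 : ∀ x y : Om, g x = g y ↔ lo E x = lo E y) {a : BH} (ha : a ∈ gen E) :
    conjAvg (M g) K a = M (diagL a) := by
  classical
  obtain ⟨f, σ, hf, hσ, rfl⟩ := ha
  rw [conjAvg_apply]
  apply BH_ext
  intro v x
  rw [BH_smul_apply, BH_sum_apply, M_apply]
  have e : ∀ k ∈ Finset.range K, (M g ^ k * (M f * U σ) * star (M g ^ k)) v x =
      (g x * star (g (σ⁻¹ x))) ^ k * (f x * v (σ⁻¹ x)) := by
    intro k _
    rw [← map_pow, ← map_star]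
    simp only [mul_apply_eq_comp, M_apply, U_apply, lp.star_apply, lp.infty_coeFn_pow, Pi.pow_apply, star_pow]
    ring
  rw [Finset.sum_congr rfl e, ← Finset.sum_mul, diagL, mkL_apply, diag_M_mul, diag_U]
  have hinv : σ x = x ↔ σ⁻¹ x = x := by
    rw [Equiv.Perm.inv_eq_iff_eq]; exact eq_comm
  by_cases hx : σ⁻¹ x = x
  · have hz : g x * star (g (σ⁻¹ x)) = 1 := by
      rw [hx, RCLike.star_def, RCLike.mul_conj, h2]; simp
    rw [hz, if_pos (hinv.2 hx), hx]
    have : (K:ℂ) ≠ 0 := by exact_mod_cast hK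
    simp; field_simp
  · rw [if_neg (fun h => hx (hinv.1 h)), sum_root]
    · simp
    · rw [mul_pow, ← star_pow, h1, h1]; simp
    · intro hz
      apply hx
      apply Gam.free (inv_mem hσ)
      apply ((h3 _ _).1 _).symm
      have := congrArg (· * g (σ⁻¹ x)) hz
      simp only [mul_assoc, RCLike.star_def, RCLike.conj_mul, h2, one_mul] at this
      simpa using this

theorem diagL_add (a b : BH) : diagL (a + b) = diagL a + diagL b := rfl
theorem diagL_smul (c : ℂ) (a : BH) : diagL (c • a) = c • diagL a := rfl

theorem T1_all {E : Finset ℝ} {g : Lb} {K : ℕ} (hK : K ≠ 0) (h1 : ∀ x, g x ^ K = 1)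
    (h2 : ∀ x, ‖g x‖ = 1) (h3 : ∀ x y : Om, g x = g y ↔ lo E x = lo E y) {a : BH} (ha : a ∈ Alg E) :
    conjAvg (M g) K a = M (diagL a) := by
  refine Submodule.span_induction (p := fun a _ => conjAvg (M g) K a = M (diagL a)) ?_ ?_ ?_ ?_ (mem_Alg.1 ha)
  · intro a ha; exact T1_gen hK h1 h2 h3 ha
  · rw [map_zero]
    have : diagL 0 = 0 := rfl
    rw [this, map_zero]
  · intro a b _ _ ha hb
    rw [map_add, ha, hb, diagL_add, map_add]
  · intro c a _ ha
    rw [map_smul, ha, diagL_smul, map_smul]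

/-! T2 -/
open Classical in
noncomputable def J (q : ℝ) : Lb :=
  mkL (fun x => if q ≤ x.1 then 1 else 0) ⟨1, fun x => by split_ifs <;> simp⟩

open Classical in
theorem J_apply (q : ℝ) (x : Om) : J q x = if q ≤ x.1 then 1 else 0 := by
  rw [J, mkL_apply]

theorem tr_M (g : Lb) : tr (M g) = ∫ x, g x := by
  unfold tr; simp only [diag_M]

theorem volume_fin {a b : ℝ} (ha : 0 ≤ a) (hb : b ≤ 1) (hab : a ≤ b) :
    volume.real {x : Om | a ≤ x.1 ∧ x.1 < b} = b - a := by
  have h : {x : Om | a ≤ x.1 ∧ x.1 < b} = Subtype.val ⁻¹' (Set.Ico a b) := rfl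
  rw [Measure.real, h, volume_preimage_coe measurableSet_Ico.nullMeasurableSet measurableSet_Ico,
    Set.inter_eq_left.2, Real.volume_Ico, ENNReal.toReal_ofReal (by linarith)]
  intro x hx
  exact ⟨ha.trans hx.1, hx.2.trans_le hb⟩

theorem tr_J {q : ℝ} (h0 : 0 ≤ q) (h1 : q ≤ 1) : tr (M (J q)) = ((1 - q : ℝ) : ℂ) := by
  classical
  rw [tr_M]
  have h : ∀ x : Om, J q x = Set.indicator {x : Om | q ≤ x.1} (1 : Om → ℂ) x := by
    intro x; rw [J_apply]; simp [Set.indicator]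
  simp only [h]
  have hm : MeasurableSet {x : Om | q ≤ x.1} := measurable_subtype_coe measurableSet_Ici
  rw [integral_indicator hm]
  simp only [Pi.one_apply, setIntegral_const, smul_eq_mul, mul_one]
  rw [← volume_fin h0 le_rfl h1]
  have : {x : Om | q ≤ x.1} = {x : Om | q ≤ x.1 ∧ x.1 < 1} := by
    ext x; simp [x.l]
  rw [this]
  simp

/-- the shift permutation -/
theorem exists_shift {E : Finset ℝ} (hE : Valid E) (hI : Indep E) {N : ℕ} (hN : 0 < N)
    (hd : ∀ j ≤ N, ((j:ℝ) / N) ∈ E) :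
    ∃ σ ∈ Gam E, ∀ x : Om, ((⌊N * (σ x).1⌋₊ : ℕ) : ZMod N) = (⌊N * x.1⌋₊ : ℕ) + 1 := by
  have : NeZero N := ⟨hN.ne'⟩
  have hNR : (0:ℝ) < N := by exact_mod_cast hN
  let c : Om → ZMod N := fun x => ((⌊N * x.1⌋₊ : ℕ) : ZMod N)
  have hfl : ∀ x : Om, ⌊N * x.1⌋₊ < N := fun x => by
    rw [Nat.floor_lt (by have := x.n; positivity)]
    have := x.l
    nlinarith
  have hc : Meas E c := by
    intro x y h
    have h2 := (hE.lo_eq_iff x.n y.n).1 h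
    have h3 : ⌊N * x.1⌋₊ = ⌊N * y.1⌋₊ := by
      apply le_antisymm
      · apply Nat.le_floor
        have h4 := Nat.floor_le (a := N * x.1) (by have := x.n; positivity)
        have h5 := (h2 _ (hd ⌊N * x.1⌋₊ (hfl x).le)).1 (by rw [div_le_iff₀ hNR]; linarith)
        rw [div_le_iff₀ hNR] at h5; linarith
      · apply Nat.le_floor
        have h4 := Nat.floor_le (a := N * y.1) (by have := y.n; positivity)
        have h5 := (h2 _ (hd ⌊N * y.1⌋₊ (hfl y).le)).2 (by rw [div_le_iff₀ hNR]; linarith)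
        rw [div_le_iff₀ hNR] at h5; linarith
    simp only [c, h3]
  have hvol : ∀ s : ZMod N, volume.real {x | c x = s} = 1 / N := by
    intro s
    have h1 : {x | c x = s} = {x : Om | (s.val : ℝ) / N ≤ x.1 ∧ x.1 < ((s.val : ℝ) + 1) / N} := by
      ext x
      simp only [Set.mem_ofPred_eq, c]
      have h2 : (((⌊N * x.1⌋₊ : ℕ) : ZMod N) = s) ↔ ⌊N * x.1⌋₊ = s.val := by
        constructor
        · rintro rfl; rw [ZMod.val_natCast_of_lt (hfl x)]
        · intro h; rw [h, ZMod.natCast_zmod_val]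
      rw [h2, Nat.floor_eq_iff (by have := x.n; positivity), div_le_iff₀ hNR, lt_div_iff₀ hNR]
      simp only [mul_comm]
    have h3 : s.val + 1 ≤ N := ZMod.val_lt s
    have h4 : (s.val : ℝ) + 1 ≤ N := by exact_mod_cast h3
    rw [h1, volume_fin (by positivity) (by rw [div_le_one hNR]; exact h4) (by gcongr; linarith)]
    ring
  obtain ⟨σ, hσ, h⟩ := coloring' hE hI hc (hc.comp (fun s => s + 1)) (fun s => by
    rw [hvol]
    have : {x | c x + 1 = s} = {x | c x = s - 1} := by
      ext x; simp [eq_sub_iff_add_eq]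
    rw [this, hvol])
  exact ⟨σ, hσ, h⟩

theorem count_bound {N : ℕ} (hN : 0 < N) {q : ℝ} (h0 : 0 ≤ q) (h1 : q ≤ 1) (w : ℕ → ℝ)
    (hw0 : ∀ k, 0 ≤ w k) (hw1 : ∀ k, w k < 1)
    (hinj : ∀ k < N, ∀ l < N, ⌊N * w k⌋₊ = ⌊N * w l⌋₊ → k = l) :
    |((Finset.range N).filter (fun k => q ≤ w k)).card - (1 - q) * N| ≤ 1 := by
  have hNR : (0:ℝ) < N := by exact_mod_cast hN
  have hfl : ∀ k, ⌊N * w k⌋₊ < N := fun k => by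
    rw [Nat.floor_lt (by have := hw0 k; positivity)]
    have := hw1 k
    nlinarith
  have himg : (Finset.range N).image (fun k => ⌊N * w k⌋₊) = Finset.range N := by
    apply Finset.eq_of_subset_of_card_le
    · intro j hj
      obtain ⟨k, _, rfl⟩ := Finset.mem_image.1 hj
      exact Finset.mem_range.2 (hfl k)
    · rw [Finset.card_image_of_injOn]
      intro k hk l hl h
      exact hinj k (Finset.mem_range.1 hk) l (Finset.mem_range.1 hl) h
  have hup : ((Finset.range N).filter (fun k => q ≤ w k)).card ≤ N - ⌊q * N⌋₊ := by
    rw [← Nat.card_Ico]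
    apply Finset.card_le_card_of_injOn (fun k => ⌊N * w k⌋₊)
    · intro k hk
      have hk := Finset.mem_filter.1 hk
      refine Finset.mem_coe.2 (Finset.mem_Ico.2 ⟨Nat.floor_le_floor ?_, hfl k⟩)
      rw [mul_comm]; exact mul_le_mul_of_nonneg_left hk.2 hNR.le
    · intro k hk l hl h
      exact hinj k (Finset.mem_range.1 (Finset.mem_filter.1 hk).1) l (Finset.mem_range.1 (Finset.mem_filter.1 hl).1) h
  have hlow : N - ⌈q * N⌉₊ ≤ ((Finset.range N).filter (fun k => q ≤ w k)).card := by
    rw [← Nat.card_Ico]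
    refine le_trans (Finset.card_le_card ?_) (Finset.card_image_le (f := fun k => ⌊N * w k⌋₊))
    intro j hj
    have hj := Finset.mem_Ico.1 hj
    have : j ∈ (Finset.range N).image (fun k => ⌊N * w k⌋₊) := by rw [himg]; exact Finset.mem_range.2 hj.2
    obtain ⟨k, hk, rfl⟩ := Finset.mem_image.1 this
    refine Finset.mem_image.2 ⟨k, Finset.mem_filter.2 ⟨hk, ?_⟩, rfl⟩
    have h2 : q * N ≤ (⌊N * w k⌋₊ : ℝ) := (Nat.le_ceil _).trans (by exact_mod_cast hj.1)
    have h3 := Nat.floor_le (a := N * w k) (by have := hw0 k; positivity)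
    have : q * N ≤ w k * N := by linarith
    exact le_of_mul_le_mul_right this hNR
  have hq : q * N ≤ N := by nlinarith
  have hf : ⌊q * N⌋₊ ≤ N := by exact_mod_cast (Nat.floor_le (by positivity : 0 ≤ q * (N:ℝ))).trans hq
  have hcl : ⌈q * N⌉₊ ≤ N := Nat.ceil_le.2 hq
  have hup' : (((Finset.range N).filter (fun k => q ≤ w k)).card : ℝ) ≤ N - ⌊q * N⌋₊ := by
    rw [← Nat.cast_sub hf]; exact_mod_cast hup
  have hlow' : (N : ℝ) - ⌈q * N⌉₊ ≤ ((Finset.range N).filter (fun k => q ≤ w k)).card := by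
    rw [← Nat.cast_sub hcl]; exact_mod_cast hlow
  have h5 := Nat.lt_floor_add_one (q * (N:ℝ))
  have h6 := Nat.ceil_lt_add_one (by positivity : 0 ≤ q * (N:ℝ))
  rw [abs_le]
  constructor <;> nlinarith

theorem T2_bound {N : ℕ} (hN : 0 < N) {σ : Equiv.Perm Om}
    (hσ : ∀ x : Om, ((⌊N * (σ x).1⌋₊ : ℕ) : ZMod N) = (⌊N * x.1⌋₊ : ℕ) + 1) {q : ℝ} (h0 : 0 ≤ q) (h1 : q ≤ 1) :
    ‖conjAvg (U σ) N (M (J q)) - ((1 - q : ℝ) : ℂ) • (1 : BH)‖ ≤ 1 / N := by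
  classical
  have : NeZero N := ⟨hN.ne'⟩
  have hNR : (0:ℝ) < N := by exact_mod_cast hN
  set F : Lb := (N : ℂ)⁻¹ • ∑ k ∈ Finset.range N, cmp (J q) ((σ ^ k)⁻¹ : Equiv.Perm Om) - ((1 - q : ℝ) : ℂ) • 1
  have hF : conjAvg (U σ) N (M (J q)) - ((1 - q : ℝ) : ℂ) • (1 : BH) = M F := by
    rw [conjAvg_apply]
    simp only [F, map_sub, map_smul, map_sum, map_one]
    congr 2
    apply Finset.sum_congr rfl
    intro k _
    rw [← map_pow, U_M_star]
  rw [hF]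
  refine (M_norm_le F).trans ?_
  apply lp.norm_le_of_forall_le (by positivity)
  intro x
  have hFx : F x = ((((Finset.range N).filter (fun k => q ≤ ((σ ^ k)⁻¹ x).1)).card - (1 - q) * N : ℝ) : ℂ) / N := by
    have : F x = (N : ℂ)⁻¹ * (∑ k ∈ Finset.range N, cmp (J q) ((σ ^ k)⁻¹ : Equiv.Perm Om)) x - ((1 - q : ℝ) : ℂ) * 1 := rfl
    rw [this, lp.coeFn_sum, Finset.sum_apply]
    simp only [cmp_apply, J_apply]
    rw [Finset.sum_boole]
    have : (N:ℂ) ≠ 0 := by exact_mod_cast hN.ne'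
    push_cast
    field_simp
  rw [hFx, norm_div, Complex.norm_real, Complex.norm_natCast, Real.norm_eq_abs]
  gcongr
  refine count_bound hN h0 h1 (fun k => ((σ ^ k)⁻¹ x).1) (fun k => Om.n _) (fun k => Om.l _) ?_
  have hpow : ∀ (k : ℕ) (y : Om), ((⌊N * ((σ ^ k) y).1⌋₊ : ℕ) : ZMod N) = (⌊N * y.1⌋₊ : ℕ) + (k : ZMod N) := by
    intro k
    induction k with
    | zero => intro y; simp
    | succ k ih =>
      intro y
      rw [pow_succ', Equiv.Perm.mul_apply, hσ, ih]
      push_cast; ring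
  intro k hk l hl h
  have e1 := hpow k ((σ ^ k)⁻¹ x)
  have e2 := hpow l ((σ ^ l)⁻¹ x)
  rw [pinv] at e1 e2
  rw [e1, h, add_right_inj, ZMod.natCast_eq_natCast_iff'] at e2
  rwa [Nat.mod_eq_of_lt hk, Nat.mod_eq_of_lt hl] at e2

end AFX

namespace AFX
open scoped ENNReal

theorem ind_eq_J {E : Finset ℝ} (hE : Valid E) (e : At E) : ind E e = J e.1.1 - J (hi E e.1.1) := by
  classical
  apply lp.ext; funext x
  rw [lp.coeFn_sub, Pi.sub_apply, J_apply, J_apply, ind, mkL_apply]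
  have h1 := hE.lt_hi e.1.l
  by_cases h : lo E x = e.1.1
  · have h2 := hE.lo_le x.n
    have h3 := hE.lt_hi x.l
    rw [← hE.hi_lo x.n x.l, h] at h3
    rw [if_pos h, if_pos (h ▸ h2), if_neg (not_le.2 h3), sub_zero]
  · rw [if_neg h]
    by_cases h2 : e.1.1 ≤ x.1
    · have h3 : hi E e.1.1 ≤ x.1 := by
        by_contra h4
        exact h (hE.between e.2 e.1.l h2 (not_le.1 h4)).1
      rw [if_pos h2, if_pos h3, sub_self]
    · rw [if_neg h2, if_neg (fun h3 => h2 (h1.le.trans h3)), sub_self]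

theorem T2_meas {E : Finset ℝ} (hE : Valid E) {g : Lb} (hg : Meas E g) :
    ∃ C : ℝ, ∀ N : ℕ, 0 < N → ∀ σ : Equiv.Perm Om,
      (∀ x : Om, ((⌊N * (σ x).1⌋₊ : ℕ) : ZMod N) = (⌊N * x.1⌋₊ : ℕ) + 1) →
      ‖conjAvg (U σ) N (M g) - tr (M g) • (1 : BH)‖ ≤ C * (1 / N) := by
  refine ⟨∑ e : At E, ‖g e.1‖ * 2, fun N hN σ hσ => ?_⟩
  have h1 : tr (M g) = ∑ e : At E, g e.1 * (((1 - e.1.1 : ℝ) : ℂ) - ((1 - hi E e.1.1 : ℝ) : ℂ)) := by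
    rw [tr_M, integral_meas hE hg]
    refine Finset.sum_congr rfl fun e _ => ?_
    rw [len, Complex.real_smul]; push_cast; ring
  have h2 : conjAvg (U σ) N (M g) - tr (M g) • (1 : BH) =
      ∑ e : At E, g e.1 • ((conjAvg (U σ) N (M (J e.1.1)) - ((1 - e.1.1 : ℝ) : ℂ) • (1:BH)) -
        (conjAvg (U σ) N (M (J (hi E e.1.1))) - ((1 - hi E e.1.1 : ℝ) : ℂ) • (1:BH))) := by
    have hM : M g = ∑ e : At E, M (g e.1 • ind E e) := by
      conv_lhs => rw [hg.eq_sum hE]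
      rw [map_sum]
    rw [h1, Finset.sum_smul, hM, map_sum, ← Finset.sum_sub_distrib]
    refine Finset.sum_congr rfl fun e _ => ?_
    rw [map_smul, map_smul, ind_eq_J hE, map_sub, map_sub, mul_smul, ← smul_sub, sub_smul]
    congr 1; abel
  rw [h2, Finset.sum_mul]
  refine norm_sum_le_of_le _ fun e _ => ?_
  rw [norm_smul, mul_assoc]
  refine mul_le_mul_of_nonneg_left ?_ (norm_nonneg _)
  refine (norm_sub_le _ _).trans ?_
  have a1 := T2_bound hN hσ (hE.nonneg _ e.2) (hE.le_one _ e.2)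
  have a2 := T2_bound hN hσ (hE.nonneg _ (hE.hi_mem e.1.l)) (hE.le_one _ (hE.hi_mem e.1.l))
  linarith

noncomputable instance (S : Sys) : CStarAlgebra S.C :=
  StarSubalgebra.cstarAlgebra S.C (h_closed := S.C_closed)

theorem coe_conjAvg (S : Sys) (u : S.C) (K : ℕ) (a : S.C) :
    ((conjAvg u K a : S.C) : BH) = conjAvg (u : BH) K a := by
  rw [conjAvg_apply, conjAvg_apply]
  simp

noncomputable def Sys.tau (S : Sys) : S.C →ₗ[ℂ] ℂ where
  toFun a := tr (a : BH)
  map_add' a b := S.tr_add a.2 b.2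
  map_smul' c a := tr_smul c a

theorem Sys.tau_apply (S : Sys) (a : S.C) : S.tau a = tr (a : BH) := rfl

theorem Sys.mem_unitary (S : Sys) {u : S.C} (h : (u : BH) ∈ unitary BH) : u ∈ unitary S.C := by
  rw [Unitary.mem_iff] at h ⊢
  exact ⟨Subtype.ext h.1, Subtype.ext h.2⟩

theorem Sys.E_mono (S : Sys) {m n : ℕ} (h : m ≤ n) : S.E m ⊆ S.E n := (S.compat m n h).1

def Sys.Rat (S : Sys) : Prop := ∀ N : ℕ, 0 < N → ∃ m, ∀ j ≤ N, ((j:ℝ) / N) ∈ S.E m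

theorem Sys.avg_A (S : Sys) (hR : S.Rat) {n : ℕ} (a : S.C) (ha : (a:BH) ∈ S.A n) {ε : ℝ} (hε : 0 < ε) :
    ∃ T : S.C →ₗ[ℂ] S.C, IsAvg T ∧ ‖T a - S.tau a • (1:S.C)‖ < ε := by
  obtain ⟨g, K, hK, hg, h1, h2, h3⟩ := exists_root_fun (S.valid n)
  obtain ⟨C, hC⟩ := T2_meas (S.valid n) (g := diagL a) (diag_meas ha)
  obtain ⟨N, hN⟩ := exists_nat_gt (C / ε)
  have hN' : C / ε < ((N+1 : ℕ):ℝ) := by push_cast; linarith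
  obtain ⟨m, hm⟩ := hR (N+1) N.succ_pos
  obtain ⟨σ, hσ, hs⟩ := exists_shift (S.valid m) (S.indep m) N.succ_pos hm
  let v : S.C := ⟨M g, S.A_le n (M_mem hg)⟩
  let u : S.C := ⟨U σ, S.A_le m (U_mem hσ)⟩
  refine ⟨conjAvg u (N+1) ∘ₗ conjAvg v K, .comp (.conj u (S.mem_unitary (U_mem_unitary σ)) _ N.succ_ne_zero)
    (.conj v (S.mem_unitary (M_mem_unitary h2)) _ hK), ?_⟩
  have h4 := hC (N+1) N.succ_pos σ hs
  have h5 : tr (M (diagL a)) = tr (a:BH) := by rw [tr_M]; rfl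
  have h6 : ((conjAvg u (N+1) ∘ₗ conjAvg v K) a - S.tau a • (1:S.C) : S.C) =
      (conjAvg (U σ) (N+1) (M (diagL a)) - tr (M (diagL a)) • (1 : BH) : BH) := by
    rw [h5, ← T1_all hK h1 h2 h3 ha]
    simp only [LinearMap.comp_apply, AddSubgroupClass.coe_sub, coe_conjAvg, Sys.tau_apply]
    rfl
  have h7 : ‖(conjAvg u (N+1) ∘ₗ conjAvg v K) a - S.tau a • (1:S.C)‖ =
    ‖(conjAvg (U σ) (N+1) (M (diagL a)) - tr (M (diagL a)) • (1 : BH) : BH)‖ := by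
    rw [← h6]; rfl
  rw [h7]
  refine h4.trans_lt ?_
  rw [mul_one_div, div_lt_iff₀ (by positivity)]
  rw [div_lt_iff₀ hε] at hN'
  linarith

theorem Sys.avg (S : Sys) (hR : S.Rat) (a : S.C) (ε : ℝ) (hε : ε > 0) :
    ∃ T : S.C →ₗ[ℂ] S.C, IsAvg T ∧ ‖T a - S.tau a • (1:S.C)‖ < ε := by
  obtain ⟨n, b, hb, hab⟩ := S.C_approx a.2 (show 0 < ε / 3 by positivity)
  let b' : S.C := ⟨b, S.A_le n hb⟩
  obtain ⟨T, hT, h⟩ := S.avg_A hR b' hb (show 0 < ε / 3 by positivity)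
  refine ⟨T, hT, ?_⟩
  have e : T a - S.tau a • (1:S.C) = T (a - b') + (T b' - S.tau b' • (1:S.C)) - S.tau (a - b') • (1:S.C) := by
    rw [map_sub, map_sub, sub_smul]; abel
  have h1 : ‖T (a - b')‖ ≤ ‖(a:BH) - b‖ := hT.norm_le _
  have h2 : ‖S.tau (a - b') • (1:S.C)‖ ≤ ‖(a:BH) - b‖ := by
    rw [norm_smul]
    refine (mul_le_mul_of_nonneg_left (show ‖(1:S.C)‖ ≤ 1 from ContinuousLinearMap.norm_id_le) (norm_nonneg _)).trans ?_
    rw [mul_one]; exact tr_norm_le _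
  rw [e]
  refine (norm_sub_le _ _).trans_lt ?_
  have := norm_add_le (T (a - b')) (T b' - S.tau b' • (1:S.C))
  linarith

theorem tr_one : tr 1 = 1 := by
  unfold tr; simp [diag_one]

theorem Sys.simple (S : Sys) (hR : S.Rat) (I : TwoSidedIdeal S.C) : I = ⊥ ∨ I = ⊤ :=
  abstract_simple S.tau (S.avg hR) (fun a h => Subtype.ext (S.tr_faithful a.2 h)) I

theorem Sys.unique (S : Sys) (hR : S.Rat) (τ' : S.C →ₗ[ℂ] ℂ) (h1 : τ' 1 = 1)
    (hp : ∀ a, 0 ≤ τ' (star a * a)) (ht : ∀ a b, τ' (a * b) = τ' (b * a)) : τ' = S.tau :=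
  abstract_unique S.tau (S.avg hR) τ' h1 hp ht

/-- pull back a subalgebra -/
noncomputable def Sys.pull (S : Sys) (B : StarSubalgebra ℂ BH) : StarSubalgebra ℂ S.C := B.comap S.C.subtype

theorem Sys.mem_pull (S : Sys) {B : StarSubalgebra ℂ BH} {a : S.C} : a ∈ S.pull B ↔ (a : BH) ∈ B := Iff.rfl

theorem Sys.pull_fd (S : Sys) {B : StarSubalgebra ℂ BH} (h : FiniteDimensional ℂ B) :
    FiniteDimensional ℂ (S.pull B) := by
  let f : S.pull B →ₗ[ℂ] B :=
    { toFun := fun a => ⟨a.1.1, a.2⟩, map_add' := fun _ _ => rfl, map_smul' := fun _ _ => rfl }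
  refine FiniteDimensional.of_injective f fun a b h => ?_
  apply Subtype.ext; apply Subtype.ext
  exact congrArg (fun z : B => (z : BH)) h

theorem Sys.AF (S : Sys) : Monotone (fun n => S.pull (S.A n)) ∧ (∀ n, FiniteDimensional ℂ (S.pull (S.A n))) ∧
    Dense (⋃ n, (S.pull (S.A n) : Set S.C)) := by
  refine ⟨fun m n h a ha => S.A_mono h ha, fun n => S.pull_fd (Alg_fd (S.valid n)), ?_⟩
  intro a
  rw [Metric.mem_closure_iff]
  intro ε hε
  obtain ⟨n, b, hb, hab⟩ := S.C_approx a.2 hε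
  refine ⟨⟨b, S.A_le n hb⟩, Set.mem_iUnion.2 ⟨n, hb⟩, ?_⟩
  rw [dist_eq_norm]; exact hab

end AFX

namespace AFX
open scoped ENNReal

section coding
variable {X : Type*}

open Classical in
noncomputable def cN (B : ℕ → Set X) : ℕ → X → ℕ
  | 0, _ => 0
  | n+1, x => 2 * cN B n x + if x ∈ B n then 1 else 0

theorem cN_succ_lt (B : ℕ → Set X) (n : ℕ) (x : X) (i : ℕ) : cN B (n+1) x < 2 * i ↔ cN B n x < i := by
  rw [cN]; split_ifs <;> omega

theorem cN_lt (B : ℕ → Set X) (n : ℕ) (x : X) : cN B n x < 2 ^ n := by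
  induction n with
  | zero => simp [cN]
  | succ n ih => rw [pow_succ', cN_succ_lt]; exact ih

theorem cN_half (B : ℕ → Set X) (n : ℕ) (x : X) : cN B (n+1) x / 2 = cN B n x := by
  rw [cN]; split_ifs <;> omega

theorem cN_bit (B : ℕ → Set X) (n : ℕ) (x : X) : cN B (n+1) x % 2 = 1 ↔ x ∈ B n := by
  rw [cN]; split_ifs with h <;> simp only [h, iff_true, iff_false] <;> omega

theorem cN_meas [MeasurableSpace X] {B : ℕ → Set X} (hB : ∀ n, MeasurableSet (B n)) (n : ℕ) :
    Measurable (cN B n) := by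
  induction n with
  | zero => exact measurable_const
  | succ n ih =>
    exact (ih.const_mul 2).add (Measurable.ite (hB n) measurable_const measurable_const)

variable [MeasurableSpace X] (μ : Measure X) [IsProbabilityMeasure μ] (B : ℕ → Set X)

noncomputable def ca (n i : ℕ) : ℝ := μ.real {x | cN B n x < i}

theorem ca_zero (n : ℕ) : ca μ B n 0 = 0 := by simp [ca]
theorem ca_ge {n i : ℕ} (h : 2 ^ n ≤ i) : ca μ B n i = 1 := by
  have : {x | cN B n x < i} = Set.univ := Set.eq_univ_of_forall fun x => (cN_lt B n x).trans_le h
  rw [ca, this]; simp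
theorem ca_mono (n : ℕ) {i j : ℕ} (h : i ≤ j) : ca μ B n i ≤ ca μ B n j :=
  measureReal_mono fun x (hx : cN B n x < i) => lt_of_lt_of_le hx h
theorem ca_nonneg (n i : ℕ) : 0 ≤ ca μ B n i := measureReal_nonneg
theorem ca_le_one (n i : ℕ) : ca μ B n i ≤ 1 := measureReal_le_one
theorem ca_succ (n i : ℕ) : ca μ B (n+1) (2 * i) = ca μ B n i := by
  simp only [ca, cN_succ_lt]
theorem ca_finite (n : ℕ) : (Set.range (ca μ B n)).Finite := by
  refine (((Finset.range (2^n+1)).image (ca μ B n)).finite_toSet).subset ?_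
  rintro _ ⟨i, rfl⟩
  simp only [Finset.coe_image, Set.mem_image, Finset.coe_range, Set.mem_Iio]
  by_cases h : i ≤ 2 ^ n
  · exact ⟨i, by omega, rfl⟩
  · exact ⟨2^n, by omega, by rw [ca_ge μ B le_rfl, ca_ge μ B (by omega)]⟩

theorem cν_ex (n : ℕ) (x : Om) : ∃ i, x.1 < ca μ B n (i+1) :=
  ⟨2^n, by rw [ca_ge μ B (by omega)]; exact x.l⟩

open Classical in
noncomputable def cν (n : ℕ) (x : Om) : ℕ := Nat.find (cν_ex μ B n x)

theorem cν_iff (n : ℕ) (x : Om) (i : ℕ) : cν μ B n x = i ↔ ca μ B n i ≤ x.1 ∧ x.1 < ca μ B n (i+1) := by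
  classical
  rw [cν, Nat.find_eq_iff]
  constructor
  · rintro ⟨h1, h2⟩
    refine ⟨?_, h1⟩
    rcases i with _ | i
    · rw [ca_zero]; exact x.n
    · exact not_lt.1 (h2 i (by omega))
  · rintro ⟨h1, h2⟩
    exact ⟨h2, fun k hk => not_lt.2 ((ca_mono μ B n (by omega)).trans h1)⟩

theorem cν_half (n : ℕ) (x : Om) : cν μ B (n+1) x / 2 = cν μ B n x := by
  symm
  rw [cν_iff, ← ca_succ μ B n, ← ca_succ μ B n]
  obtain ⟨h1, h2⟩ := (cν_iff μ B (n+1) x _).1 rfl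
  exact ⟨(ca_mono μ B (n+1) (by omega)).trans h1, h2.trans_le (ca_mono μ B (n+1) (by omega))⟩

theorem cν_meas (n : ℕ) {E : Finset ℝ} (hE : Valid E) (h : ∀ i, ca μ B n i ∈ E) : Meas E (cν μ B n) := by
  intro x y hxy
  rw [hE.lo_eq_iff x.n y.n] at hxy
  obtain ⟨h1, h2⟩ := (cν_iff μ B n y _).1 rfl
  rw [cν_iff]
  exact ⟨(hxy _ (h _)).2 h1, not_le.1 fun h3 => not_le.2 h2 ((hxy _ (h _)).1 h3)⟩

theorem cN_fib (hB : ∀ n, MeasurableSet (B n)) (n i : ℕ) :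
    μ.real {x | cN B n x = i} = ca μ B n (i+1) - ca μ B n i := by
  have h : {x | cN B n x < i + 1} = {x | cN B n x < i} ∪ {x | cN B n x = i} := by
    ext x; simp only [Set.mem_ofPred_eq, Set.mem_union]; omega
  rw [ca, ca, h, measureReal_union _ (show MeasurableSet {x | cN B n x = i} from cN_meas hB n (measurableSet_singleton i))]
  · ring
  · rw [Set.disjoint_left]; intro x h1 h2
    simp only [Set.mem_ofPred_eq] at h1 h2; omega

theorem cν_set (n i : ℕ) : {x | cν μ B n x = i} = {x : Om | ca μ B n i ≤ x.1 ∧ x.1 < ca μ B n (i+1)} := by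
  ext x; exact cν_iff μ B n x i

theorem cν_fib (hB : ∀ n, MeasurableSet (B n)) (n i : ℕ) :
    volume.real {x | cν μ B n x = i} = μ.real {x | cN B n x = i} := by
  rw [cN_fib μ B hB, cν_set, volume_fin (ca_nonneg μ B _ _) (ca_le_one μ B _ _) (ca_mono μ B n (by omega))]

theorem cν_measurable (n : ℕ) : Measurable (cν μ B n) := by
  apply measurable_to_countable'
  intro i
  have : cν μ B n ⁻¹' {i} = {x | cν μ B n x = i} := rfl
  rw [this, cν_set]
  exact (measurableSet_le measurable_const measurable_subtype_coe).inter
    (measurableSet_lt measurable_subtype_coe measurable_const)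

theorem c_map (hB : ∀ n, MeasurableSet (B n)) (n : ℕ) :
    (volume : Measure Om).map (cν μ B n) = μ.map (cN B n) := by
  apply Measure.ext_of_singleton
  intro i
  rw [Measure.map_apply (cν_measurable μ B n) (measurableSet_singleton i),
    Measure.map_apply (cN_meas hB n) (measurableSet_singleton i)]
  have := cν_fib μ B hB n i
  rw [Measure.real, Measure.real, ENNReal.toReal_eq_toReal_iff' (measure_ne_top _ _) (measure_ne_top _ _)] at this
  exact this

theorem c_ex (hB : ∀ n, MeasurableSet (B n)) (n : ℕ) (ω : Om) : ∃ x, cN B n x = cν μ B n ω := by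
  obtain ⟨h1, h2⟩ := (cν_iff μ B n ω _).1 rfl
  by_contra h
  push Not at h
  have h3 := cN_fib μ B hB n (cν μ B n ω)
  have : {x | cN B n x = cν μ B n ω} = ∅ := by
    ext x; simpa using h x
  rw [this] at h3
  simp at h3
  linarith

/-- coded membership -/
def cD (k : ℕ) (ω : Om) : Prop := cν μ B (k+1) ω % 2 = 1

theorem c_down {n : ℕ} {x : X} {ω : Om} (h : cN B n x = cν μ B n ω) : ∀ k ≤ n, cN B k x = cν μ B k ω := by
  induction n with
  | zero => intro k hk; obtain rfl : k = 0 := by omega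
            exact h
  | succ n ih =>
    intro k hk
    rcases Nat.lt_or_ge n k with h1 | h1
    · obtain rfl : k = n + 1 := by omega
      exact h
    · exact ih (by rw [← cN_half, ← cν_half, h]) k h1

theorem c_pat {n : ℕ} {x : X} {ω : Om} (h : cN B n x = cν μ B n ω) (k : ℕ) (hk : k < n) :
    cD μ B k ω ↔ x ∈ B k := by
  rw [cD, ← c_down μ B h (k+1) hk, cN_bit]

theorem c_down' {n : ℕ} {x y : X} (h : cN B n x = cN B n y) : ∀ k < n, (x ∈ B k ↔ y ∈ B k) := by
  induction n with
  | zero => intro k hk; omega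
  | succ n ih =>
    intro k hk
    rcases Nat.lt_or_ge k n with h1 | h1
    · exact ih (by rw [← cN_half, ← cN_half B n y, h]) k h1
    · obtain rfl : k = n := by omega
      rw [← cN_bit, h, cN_bit]

theorem c_law (hB : ∀ n, MeasurableSet (B n)) (K : ℕ) (p : (ℕ → Prop) → Prop)
    (hp : ∀ f g : ℕ → Prop, (∀ k < K, (f k ↔ g k)) → (p f ↔ p g)) :
    volume.real {ω : Om | p (fun k => cD μ B k ω)} = μ.real {x | p (fun k => x ∈ B k)} := by
  let P : Set ℕ := {i | ∃ x, cN B K x = i ∧ p (fun k => x ∈ B k)}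
  have h1 : {ω : Om | p (fun k => cD μ B k ω)} = cν μ B K ⁻¹' P := by
    ext ω
    simp only [Set.mem_ofPred_eq, Set.mem_preimage, P]
    obtain ⟨x, hx⟩ := c_ex μ B hB K ω
    constructor
    · intro h; exact ⟨x, hx, (hp _ _ (c_pat μ B hx)).1 h⟩
    · rintro ⟨y, hy, h⟩; exact (hp _ _ (c_pat μ B hy)).2 h
  have h2 : {x | p (fun k => x ∈ B k)} = cN B K ⁻¹' P := by
    ext x
    simp only [Set.mem_ofPred_eq, Set.mem_preimage, P]
    constructor
    · intro h; exact ⟨x, rfl, h⟩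
    · rintro ⟨y, hy, h⟩; exact (hp _ _ (c_down' B hy)).1 h
  rw [h1, h2, Measure.real, Measure.real, ← Measure.map_apply (cν_measurable μ B K) (MeasurableSet.of_discrete),
    ← Measure.map_apply (cN_meas hB K) (MeasurableSet.of_discrete), c_map μ B hB]

theorem cD_meas {n : ℕ} {E : Finset ℝ} (hE : Valid E) (h : ∀ i, ca μ B n i ∈ E) {x y : Om}
    (hxy : lo E x = lo E y) : ∀ k < n, (cD μ B k x ↔ cD μ B k y) := by
  have h1 := cν_meas μ B n hE h x y hxy
  clear h
  induction n with
  | zero => intro k hk; omega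
  | succ n ih =>
    intro k hk
    rcases Nat.lt_or_ge k n with h2 | h2
    · exact ih (by rw [← cν_half, ← cν_half μ B n y, h1]) k h2
    · obtain rfl : k = n := by omega
      rw [cD, h1, ← cD]

end coding
end AFX

namespace AFX
open scoped ENNReal

section space
variable {X : Type*} [MetricSpace X] [CompactSpace X] [Nonempty X] [MeasurableSpace X] [BorelSpace X]

/-- Coding data: `b` is a basis, `κ` finds it among the `B`s. -/
structure Cod (μ : Measure X) (B : ℕ → Set X) (b : ℕ → Set X) (κ : ℕ → ℕ) : Prop where
  meas : ∀ k, MeasurableSet (B k)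
  eq : ∀ i, B (κ i) = b i
  op : ∀ i, IsOpen (b i)
  basis : ∀ x, ∀ ε > 0, ∃ i, x ∈ b i ∧ ∀ y ∈ b i, dist y x < ε

variable {μ : Measure X} [IsProbabilityMeasure μ] {B b : ℕ → Set X} {κ : ℕ → ℕ}

theorem Cod.phi_ex (h : Cod μ B b κ) (ω : Om) :
    ∃ p : X, ∀ i, (cD μ B (κ i) ω → p ∈ closure (b i)) ∧ (p ∈ b i → cD μ B (κ i) ω) := by
  choose x hx using fun n => c_ex μ B h.meas n ω
  obtain ⟨p, s, hs, hp⟩ := CompactSpace.tendsto_subseq x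
  refine ⟨p, fun i => ?_⟩
  have h1 : ∀ᶠ n in atTop, (cD μ B (κ i) ω ↔ x (s n) ∈ b i) := by
    filter_upwards [eventually_gt_atTop (κ i)] with n hn
    rw [← h.eq i]
    exact c_pat μ B (hx (s n)) _ (hn.trans_le (hs.id_le n))
  constructor
  · intro hD
    apply mem_closure_of_tendsto hp
    filter_upwards [h1] with n hn using hn.1 hD
  · intro hpb
    obtain ⟨n, hn, hn'⟩ := (h1.and (hp.eventually ((h.op i).mem_nhds hpb))).exists
    exact hn.2 hn'

noncomputable def Cod.phi (h : Cod μ B b κ) (ω : Om) : X := (h.phi_ex ω).choose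

theorem Cod.phi_clos (h : Cod μ B b κ) {ω : Om} {i : ℕ} (hD : cD μ B (κ i) ω) : h.phi ω ∈ closure (b i) :=
  ((h.phi_ex ω).choose_spec i).1 hD
theorem Cod.phi_mem (h : Cod μ B b κ) {ω : Om} {i : ℕ} (hD : h.phi ω ∈ b i) : cD μ B (κ i) ω :=
  ((h.phi_ex ω).choose_spec i).2 hD

theorem Cod.cover (h : Cod μ B b κ) {ε : ℝ} (hε : 0 < ε) :
    ∃ n, ∀ p, ∃ i < n, p ∈ b i ∧ ∀ y ∈ b i, ∀ z ∈ b i, dist y z < ε := by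
  choose i hi1 hi2 using fun x => h.basis x (ε / 2) (by positivity)
  obtain ⟨t, -, ht⟩ := isCompact_univ.elim_nhds_subcover (fun x => b (i x))
    (fun x _ => (h.op (i x)).mem_nhds (hi1 x))
  refine ⟨t.sup i + 1, fun p => ?_⟩
  obtain ⟨x, hx, hp⟩ := Set.mem_iUnion₂.1 (ht (Set.mem_univ p))
  refine ⟨i x, Nat.lt_succ_of_le (Finset.le_sup hx), hp, fun y hy z hz => ?_⟩
  have h1 := hi2 x y hy
  have h2 := hi2 x z hz
  have := dist_triangle_right y z x
  linarith

theorem Cod.coverB (h : Cod μ B b κ) {ε : ℝ} (hε : 0 < ε) :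
    ∃ n, ∀ p, ∃ i, κ i < n ∧ p ∈ b i ∧ ∀ y ∈ b i, ∀ z ∈ b i, dist y z < ε := by
  obtain ⟨n, hn⟩ := h.cover hε
  refine ⟨(Finset.range n).sup κ + 1, fun p => ?_⟩
  obtain ⟨i, hi, h1⟩ := hn p
  exact ⟨i, Nat.lt_succ_of_le (Finset.le_sup (Finset.mem_range.2 hi)), h1⟩

theorem Cod.close1 (h : Cod μ B b κ) {ε : ℝ} (hε : 0 < ε) :
    ∃ K, ∀ n ≥ K, ∀ ω x, cN B n x = cν μ B n ω → dist x (h.phi ω) < ε := by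
  obtain ⟨K, hK⟩ := h.coverB hε
  refine ⟨K, fun n hn ω x hx => ?_⟩
  obtain ⟨i, hi, hp, hd⟩ := hK (h.phi ω)
  refine hd _ ?_ _ hp
  rw [← h.eq i]
  exact (c_pat μ B hx _ (hi.trans_le hn)).1 (h.phi_mem hp)

theorem Cod.close1' (h : Cod μ B b κ) {ε : ℝ} (hε : 0 < ε) :
    ∃ K, ∀ n ≥ K, ∀ x y, cN B n x = cN B n y → dist x y < ε := by
  obtain ⟨K, hK⟩ := h.coverB hε
  refine ⟨K, fun n hn x y hx => ?_⟩
  obtain ⟨i, hi, hp, hd⟩ := hK y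
  refine hd _ ?_ _ hp
  rw [← h.eq i] at hp ⊢
  exact (c_down' B hx _ (hi.trans_le hn)).2 hp

theorem Cod.close2 (h : Cod μ B b κ) (α : C(X, X)) {κ' : ℕ → ℕ} (hκ' : ∀ i, B (κ' i) = α ⁻¹' b i)
    {ε : ℝ} (hε : 0 < ε) : ∃ K, ∀ n ≥ K, ∀ ω ω', (∀ i < n, (cD μ B (κ i) ω' ↔ cD μ B (κ' i) ω)) →
      dist (h.phi ω') (α (h.phi ω)) < ε := by
  obtain ⟨K, hK⟩ := h.cover (half_pos hε)
  have hu := CompactSpace.uniformContinuous_of_continuous α.continuous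
  obtain ⟨δ, hδ, hu⟩ := Metric.uniformContinuous_iff.1 hu (ε / 2) (half_pos hε)
  obtain ⟨L, hL⟩ := h.close1 hδ
  refine ⟨K, fun n hn ω ω' hω => ?_⟩
  obtain ⟨i, hi, hp, hd⟩ := hK (h.phi ω')
  obtain ⟨x, hx⟩ := c_ex μ B h.meas (max L (κ' i + 1)) ω
  have h1 := hu (hL _ (le_max_left _ _) ω x hx)
  have h2 := (c_pat μ B hx (κ' i) (lt_of_lt_of_le (Nat.lt_succ_self _) (le_max_right _ _))).1
    ((hω i (hi.trans_le hn)).1 (h.phi_mem hp))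
  rw [hκ'] at h2
  have h3 := hd _ hp _ h2
  have := dist_triangle (h.phi ω') (α x) (α (h.phi ω))
  linarith

noncomputable def cpt (B : ℕ → Set X) (n i : ℕ) : X := Function.invFun (cN B n) i

theorem cpt_spec {n i : ℕ} (h : ∃ x, cN B n x = i) : cN B n (cpt B n i) = i := Function.invFun_eq h

theorem Cod.tend1 (h : Cod μ B b κ) (ω : Om) :
    Tendsto (fun n => cpt B n (cν μ B n ω)) atTop (nhds (h.phi ω)) := by
  rw [Metric.tendsto_atTop]
  intro ε hε
  obtain ⟨K, hK⟩ := h.close1 hε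
  exact ⟨K, fun n hn => hK n hn _ _ (cpt_spec (c_ex μ B h.meas n ω))⟩

theorem Cod.tend2 (h : Cod μ B b κ) (x : X) :
    Tendsto (fun n => cpt B n (cN B n x)) atTop (nhds x) := by
  rw [Metric.tendsto_atTop]
  intro ε hε
  obtain ⟨K, hK⟩ := h.close1' hε
  exact ⟨K, fun n hn => hK n hn _ _ (cpt_spec ⟨x, rfl⟩)⟩

theorem Cod.integral (h : Cod μ B b κ) (f : C(X, ℂ)) : ∫ ω, f (h.phi ω) = ∫ x, f x ∂μ := by
  have m0 : ∀ n, Measurable (fun i => f (cpt B n i)) := fun n => measurable_from_top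
  have h1 : Tendsto (fun n => ∫ ω, f (cpt B n (cν μ B n ω))) atTop (nhds (∫ ω, f (h.phi ω))) := by
    refine tendsto_integral_of_dominated_convergence (fun _ => ‖f‖) ?_ (integrable_const _) ?_ ?_
    · exact fun n => ((m0 n).comp (cν_measurable μ B n)).aestronglyMeasurable
    · exact fun n => ae_of_all _ fun ω => f.norm_coe_le_norm _
    · exact ae_of_all _ fun ω => (f.continuous.tendsto _).comp (h.tend1 ω)
  have h2 : Tendsto (fun n => ∫ x, f (cpt B n (cN B n x)) ∂μ) atTop (nhds (∫ x, f x ∂μ)) := by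
    refine tendsto_integral_of_dominated_convergence (fun _ => ‖f‖) ?_ (integrable_const _) ?_ ?_
    · exact fun n => ((m0 n).comp (cN_meas h.meas n)).aestronglyMeasurable
    · exact fun n => ae_of_all _ fun ω => f.norm_coe_le_norm _
    · exact ae_of_all _ fun x => (f.continuous.tendsto _).comp (h.tend2 x)
  refine tendsto_nhds_unique h1 (h2.congr fun n => ?_)
  rw [← integral_map (cN_meas h.meas n).aemeasurable (f := fun i => f (cpt B n i)) (m0 n).aestronglyMeasurable,
    ← c_map μ B h.meas,
    integral_map (cν_measurable μ B n).aemeasurable (m0 n).aestronglyMeasurable]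

theorem Cod.approx (h : Cod μ B b κ) (f : C(X, ℂ)) {ε : ℝ} (hε : 0 < ε) :
    ∃ n, ∀ ω, ‖f (h.phi ω) - f (cpt B n (cν μ B n ω))‖ ≤ ε := by
  have hu := CompactSpace.uniformContinuous_of_continuous f.continuous
  obtain ⟨δ, hδ, hu⟩ := Metric.uniformContinuous_iff.1 hu ε hε
  obtain ⟨K, hK⟩ := h.close1 hδ
  refine ⟨K, fun ω => ?_⟩
  rw [norm_sub_rev, ← dist_eq_norm]
  exact (hu (hK K le_rfl ω _ (cpt_spec (c_ex μ B h.meas K ω)))).le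

theorem Cod.dense (h : Cod μ B b κ) (hpos : ∀ U : Set X, IsOpen U → U.Nonempty → 0 < μ U) :
    DenseRange h.phi := by
  intro x
  rw [Metric.mem_closure_iff]
  intro ε hε
  obtain ⟨i, hx, hd⟩ := h.basis x (ε / 2) (half_pos hε)
  have h1 := c_law μ B h.meas (κ i + 1) (fun f => f (κ i)) (fun f g hfg => hfg _ (Nat.lt_succ_self _))
  have h2 : 0 < μ.real {x | x ∈ B (κ i)} := by
    rw [h.eq]
    exact ENNReal.toReal_pos (hpos _ (h.op i) ⟨x, hx⟩).ne' (measure_ne_top _ _)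
  rw [← h1] at h2
  obtain ⟨ω, hω⟩ : {ω : Om | cD μ B (κ i) ω}.Nonempty := by
    by_contra hne
    rw [Set.not_nonempty_iff_eq_empty] at hne
    rw [hne] at h2; simp at h2
  refine ⟨_, ⟨ω, rfl⟩, ?_⟩
  have h3 : h.phi ω ∈ Metric.closedBall x (ε / 2) :=
    closure_minimal (fun y hy => (hd y hy).le) Metric.isClosed_closedBall (h.phi_clos hω)
  rw [dist_comm]
  have := Metric.mem_closedBall.1 h3
  linarith

end space
end AFX

namespace AFX
open scoped ENNReal

theorem glue {A : Type*} [TopologicalSpace A] (g : ℕ → ℝ → A) (hg : ∀ n, Continuous (g n))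
    (hm : ∀ n : ℕ, g n (n+1) = g (n+1) (n+1)) : ContinuousOn (fun t : ℝ => g ⌊t⌋₊ t) (Set.Ici 0) := by
  have h1 : ∀ n : ℕ, ContinuousOn (fun t : ℝ => g ⌊t⌋₊ t) (Set.Icc n (n+1)) := by
    intro n
    refine (hg n).continuousOn.congr fun t ht => ?_
    rcases ht.2.lt_or_eq with h | h
    · have : ⌊t⌋₊ = n := (Nat.floor_eq_iff (n.cast_nonneg.trans ht.1)).2 ⟨ht.1, h⟩
      simp only [this]
    · have : ⌊t⌋₊ = n + 1 := by
        rw [h]; exact_mod_cast Nat.floor_natCast (R := ℝ) (n+1)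
      simp only [this]
      rw [h, hm]
  have h2 : ∀ n : ℕ, ContinuousOn (fun t : ℝ => g ⌊t⌋₊ t) (Set.Icc 0 n) := by
    intro n
    induction n with
    | zero => simp
    | succ n ih =>
      have : Set.Icc (0:ℝ) ((n+1 : ℕ):ℝ) = Set.Icc 0 (n:ℝ) ∪ Set.Icc (n:ℝ) (n+1) := by
        rw [Set.Icc_union_Icc_eq_Icc n.cast_nonneg (by linarith)]; push_cast; rfl
      rw [this]
      exact ih.union_of_isClosed (h1 n) isClosed_Icc isClosed_Icc
  intro t ht
  obtain ⟨n, hn⟩ := exists_nat_gt t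
  refine (h2 n t ⟨ht, hn.le⟩).mono_of_mem_nhdsWithin ?_
  filter_upwards [self_mem_nhdsWithin, mem_nhdsWithin_of_mem_nhds (Iio_mem_nhds hn)] with s h3 h4
  exact ⟨h3, le_of_lt h4⟩

section
variable {A : Type*} [CStarAlgebra A]

theorem pow_spec {w : A} {K : ℕ} (hK : w ^ K = 1) {z : ℂ} (hz : z ∈ spectrum ℂ w) : z ^ K = 1 := by
  have h := spectrum.pow_image_subset w K ⟨z, hz, rfl⟩
  rw [hK] at h
  rcases subsingleton_or_nontrivial A with hA | hA
  · rw [spectrum.of_subsingleton] at hz; exact absurd hz (by simp)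
  · simpa using h

theorem pow_spec_fin {w : A} {K : ℕ} (hK0 : K ≠ 0) (hK : w ^ K = 1) : (spectrum ℂ w).Finite := by
  classical
  refine ((Polynomial.nthRoots K (1:ℂ)).toFinset.finite_toSet).subset fun z hz => ?_
  simp [Polynomial.mem_nthRoots (Nat.pos_of_ne_zero hK0), pow_spec hK hz]

noncomputable def gf (s : ℝ) (z : ℂ) : ℂ := Complex.exp ((s * Complex.arg z : ℝ) * Complex.I)

theorem exists_path {w : A} (hw : w ∈ unitary A) {K : ℕ} (hK0 : K ≠ 0) (hK : w ^ K = 1) :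
    ∃ γ : ℝ → A, Continuous γ ∧ γ 0 = 1 ∧ γ 1 = w ∧ (∀ s, γ s ∈ unitary A) ∧
      ∀ a, Commute w a → ∀ s, Commute (γ s) a := by
  have hn : IsStarNormal w := ⟨by
    rw [Unitary.mem_iff] at hw; rw [Commute, SemiconjBy, hw.1, hw.2]⟩
  have hfin := pow_spec_fin hK0 hK
  have hc : ∀ f : ℂ → ℂ, ContinuousOn f (spectrum ℂ w) := fun f => hfin.continuousOn f
  have hnorm : ∀ z ∈ spectrum ℂ w, ‖z‖ = 1 := fun z hz => by
    have := pow_spec hK hz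
    exact (pow_eq_one_iff_of_nonneg (norm_nonneg z) hK0).1 (by rw [← norm_pow, this, norm_one])
  have hgn : ∀ s z, star (gf s z) * gf s z = 1 := fun s z => by
    rw [RCLike.star_def, RCLike.conj_mul, gf, Complex.norm_exp_ofReal_mul_I]; simp
  refine ⟨fun s => cfc (gf s) w, ?_, ?_, ?_, ?_, ?_⟩
  · refine (LipschitzWith.of_dist_le_mul (K := ⟨Real.pi, Real.pi_pos.le⟩) fun s t => ?_).continuous
    rw [dist_eq_norm, ← cfc_sub _ _ w (hc _) (hc _)]
    refine norm_cfc_le (mul_nonneg Real.pi_pos.le dist_nonneg) fun z _ => ?_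
    have e : gf s z - gf t z = gf t z * (Complex.exp (Complex.I * ((s - t) * Complex.arg z : ℝ)) - 1) := by
      rw [mul_sub, mul_one, gf, gf, ← Complex.exp_add]; congr 2; push_cast; ring
    rw [e, norm_mul, gf, Complex.norm_exp_ofReal_mul_I, one_mul]
    refine (Real.norm_exp_I_mul_ofReal_sub_one_le).trans ?_
    rw [norm_mul, mul_comm]
    exact mul_le_mul_of_nonneg_right (Complex.abs_arg_le_pi z) (norm_nonneg _)
  · have : gf 0 = fun _ => 1 := by funext z; simp [gf]
    simp only [this]; exact cfc_const_one ℂ w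
  · have : (spectrum ℂ w).EqOn (gf 1) id := fun z hz => by
      have := Complex.norm_mul_exp_arg_mul_I z
      rw [hnorm z hz] at this
      simpa [gf] using this
    simp only [cfc_congr this]; exact cfc_id ℂ w
  · intro s
    have h1 : star (cfc (gf s) w) * cfc (gf s) w = 1 := by
      rw [← cfc_star, ← cfc_mul _ _ w (hc _) (hc _)]
      simp only [hgn]; exact cfc_const_one ℂ w
    have h2 : cfc (gf s) w * star (cfc (gf s) w) = 1 := by
      rw [← cfc_star, ← cfc_mul _ _ w (hc _) (hc _)]
      simp only [mul_comm (gf s _), hgn]; exact cfc_const_one ℂ w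
    exact Unitary.mem_iff.2 ⟨h1, h2⟩
  · intro a ha s
    refine Commute.cfc ha ?_ _
    rw [Unitary.mem_iff] at hw
    have : star w * a = star w * a * (w * star w) := by rw [hw.2, mul_one]
    rw [Commute, SemiconjBy, this, mul_assoc (star w), ← mul_assoc a, ← ha.eq, mul_assoc w, ← mul_assoc (star w), hw.1, one_mul]

end
end AFX

namespace AFX
open scoped ENNReal

theorem Sys.fin (S : Sys) {T : Set ℝ} (hT : T.Finite) (h : ∀ t ∈ T, ∃ m, t ∈ S.E m) :
    ∃ m, ∀ t ∈ T, t ∈ S.E m := by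
  choose! m hm using h
  refine ⟨hT.toFinset.sup m, fun t ht => S.E_mono (Finset.le_sup (hT.mem_toFinset.2 ht)) (hm t ht)⟩

theorem exists_sys {X : Type*} [MeasurableSpace X] (μ : Measure X) [IsProbabilityMeasure μ] (B : ℕ → Set X) :
    ∃ S : Sys, S.Rat ∧ ∀ n, ∃ m, ∀ i, ca μ B n i ∈ S.E m := by
  let Q : Set ℝ := Set.range (fun p : ℕ × ℕ => ca μ B p.1 p.2) ∪ {r | (∃ q : ℚ, (q:ℝ) = r) ∧ 0 ≤ r ∧ r ≤ 1}
  have hQc : Q.Countable := by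
    refine (Set.countable_range _).union ((Set.countable_range (fun q : ℚ => (q:ℝ))).mono ?_)
    rintro r ⟨⟨q, hq⟩, -⟩; exact ⟨q, hq⟩
  obtain ⟨q, hq⟩ := hQc.exists_eq_range ⟨_, Or.inl ⟨(0,0), rfl⟩⟩
  have hq1 : ∀ n, 0 ≤ q n ∧ q n ≤ 1 := by
    intro n
    have : q n ∈ Q := by rw [hq]; exact ⟨n, rfl⟩
    rcases this with ⟨p, hp⟩ | h
    · rw [← hp]; exact ⟨ca_nonneg μ B _ _, ca_le_one μ B _ _⟩
    · exact h.2
  obtain ⟨E, h1, h2, h3, h4⟩ := exists_seq q hq1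
  have hall : ∀ r ∈ Q, ∃ m, r ∈ E m := by
    intro r hr; rw [hq] at hr; obtain ⟨n, rfl⟩ := hr; exact ⟨n, h4 n⟩
  let S : Sys := ⟨E, h1, h2, h3⟩
  refine ⟨S, fun N hN => ?_, fun n => ?_⟩
  · obtain ⟨m, hm⟩ := S.fin (T := (fun j : ℕ => (j:ℝ) / N) '' (Set.Iic N)) ((Set.finite_Iic N).image _) (by
      rintro _ ⟨j, hj, rfl⟩
      refine hall _ (Or.inr ⟨⟨(j:ℚ) / N, by push_cast; rfl⟩, by positivity, ?_⟩)
      have hNR : (0:ℝ) < N := by exact_mod_cast hN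
      have hj' : (j:ℝ) ≤ N := by exact_mod_cast hj
      exact (div_le_one hNR).2 hj')
    exact ⟨m, fun j hj => hm _ ⟨j, hj, rfl⟩⟩
  · obtain ⟨m, hm⟩ := S.fin (ca_finite μ B n) (by
      rintro _ ⟨i, rfl⟩
      exact hall _ (Or.inl ⟨(n, i), rfl⟩))
    exact ⟨m, fun i => hm _ ⟨i, rfl⟩⟩

theorem M_sub_le {g g' : Lb} {ε : ℝ} (hε : 0 ≤ ε) (h : ∀ x, ‖g x - g' x‖ ≤ ε) : ‖M g - M g'‖ ≤ ε := by
  rw [← map_sub]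
  refine (M_norm_le _).trans (lp.norm_le_of_forall_le hε fun x => ?_)
  rw [lp.coeFn_sub, Pi.sub_apply]; exact h x

/-- diagonal algebra -/
noncomputable def MA (E : Finset ℝ) : StarSubalgebra ℂ Lb where
  carrier := {g | Meas E g}
  mul_mem' := fun {a b} ha hb x y h => by
    rw [lp.infty_coeFn_mul, Pi.mul_apply, Pi.mul_apply, ha x y h, hb x y h]
  add_mem' := fun {a b} ha hb x y h => by
    rw [lp.coeFn_add, Pi.add_apply, Pi.add_apply, ha x y h, hb x y h]
  algebraMap_mem' := fun r x y h => rfl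
  star_mem' := fun {a} ha x y h => by
    rw [lp.star_apply, lp.star_apply, ha x y h]

noncomputable def DA (E : Finset ℝ) : StarSubalgebra ℂ BH := (MA E).map M

theorem mem_DA {E : Finset ℝ} {a : BH} : a ∈ DA E ↔ ∃ g : Lb, Meas E g ∧ M g = a := Iff.rfl

theorem DA_comm {E E' : Finset ℝ} {a b : BH} (ha : a ∈ DA E) (hb : b ∈ DA E') : a * b = b * a := by
  obtain ⟨g, -, rfl⟩ := mem_DA.1 ha
  obtain ⟨g', -, rfl⟩ := mem_DA.1 hb
  rw [← map_mul, mul_comm, map_mul]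

theorem DA_fd {E : Finset ℝ} (hE : Valid E) : FiniteDimensional ℂ (DA E) := by
  have := Alg_fd hE
  let f : DA E →ₗ[ℂ] Alg E :=
    { toFun := fun a => ⟨a.1, by obtain ⟨g, hg, h⟩ := mem_DA.1 a.2; rw [← h]; exact M_mem hg⟩
      map_add' := fun _ _ => rfl, map_smul' := fun _ _ => rfl }
  refine FiniteDimensional.of_injective f fun a b h => ?_
  apply Subtype.ext
  exact congrArg (fun z : Alg E => (z : BH)) h

noncomputable def Sys.D (S : Sys) (n : ℕ) : StarSubalgebra ℂ S.C := S.pull (DA (S.E n))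

theorem Sys.D_mono (S : Sys) : Monotone S.D := by
  intro m n h a ha
  obtain ⟨g, hg, h1⟩ := mem_DA.1 ha
  exact mem_DA.2 ⟨g, hg.mono (S.valid m) (S.valid n) (S.E_mono h), h1⟩

noncomputable def Sys.CD (S : Sys) : StarSubalgebra ℂ S.C := (⨆ n, S.D n).topologicalClosure

theorem Sys.coe_CD (S : Sys) : (S.CD : Set S.C) = closure (⋃ n, (S.D n : Set S.C)) := by
  rw [Sys.CD, StarSubalgebra.topologicalClosure_coe, StarSubalgebra.coe_iSup_of_directed S.D_mono.directed_le]

theorem Sys.CD_comm (S : Sys) (a : S.C) (ha : a ∈ S.CD) (b : S.C) (hb : b ∈ S.CD) : a * b = b * a := by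
  have h1 : (a, b) ∈ closure ((⋃ n, (S.D n : Set S.C)) ×ˢ (⋃ n, (S.D n : Set S.C))) := by
    rw [closure_prod_eq, ← S.coe_CD]; exact ⟨ha, hb⟩
  have h2 : IsClosed {p : S.C × S.C | p.1 * p.2 = p.2 * p.1} := isClosed_eq (by fun_prop) (by fun_prop)
  refine closure_minimal ?_ h2 h1
  rintro ⟨x, y⟩ ⟨hx, hy⟩
  obtain ⟨m, hx⟩ := Set.mem_iUnion.1 hx
  obtain ⟨n, hy⟩ := Set.mem_iUnion.1 hy
  exact Subtype.ext (DA_comm (E := S.E m) (E' := S.E n) hx hy)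

theorem Sys.D_le (S : Sys) (n : ℕ) : S.D n ≤ S.CD := fun a ha => by
  have : a ∈ (S.CD : Set S.C) := by rw [S.coe_CD]; exact subset_closure (Set.mem_iUnion.2 ⟨n, ha⟩)
  exact this

section
variable {X : Type*} [MetricSpace X] [CompactSpace X] [Nonempty X] [MeasurableSpace X] [BorelSpace X]
  {μ : Measure X} [IsProbabilityMeasure μ] {B b : ℕ → Set X} {κ : ℕ → ℕ}

noncomputable def Cod.L (h : Cod μ B b κ) (f : C(X, ℂ)) : Lb :=
  mkL (fun ω => f (h.phi ω)) ⟨‖f‖, fun _ => f.norm_coe_le_norm _⟩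

theorem Cod.L_apply (h : Cod μ B b κ) (f : C(X, ℂ)) (ω : Om) : h.L f ω = f (h.phi ω) := rfl

noncomputable def Cod.LH (h : Cod μ B b κ) : C(X, ℂ) →⋆ₐ[ℂ] Lb where
  toFun := h.L
  map_one' := rfl
  map_mul' _ _ := rfl
  map_zero' := rfl
  map_add' _ _ := rfl
  commutes' _ := rfl
  map_star' _ := rfl

theorem Cod.L_approx (h : Cod μ B b κ) {S : Sys} (hS : ∀ n, ∃ m, ∀ i, ca μ B n i ∈ S.E m) (f : C(X, ℂ))
    {ε : ℝ} (hε : 0 < ε) : ∃ m, ∃ g : Lb, Meas (S.E m) g ∧ ‖M (h.L f) - M g‖ ≤ ε := by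
  obtain ⟨n, hn⟩ := h.approx f hε
  obtain ⟨m, hm⟩ := hS n
  refine ⟨m, mkL (fun ω => f (cpt B n (cν μ B n ω))) ⟨‖f‖, fun _ => f.norm_coe_le_norm _⟩, ?_, ?_⟩
  · exact (cν_meas μ B n (S.valid m) hm).comp (fun i => f (cpt B n i))
  · exact M_sub_le hε.le hn

theorem Cod.L_mem (h : Cod μ B b κ) {S : Sys} (hS : ∀ n, ∃ m, ∀ i, ca μ B n i ∈ S.E m) (f : C(X, ℂ)) :
    M (h.L f) ∈ S.C := by
  have : M (h.L f) ∈ closure (S.C : Set BH) := by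
    rw [Metric.mem_closure_iff]
    intro ε hε
    obtain ⟨m, g, hg, h1⟩ := h.L_approx hS f (half_pos hε)
    exact ⟨M g, S.A_le m (M_mem hg), by rw [dist_eq_norm]; linarith⟩
  rwa [S.C_closed.closure_eq] at this

noncomputable def Cod.hom (h : Cod μ B b κ) {S : Sys} (hS : ∀ n, ∃ m, ∀ i, ca μ B n i ∈ S.E m) :
    C(X, ℂ) →⋆ₐ[ℂ] S.C :=
  (M.comp h.LH).codRestrict S.C (h.L_mem hS)

theorem Cod.coe_hom (h : Cod μ B b κ) {S : Sys} (hS : ∀ n, ∃ m, ∀ i, ca μ B n i ∈ S.E m) (f : C(X, ℂ)) :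
    ((h.hom hS f : S.C) : BH) = M (h.L f) := rfl

theorem Cod.hom_mem (h : Cod μ B b κ) {S : Sys} (hS : ∀ n, ∃ m, ∀ i, ca μ B n i ∈ S.E m) (f : C(X, ℂ)) :
    h.hom hS f ∈ S.CD := by
  have : h.hom hS f ∈ (S.CD : Set S.C) := by
    rw [S.coe_CD, Metric.mem_closure_iff]
    intro ε hε
    obtain ⟨m, g, hg, h1⟩ := h.L_approx hS f (half_pos hε)
    refine ⟨⟨M g, S.A_le m (M_mem hg)⟩, Set.mem_iUnion.2 ⟨m, mem_DA.2 ⟨g, hg, rfl⟩⟩, ?_⟩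
    rw [dist_eq_norm]
    exact lt_of_le_of_lt h1 (by linarith)
  exact this

theorem Cod.hom_tau (h : Cod μ B b κ) {S : Sys} (hS : ∀ n, ∃ m, ∀ i, ca μ B n i ∈ S.E m) (f : C(X, ℂ)) :
    S.tau (h.hom hS f) = ∫ x, f x ∂μ := by
  rw [S.tau_apply, h.coe_hom, tr_M, ← h.integral]; rfl

theorem Cod.hom_inj (h : Cod μ B b κ) {S : Sys} (hS : ∀ n, ∃ m, ∀ i, ca μ B n i ∈ S.E m)
    (hpos : ∀ U : Set X, IsOpen U → U.Nonempty → 0 < μ U) : Function.Injective (h.hom hS) := by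
  intro f g hfg
  have h1 : M (h.L f) = M (h.L g) := congrArg (fun z : S.C => (z : BH)) hfg
  have h2 : ∀ ω, f (h.phi ω) = g (h.phi ω) := by
    intro ω
    have := congrArg (fun a => diag a ω) h1
    simp only [diag_M] at this
    exact this
  exact ContinuousMap.coe_injective ((h.dense hpos).equalizer f.continuous g.continuous (funext h2))

/-- the permutations -/
theorem Cod.perm (h : Cod μ B b κ) {S : Sys} (hS : ∀ n, ∃ m, ∀ i, ca μ B n i ∈ S.E m) (α : C(X, X))
    {κ' : ℕ → ℕ} (hκ' : ∀ i, B (κ' i) = α ⁻¹' b i)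
    (hinv : ∀ E : Set X, MeasurableSet E → μ (α ⁻¹' E) = μ E) (n : ℕ) :
    ∃ m, Meas (S.E m) (fun ω (i : Fin n) => cD μ B (κ' i) ω) ∧ ∃ σ ∈ Gam (S.E m), ∀ ω, ∀ i : Fin n,
      (cD μ B (κ i) (σ ω) ↔ cD μ B (κ' i) ω) := by
  let K := (Finset.range n).sup κ + (Finset.range n).sup κ' + 1
  have hK : ∀ i < n, κ i < K := fun i hi => by
    have := Finset.le_sup (f := κ) (Finset.mem_range.2 hi); omega
  have hK' : ∀ i < n, κ' i < K := fun i hi => by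
    have := Finset.le_sup (f := κ') (Finset.mem_range.2 hi); omega
  obtain ⟨m, hm⟩ := hS K
  have hc : Meas (S.E m) (fun ω (i : Fin n) => cD μ B (κ i) ω) := fun x y hxy => by
    funext i; exact propext (cD_meas μ B (S.valid m) hm hxy _ (hK i i.2))
  have hc' : Meas (S.E m) (fun ω (i : Fin n) => cD μ B (κ' i) ω) := fun x y hxy => by
    funext i; exact propext (cD_meas μ B (S.valid m) hm hxy _ (hK' i i.2))
  refine ⟨m, hc', ?_⟩
  obtain ⟨σ, hσ, h1⟩ := coloring' (S.valid m) (S.indep m) hc hc' (fun s => by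
    have e1 := c_law μ B h.meas K (fun f => (fun i : Fin n => f (κ i)) = s) (fun f g hfg => by
      have : (fun i : Fin n => f (κ i)) = (fun i : Fin n => g (κ i)) := by
        funext i; exact propext (hfg _ (hK i i.2))
      rw [this])
    have e2 := c_law μ B h.meas K (fun f => (fun i : Fin n => f (κ' i)) = s) (fun f g hfg => by
      have : (fun i : Fin n => f (κ' i)) = (fun i : Fin n => g (κ' i)) := by
        funext i; exact propext (hfg _ (hK' i i.2))
      rw [this])
    refine e1.trans (Eq.trans ?_ e2.symm)
    have e3 : {x | (fun i : Fin n => x ∈ B (κ' i)) = s} = α ⁻¹' {x | (fun i : Fin n => x ∈ B (κ i)) = s} := by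
      ext x
      simp only [Set.mem_ofPred_eq, Set.mem_preimage, hκ', h.eq]
    have e4 : MeasurableSet {x | (fun i : Fin n => x ∈ B (κ i)) = s} := by
      have : {x | (fun i : Fin n => x ∈ B (κ i)) = s} = ⋂ i : Fin n, {x | x ∈ B (κ i) ↔ s i} := by
        ext x; simp only [Set.mem_ofPred_eq, Set.mem_iInter, funext_iff, eq_iff_iff]
      rw [this]
      refine MeasurableSet.iInter fun i => ?_
      by_cases hs : s i
      · simp only [hs, iff_true]; exact h.meas _
      · simp only [hs, iff_false]; exact (h.meas _).compl
    rw [e3, Measure.real, Measure.real, hinv _ e4])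
  exact ⟨σ, hσ, fun ω i => by have := congrFun (h1 ω) i; exact iff_of_eq this⟩

end
end AFX

namespace AFX
open scoped ENNReal

theorem U_comm_M {ρ : Equiv.Perm Om} {g : Lb} (h : ∀ x, g (ρ x) = g x) : U ρ * M g = M g * U ρ := by
  rw [U_M]
  congr 2
  apply lp.ext; funext x
  rw [cmp_apply, ← h (ρ⁻¹ x), pinv]

theorem conj_bound {A : Type*} [CStarAlgebra A] {u v HA HF G : A} (hu : u ∈ unitary A) (hv : v ∈ unitary A)
    (hc : Commute v G) {ε : ℝ} (h1 : ‖HA - G‖ ≤ ε) (h2 : ‖G - star u * HF * u‖ ≤ ε) :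
    ‖HA - star (u * v) * HF * (u * v)‖ ≤ 2 * ε := by
  have h3 : star v * G * v = G := by
    rw [mul_assoc, ← hc.eq, ← mul_assoc, Unitary.star_mul_self_of_mem hv, one_mul]
  have e : HA - star (u * v) * HF * (u * v) = (HA - G) + star v * (G - star u * HF * u) * v := by
    rw [mul_sub, sub_mul, h3, star_mul]
    simp only [mul_assoc]; abel
  rw [e]
  refine (norm_add_le _ _).trans ?_
  rw [CStarRing.norm_mul_mem_unitary _ hv, CStarRing.norm_mem_unitary_mul _ (Unitary.star_mem hv)]
  linarith

section
variable {X : Type*} [MetricSpace X] [CompactSpace X] [Nonempty X] [MeasurableSpace X] [BorelSpace X]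
  {μ : Measure X} [IsProbabilityMeasure μ] {B b : ℕ → Set X} {κ : ℕ → ℕ}

theorem Cod.path (h : Cod μ B b κ) {S : Sys} (hS : ∀ n, ∃ m, ∀ i, ca μ B n i ∈ S.E m) (α : C(X, X))
    {κ' : ℕ → ℕ} (hκ' : ∀ i, B (κ' i) = α ⁻¹' b i)
    (hinv : ∀ E : Set X, MeasurableSet E → μ (α ⁻¹' E) = μ E) :
    ∃ u : ℝ → S.C, ContinuousOn u (Set.Ici 0) ∧ (∀ t, u t ∈ unitary S.C) ∧
      ∀ f : C(X, ℂ), ∀ ε > 0, ∃ T : ℝ, ∀ t ≥ T,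
        ‖h.hom hS (f.comp α) - star (u t) * h.hom hS f * u t‖ ≤ ε := by
  choose m hm σ hσ hσc using h.perm hS α hκ' hinv
  let uu : ℕ → S.C := fun n => ⟨U (σ n), S.A_le (m n) (U_mem (hσ n))⟩
  have huu : ∀ n, uu n ∈ unitary S.C := fun n => S.mem_unitary (U_mem_unitary (σ n))
  let ρ : ℕ → Equiv.Perm Om := fun n => (σ n)⁻¹ * σ (n+1)
  have hw : ∀ n, ((star (uu n) * uu (n+1) : S.C) : BH) = U (ρ n) := fun n => by
    change star (U (σ n)) * U (σ (n+1)) = _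
    rw [U_star, ← map_mul]
  have hfin : ∀ n, ∃ K, K ≠ 0 ∧ (ρ n) ^ K = 1 := by
    intro n
    set k := max (m n) (m (n+1))
    have hρ : ρ n ∈ Gam (S.E k) := mul_mem
      (inv_mem (Gam.mono (S.valid _) (S.valid _) (S.compat _ _ (le_max_left _ _)) (hσ n)))
      (Gam.mono (S.valid _) (S.valid _) (S.compat _ _ (le_max_right _ _)) (hσ (n+1)))
    have := Gam.finite (S.valid k)
    refine ⟨orderOf (⟨ρ n, hρ⟩ : Gam (S.E k)), (orderOf_pos _).ne', ?_⟩
    exact congrArg Subtype.val (pow_orderOf_eq_one (⟨ρ n, hρ⟩ : Gam (S.E k)))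
  have hpath : ∀ n, ∃ γ : ℝ → S.C, Continuous γ ∧ γ 0 = 1 ∧ γ 1 = star (uu n) * uu (n+1) ∧
      (∀ s, γ s ∈ unitary S.C) ∧ ∀ a, Commute (star (uu n) * uu (n+1)) a → ∀ s, Commute (γ s) a := by
    intro n
    obtain ⟨K, hK0, hK⟩ := hfin n
    refine exists_path (mul_mem (Unitary.star_mem (huu n)) (huu (n+1))) hK0 (Subtype.ext ?_)
    rw [SubmonoidClass.coe_pow, hw, ← map_pow, hK, map_one]; rfl
  choose γ hγc hγ0 hγ1 hγu hγa using hpath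
  refine ⟨fun t => uu ⌊t⌋₊ * γ ⌊t⌋₊ (t - ⌊t⌋₊), ?_, fun t => mul_mem (huu _) (hγu _ _), ?_⟩
  · refine glue (fun n t => uu n * γ n (t - n)) (fun n => ?_) (fun n => ?_)
    · exact continuous_const.mul ((hγc n).comp (continuous_id.sub continuous_const))
    · push_cast
      rw [add_sub_cancel_left, sub_self, hγ0, hγ1, mul_one, ← mul_assoc,
        Unitary.mul_star_self_of_mem (huu n), one_mul]
  · intro f ε hε
    have hu := CompactSpace.uniformContinuous_of_continuous f.continuous
    obtain ⟨δ, hδ, hu⟩ := Metric.uniformContinuous_iff.1 hu (ε / 4) (by positivity)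
    obtain ⟨N, hN⟩ := h.close2 α hκ' hδ
    refine ⟨N, fun t ht => ?_⟩
    have hn : N ≤ ⌊t⌋₊ := Nat.le_floor ht
    beta_reduce
    generalize ⌊t⌋₊ = n at hn ⊢
    set s := t - n
    let c' : Om → (Fin n → Prop) := fun ω i => cD μ B (κ' i) ω
    let c : Om → (Fin n → Prop) := fun ω i => cD μ B (κ i) ω
    have : Nonempty Om := ⟨⟨0, by simp⟩⟩
    let r : (Fin n → Prop) → Om := Function.invFun c
    have hr : ∀ ω, c (r (c' ω)) = c' ω := fun ω =>
      Function.invFun_eq ⟨σ n ω, funext fun i => propext (hσc n ω i)⟩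
    have d1 : ∀ ω, dist (h.phi (r (c' ω))) (α (h.phi ω)) < δ := fun ω =>
      hN n hn _ _ fun i hi => iff_of_eq (congrFun (hr ω) ⟨i, hi⟩)
    have d2 : ∀ ω, dist (h.phi (σ n ω)) (α (h.phi ω)) < δ := fun ω =>
      hN n hn _ _ fun i hi => hσc n ω ⟨i, hi⟩
    let G : Lb := mkL (fun ω => f (h.phi (r (c' ω)))) ⟨‖f‖, fun _ => f.norm_coe_le_norm _⟩
    have hG : Meas (S.E (m n)) G := (hm n).comp (fun p => f (h.phi (r p)))
    let G' : S.C := ⟨M G, S.A_le (m n) (M_mem hG)⟩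
    have hcρ : ∀ ω, c' (ρ n ω) = c' ω := by
      intro ω
      funext i
      refine propext ?_
      have h1 := hσc n (ρ n ω) i
      have h2 : σ n (ρ n ω) = σ (n+1) ω := by
        change σ n ((σ n)⁻¹ (σ (n+1) ω)) = _
        rw [pinv]
      rw [h2] at h1
      exact h1.symm.trans (hσc (n+1) ω i.castSucc)
    have hcom : Commute (star (uu n) * uu (n+1)) G' := by
      apply Subtype.ext
      change ((star (uu n) * uu (n+1) : S.C) : BH) * M G = M G * ((star (uu n) * uu (n+1) : S.C) : BH)
      rw [hw]
      refine U_comm_M fun x => ?_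
      simp only [G, mkL_apply, hcρ]
    have n1 : ∀ ω, ‖f (α (h.phi ω)) - G ω‖ ≤ ε / 4 := fun ω => by
      rw [← dist_eq_norm, dist_comm]; exact (hu (d1 ω)).le
    have n2 : ∀ ω, ‖f (h.phi (σ n ω)) - f (α (h.phi ω))‖ ≤ ε / 4 := fun ω => by
      rw [← dist_eq_norm]; exact (hu (d2 ω)).le
    have := conj_bound (HA := h.hom hS (f.comp α)) (HF := h.hom hS f) (ε := ε / 2) (huu n) (hγu n s)
      (hγa n G' hcom s) ?_ ?_
    · exact this.trans_eq (mul_div_cancel₀ ε two_ne_zero)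
    · exact M_sub_le (by positivity) fun ω => (n1 ω).trans (by linarith)
    · have e : ((star (uu n) * h.hom hS f * uu n : S.C) : BH) = M (cmp (h.L f) (σ n)) := by
        rw [← star_U_M_U]; rfl
      change ‖M G - ((star (uu n) * h.hom hS f * uu n : S.C) : BH)‖ ≤ _
      rw [e]
      refine M_sub_le (by positivity) fun ω => ?_
      rw [cmp_apply, h.L_apply]
      have e2 : G ω - f (h.phi (σ n ω)) = -((f (α (h.phi ω)) - G ω) + (f (h.phi (σ n ω)) - f (α (h.phi ω)))) := by
        ring
      rw [e2, norm_neg]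
      refine (norm_add_le _ _).trans ?_
      have := n1 ω
      have := n2 ω
      linarith

end

theorem exists_cod {X : Type*} [MetricSpace X] [CompactSpace X] [Nonempty X] [MeasurableSpace X] [BorelSpace X]
    (μ : Measure X) (d : ℕ) (α : Fin d → X ≃ₜ X) :
    ∃ (B b : ℕ → Set X) (κ : ℕ → ℕ) (κ' : Fin d → ℕ → ℕ), Cod μ B b κ ∧
      ∀ j i, B (κ' j i) = (α j) ⁻¹' b i := by
  obtain ⟨b, hb⟩ : ∃ b : ℕ → Set X, TopologicalSpace.countableBasis X = Set.range b :=
    (TopologicalSpace.countable_countableBasis X).exists_eq_range (by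
      obtain ⟨x⟩ := ‹Nonempty X›
      obtain ⟨v, hv, -⟩ := (TopologicalSpace.isBasis_countableBasis X).exists_subset_of_mem_open
        (Set.mem_univ x) isOpen_univ
      exact ⟨v, hv⟩)
  have hB := TopologicalSpace.isBasis_countableBasis X
  rw [hb] at hB
  have hop : ∀ i, IsOpen (b i) := fun i => hB.isOpen ⟨i, rfl⟩
  obtain ⟨e⟩ : Nonempty (ℕ × Option (Fin d) ≃ ℕ) := nonempty_equiv_of_countable
  let B0 : ℕ × Option (Fin d) → Set X := fun p => p.2.elim (b p.1) (fun j => (α j) ⁻¹' b p.1)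
  refine ⟨fun k => B0 (e.symm k), b, fun i => e (i, none), fun j i => e (i, some j), ⟨?_, ?_, hop, ?_⟩, ?_⟩
  · intro k
    rcases e.symm k with ⟨i, _ | j⟩
    · exact (hop i).measurableSet
    · exact ((hop i).preimage (α j).continuous).measurableSet
  · intro i; simp [B0]
  · intro x ε hε
    obtain ⟨_, ⟨i, rfl⟩, hx, hsub⟩ := hB.exists_subset_of_mem_open (Metric.mem_ball_self hε) Metric.isOpen_ball (a := x)
    exact ⟨i, hx, fun y hy => hsub hy⟩
  · intro j i; simp [B0]

end AFX

/-- Lemma 3.2: given a strictly positive invariant measure for a commuting family of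
homeomorphisms of an infinite compact metric space `X`, there is a unital simple
AF-algebra `C₀` with unique tracial state `τ`, a commutative AF C*-subalgebra `C₀₀`
containing the unit, a unital embedding `h : C(X) → C₀₀` carrying `τ` to `∫ · dμ`, and,
for each `j`, a norm-continuous path of unitaries `(u_{j,t})_{t ≥ 1}` asymptotically
implementing `α_j`. -/
theorem stmt_3 {X : Type*} [MetricSpace X] [CompactSpace X] [Infinite X]
    [MeasurableSpace X] [BorelSpace X]
    (d : ℕ) (α : Fin d → X ≃ₜ X)
    (hcomm : ∀ i j : Fin d, ∀ x : X, α i (α j x) = α j (α i x))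
    (μ : Measure X) [IsProbabilityMeasure μ]
    (hpos : ∀ U : Set X, IsOpen U → U.Nonempty → 0 < μ U)
    (hinv : ∀ (j : Fin d) (E : Set X), MeasurableSet E → μ ((α j) '' E) = μ E) :
    ∃ (C₀ : UnitalCStarAlg), C₀.IsAF ∧ C₀.IsSimple ∧
      ∃ τ : C₀.carrier →ₗ[ℂ] ℂ, C₀.IsTracialState τ ∧
        (∀ τ' : C₀.carrier →ₗ[ℂ] ℂ, C₀.IsTracialState τ' → τ' = τ) ∧
        ∃ C₀₀ : StarSubalgebra ℂ C₀.carrier,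
          (∀ a ∈ C₀₀, ∀ b ∈ C₀₀, a * b = b * a) ∧
          (∃ S : ℕ → StarSubalgebra ℂ C₀.carrier,
            Monotone S ∧ (∀ n, FiniteDimensional ℂ (S n)) ∧ (∀ n, S n ≤ C₀₀) ∧
            closure (⋃ n, (S n : Set C₀.carrier)) = (C₀₀ : Set C₀.carrier)) ∧
          ∃ h : C(X, ℂ) →⋆ₐ[ℂ] C₀.carrier,
            Function.Injective h ∧ (∀ f : C(X, ℂ), h f ∈ C₀₀) ∧
            (∀ f : C(X, ℂ), τ (h f) = ∫ x, f x ∂μ) ∧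
            ∃ u : Fin d → ℝ → C₀.carrier,
              ∀ j : Fin d,
                ContinuousOn (u j) (Set.Ici (1 : ℝ)) ∧
                (∀ t : ℝ, 1 ≤ t → u j t ∈ unitary C₀.carrier) ∧
                ∀ f : C(X, ℂ),
                  Tendsto
                    (fun t : ℝ =>
                      ‖h (f.comp (α j : C(X, X))) - star (u j t) * h f * u j t‖)
                    atTop (nhds 0) := by
  have : Nonempty X := inferInstance
  obtain ⟨B, b, κ, κ', hc, hκ⟩ := AFX.exists_cod μ d α
  obtain ⟨S, hR, hS⟩ := AFX.exists_sys μ B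
  have hpre : ∀ (j : Fin d) (E : Set X), MeasurableSet E →
      μ ((α j : C(X, X)) ⁻¹' E) = μ E := by
    intro j E hE
    have h1 := hinv j ((α j) ⁻¹' E) ((α j).continuous.measurable hE)
    rw [Set.image_preimage_eq _ (α j).surjective] at h1
    exact h1.symm
  have hp := fun j : Fin d => hc.path hS (α j : C(X, X)) (hκ j) (hpre j)
  choose u huc huu hua using hp
  refine ⟨⟨S.C⟩, ⟨_, S.AF⟩, fun I _ => S.simple hR I, S.tau,
    ⟨AFX.tr_one, fun a => AFX.tr_nonneg _, fun a b => S.tr_comm a.2 b.2⟩,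
    fun τ' h => S.unique hR τ' h.1 h.2.1 h.2.2, S.CD, S.CD_comm,
    ⟨S.D, S.D_mono, fun n => S.pull_fd (AFX.DA_fd (S.valid n)), ?_, S.coe_CD.symm⟩,
    hc.hom hS, hc.hom_inj hS hpos, hc.hom_mem hS, hc.hom_tau hS, u, fun j => ⟨?_, fun t _ => huu j t, ?_⟩⟩
  · intro n x hx
    change x ∈ (S.CD : Set S.C)
    rw [S.coe_CD]
    exact subset_closure (Set.mem_iUnion.2 ⟨n, hx⟩)
  · exact (huc j).mono (Set.Ici_subset_Ici.2 zero_le_one)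
  · intro f
    rw [Metric.tendsto_atTop]
    intro ε hε
    obtain ⟨T, hT⟩ := hua j f (ε / 2) (half_pos hε)
    refine ⟨T, fun t ht => ?_⟩
    rw [Real.dist_eq, sub_zero, abs_of_nonneg (norm_nonneg _)]
    exact lt_of_le_of_lt (hT t ht) (half_lt_self hε)
end

section
/- Let X be a compact metric space, let α_1, …, α_d be pairwise commuting homeomorphisms of X, and let μ be a strictly positive Borel probability measure on X that is invariant under the action of α_1, …, α_d. Then there exist: a nonempty compact metrizable totally disconnected topological space Y; pairwise commuting homeomorphisms β_1, …, β_d of Y; a Borel probability measure ν on Y that is invariant under the action of β_1, …, β_d; and a continuous surjection s : Y → X such that s ∘ β_j = α_j ∘ s for every j = 1, …, d and the pushforward measure s_*ν equals μ. -/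
/-- A bundled compact metric space equipped with its Borel σ-algebra. -/
structure CompactMetricBundle where
  carrier : Type
  [metricSpace : MetricSpace carrier]
  [compactSpace : CompactSpace carrier]
  [measurableSpace : MeasurableSpace carrier]
  [borelSpace : BorelSpace carrier]

attribute [instance] CompactMetricBundle.metricSpace CompactMetricBundle.compactSpace
  CompactMetricBundle.measurableSpace CompactMetricBundle.borelSpace

open MeasureTheory

theorem aux_section {X : Type*} [MetricSpace X] [MeasurableSpace X] [BorelSpace X]
    (f : (ℕ → Bool) → X) (hf : Continuous f) (hs : Function.Surjective f) :
    ∃ σ : X → (ℕ → Bool), Measurable σ ∧ ∀ x, f (σ x) = x := by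
  let ι : (ℕ → Bool) → ℝ := fun c => (cantorSetHomeomorphNatToBool.symm c : ℝ)
  have hι : Continuous ι := by
    exact continuous_subtype_val.comp cantorSetHomeomorphNatToBool.symm.continuous
  have hinj : Function.Injective ι :=
    Subtype.val_injective.comp cantorSetHomeomorphNatToBool.symm.injective
  have hemb : MeasurableEmbedding ι := (hι.isClosedEmbedding hinj).measurableEmbedding
  have hmin : ∀ x, ∃ c, f c = x ∧ ∀ c', f c' = x → ι c ≤ ι c' := by
    intro x
    have hc : IsCompact (f ⁻¹' {x}) := (isClosed_singleton.preimage hf).isCompact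
    obtain ⟨c, hc1, hc2⟩ := hc.exists_isMinOn (hs x) hι.continuousOn
    exact ⟨c, hc1, fun c' h => hc2 h⟩
  choose σ h1 h2 using hmin
  refine ⟨σ, ?_, h1⟩
  rw [← hemb.measurable_comp_iff]
  refine measurable_of_Iic fun a => ?_
  have : (ι ∘ σ) ⁻¹' Set.Iic a = f '' (ι ⁻¹' Set.Iic a) := by
    ext x
    constructor
    · intro h
      exact ⟨σ x, h, h1 x⟩
    · rintro ⟨c, hc, rfl⟩
      exact (h2 _ c rfl).trans hc
  rw [this]
  exact ((isClosed_Iic.preimage hι).isCompact.image hf).isClosed.measurableSet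

theorem aux_action {X : Type*} [TopologicalSpace X] (d : ℕ) (α : Fin d → X ≃ₜ X)
    (hcomm : ∀ i j : Fin d, ∀ x : X, α i (α j x) = α j (α i x)) :
    ∃ (φ : (Fin d → Multiplicative ℤ) →* (X ≃ₜ X)) (a : Fin d → (Fin d → Multiplicative ℤ)),
      ∀ j, φ (a j) = α j := by
  refine ⟨MonoidHom.noncommPiCoprod (fun j => zpowersHom (X ≃ₜ X) (α j)) ?_,
    fun j => Pi.mulSingle j (Multiplicative.ofAdd 1), fun j => ?_⟩
  · intro i j _ x y
    have : Commute (α i) (α j) := Homeomorph.ext (hcomm i j)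
    simpa using this.zpow_zpow _ _
  · refine (MonoidHom.noncommPiCoprod_mulSingle _ _ _).trans ?_
    simp

/-- Corollary 3.3 (topological form): a commuting family of homeomorphisms of a compact
metric space with a strictly positive invariant probability measure is a factor of a
commuting family of homeomorphisms of a nonempty compact metrizable totally disconnected
space, with an invariant measure pushing forward to the given one. -/
theorem stmt_4 {X : Type*} [MetricSpace X] [CompactSpace X]
    [MeasurableSpace X] [BorelSpace X]
    (d : ℕ) (α : Fin d → X ≃ₜ X)
    (hcomm : ∀ i j : Fin d, ∀ x : X, α i (α j x) = α j (α i x))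
    (μ : Measure X) [IsProbabilityMeasure μ]
    (hpos : ∀ U : Set X, IsOpen U → U.Nonempty → 0 < μ U)
    (hinv : ∀ (j : Fin d) (E : Set X), MeasurableSet E → μ ((α j) '' E) = μ E) :
    ∃ (Y : CompactMetricBundle) (β : Fin d → Y.carrier ≃ₜ Y.carrier)
      (ν : Measure Y.carrier) (s : C(Y.carrier, X)),
      Nonempty Y.carrier ∧
      TotallyDisconnectedSpace Y.carrier ∧
      (∀ i j : Fin d, ∀ y : Y.carrier, β i (β j y) = β j (β i y)) ∧
      IsProbabilityMeasure ν ∧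
      (∀ (j : Fin d) (E : Set Y.carrier), MeasurableSet E → ν ((β j) '' E) = ν E) ∧
      Function.Surjective s ∧
      (∀ (j : Fin d) (y : Y.carrier), s (β j y) = α j (s y)) ∧
      Measure.map s ν = μ := by
  classical
  have : Nonempty X := nonempty_of_isProbabilityMeasure μ
  obtain ⟨f, hf, hs⟩ := exists_nat_bool_continuous_surjective_of_compact X
  obtain ⟨σ, hσ, hfσ⟩ := aux_section f hf hs
  obtain ⟨φ, a, ha⟩ := aux_action d α hcomm
  let G := Fin d → Multiplicative ℤ
  let S : Set (G → ℕ → Bool) := {y | ∀ g, f (y g) = φ g (f (y 1))}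
  have hS : IsClosed S := by
    have : S = ⋂ g, {y | f (y g) = φ g (f (y 1))} := by
      ext y; simp only [S, Set.mem_setOf_eq, Set.mem_iInter]; rfl
    rw [this]
    refine isClosed_iInter fun g => isClosed_eq (by fun_prop) ?_
    exact (φ g).continuous.comp (hf.comp (continuous_apply _))
  have : Countable (Multiplicative ℤ) := inferInstanceAs (Countable ℤ)
  have : Countable G := inferInstanceAs (Countable (Fin d → Multiplicative ℤ))
  have : CompactSpace S := isCompact_iff_compactSpace.mp hS.isCompact
  let sh : G → S → S := fun h y => ⟨fun g => y.1 (g * h), fun g => by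
    have h1 := y.2 (g * h)
    have h2 := y.2 h
    change f (y.1 (g * h)) = φ g (f (y.1 (1 * h)))
    rw [h1, map_mul, one_mul, h2]; rfl⟩
  have hsh : ∀ h, Continuous (sh h) := by
    intro h
    refine Continuous.subtype_mk ?_ _
    exact continuous_pi fun g => (continuous_apply (g * h)).comp continuous_subtype_val
  have hmul : ∀ h k y, sh h (sh k y) = sh (h * k) y := by
    intro h k y
    apply Subtype.ext; funext g
    change y.1 (g * h * k) = y.1 (g * (h * k))
    rw [mul_assoc]
  have hone : ∀ y, sh 1 y = y := by
    intro y
    apply Subtype.ext; funext g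
    change y.1 (g * 1) = y.1 g
    rw [mul_one]
  let β : Fin d → S ≃ₜ S := fun j =>
    { toFun := sh (a j)
      invFun := sh (a j)⁻¹
      left_inv := fun y => by rw [hmul, inv_mul_cancel, hone]
      right_inv := fun y => by rw [hmul, mul_inv_cancel, hone]
      continuous_toFun := hsh _
      continuous_invFun := hsh _ }
  let Φ : X → S := fun x => ⟨fun g => σ (φ g x), fun g => by simp [hfσ]⟩
  have hΦ : Measurable Φ := by
    refine Measurable.subtype_mk (measurable_pi_lambda _ fun g => ?_)
    exact hσ.comp (φ g).continuous.measurable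
  have hΦβ : ∀ j x, Φ (α j x) = β j (Φ x) := by
    intro j x
    apply Subtype.ext; funext g
    change σ (φ g (α j x)) = σ (φ (g * a j) x)
    rw [map_mul, ha]; rfl
  let s : C(S, X) := ⟨fun y => f (y.1 1), hf.comp
    ((continuous_apply _).comp continuous_subtype_val)⟩
  have hsΦ : ∀ x, s (Φ x) = x := by
    intro x
    change f (σ (φ 1 x)) = x
    rw [hfσ, map_one]; rfl
  refine ⟨{ carrier := S, metricSpace := TopologicalSpace.metrizableSpaceMetric S }, β, Measure.map Φ μ, s, ⟨Φ (Classical.arbitrary X)⟩, ?_, ?_, ?_, ?_,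
    fun x => ⟨Φ x, hsΦ x⟩, ?_, ?_⟩
  · exact inferInstanceAs (TotallyDisconnectedSpace S)
  · intro i j y
    change sh _ (sh _ y) = sh _ (sh _ y)
    rw [hmul, hmul, mul_comm]
  · exact Measure.isProbabilityMeasure_map hΦ.aemeasurable
  · intro j E hE
    have hE' : MeasurableSet (β j '' E) :=
      (β j).measurableEmbedding.measurableSet_image.mpr hE
    refine (Measure.map_apply hΦ hE').trans (Eq.trans ?_ (Measure.map_apply hΦ hE).symm)
    rw [← hinv j _ (hΦ hE)]
    congr 1
    ext x
    constructor
    · rintro ⟨e, he, hex⟩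
      refine ⟨(α j).symm x, ?_, (α j).apply_symm_apply x⟩
      have : Φ ((α j).symm x) = e := by
        apply (β j).injective
        rw [← hΦβ, (α j).apply_symm_apply, hex]
      change Φ ((α j).symm x) ∈ E
      rw [this]; exact he
    · rintro ⟨z, hz, rfl⟩
      exact ⟨Φ z, hz, (hΦβ j z).symm⟩
  · intro j y
    change f (y.1 (1 * a j)) = α j (f (y.1 1))
    rw [one_mul, ← ha]
    exact y.2 (a j)
  · refine (Measure.map_map s.continuous.measurable hΦ).trans ?_
    have : (s ∘ Φ) = id := funext hsΦ
    rw [this, Measure.map_id]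
end

section
/- Let X be an infinite compact metric space, let α_1, …, α_d be pairwise commuting homeomorphisms of X, let μ be a strictly positive Borel probability measure on X invariant under the action of α_1, …, α_d, and suppose that the homeomorphism α_1 is minimal. Then there exist: a compact metrizable space Y homeomorphic to the Cantor space {0,1}^ℕ; pairwise commuting homeomorphisms β_1, …, β_d of Y with β_1 minimal; a Borel probability measure ν on Y invariant under the action of β_1, …, β_d; and a continuous surjection s : Y → X such that s ∘ β_j = α_j ∘ s for every j = 1, …, d and the pushforward measure s_*ν equals μ. -/
open MeasureTheory

/-- A homeomorphism is minimal if its only closed invariant sets are `∅` and the whole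
space. -/
def IsMinimalHomeo {Y : Type*} [TopologicalSpace Y] (β : Y ≃ₜ Y) : Prop :=
  ∀ F : Set Y, IsClosed F → β '' F = F → F = ∅ ∨ F = Set.univ

section
open Set
theorem aux_brouwer {Y : Type*} [TopologicalSpace Y] [CompactSpace Y] [T2Space Y] [Nonempty Y]
    (hiso : ∀ y : Y, ¬ IsOpen ({y} : Set Y))
    (C : ℕ → Set Y) (hC : ∀ n, IsClopen (C n))
    (hsep : ∀ y z : Y, y ≠ z → ∃ n, ¬ (y ∈ C n ↔ z ∈ C n)) :
    Nonempty (Y ≃ₜ (ℕ → Bool)) := by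
  classical
  have split : ∀ (A : Set Y) (n : ℕ), ∃ m : ℕ, IsOpen A → A.Nonempty →
      (A ∩ C m).Nonempty ∧ (A \ C m).Nonempty ∧
      (∀ x ∈ A, ∀ y ∈ A, (x ∈ C m ↔ y ∈ C m) → (x ∈ C n ↔ y ∈ C n)) := by
    intro A n
    by_cases h : (A ∩ C n).Nonempty ∧ (A \ C n).Nonempty
    · exact ⟨n, fun _ _ => ⟨h.1, h.2, fun x _ y _ h => h⟩⟩
    · by_cases hA : IsOpen A ∧ A.Nonempty
      · obtain ⟨hA, a, ha⟩ := hA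
        have : ∃ b ∈ A, b ≠ a := by
          by_contra! hcon
          apply hiso a
          have : A = {a} := by
            ext x; constructor
            · intro hx; exact hcon x hx
            · rintro rfl; exact ha
          rwa [← this]
        obtain ⟨b, hb, hne⟩ := this
        obtain ⟨m, hm⟩ := hsep b a hne
        have h12 : (A ∩ C m).Nonempty ∧ (A \ C m).Nonempty := by
          by_cases hbm : b ∈ C m
          · exact ⟨⟨b, hb, hbm⟩, ⟨a, ha, fun h => hm (by tauto)⟩⟩
          · exact ⟨⟨a, ha, by tauto⟩, ⟨b, hb, hbm⟩⟩
        refine ⟨m, fun _ _ => ⟨h12.1, h12.2, ?_⟩⟩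
        intro x hx y hy _
        by_contra hcon
        apply h
        by_cases hxc : x ∈ C n
        · exact ⟨⟨x, hx, hxc⟩, ⟨y, hy, fun hyc => hcon (by tauto)⟩⟩
        · exact ⟨⟨y, hy, by tauto⟩, ⟨x, hx, hxc⟩⟩
      · exact ⟨0, fun h1 h2 => absurd ⟨h1, h2⟩ hA⟩
  choose idx hidx using split
  let D : (ℕ → Bool) → ℕ → Set Y := fun w n => Nat.rec univ
    (fun n A => if w n then A ∩ C (idx A n) else A \ C (idx A n)) n
  have D0 : ∀ w, D w 0 = univ := fun w => rfl
  have DS : ∀ w n, D w (n+1) = if w n then D w n ∩ C (idx (D w n) n)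
      else D w n \ C (idx (D w n) n) := fun w n => rfl
  let cell : Y → ℕ → Set Y := fun y n => Nat.rec univ
    (fun n A => if y ∈ C (idx A n) then A ∩ C (idx A n) else A \ C (idx A n)) n
  have cS : ∀ y n, cell y (n+1) = if y ∈ C (idx (cell y n) n) then cell y n ∩ C (idx (cell y n) n)
      else cell y n \ C (idx (cell y n) n) := fun w n => rfl
  let f : Y → ℕ → Bool := fun y n => decide (y ∈ C (idx (cell y n) n))
  have hD : ∀ w n, IsClopen (D w n) ∧ (D w n).Nonempty := by
    intro w n
    induction n with
    | zero => rw [D0]; exact ⟨isClopen_univ, univ_nonempty⟩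
    | succ n ih =>
      rw [DS]
      have := hidx (D w n) n ih.1.isOpen ih.2
      split_ifs
      · exact ⟨ih.1.inter (hC _), this.1⟩
      · exact ⟨ih.1.diff (hC _), this.2.1⟩
  have cD : ∀ y n, cell y n = D (f y) n := by
    intro y n
    induction n with
    | zero => rfl
    | succ n ih =>
      rw [cS, DS, ← ih]
      simp [f]
  have ymem : ∀ y n, y ∈ cell y n := by
    intro y n
    induction n with
    | zero => exact mem_univ _
    | succ n ih =>
      rw [cS]
      split_ifs with h
      · exact ⟨ih, h⟩
      · exact ⟨ih, h⟩
  -- membership determines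
  have key : ∀ w y n, y ∈ D w n → D w n = cell y n ∧ ∀ k < n, w k = f y k := by
    intro w y n
    induction n with
    | zero => intro _; exact ⟨rfl, by simp⟩
    | succ n ih =>
      intro hy
      rw [DS] at hy
      have hy' : y ∈ D w n := by
        split_ifs at hy
        · exact hy.1
        · exact hy.1
      obtain ⟨h1, h2⟩ := ih hy'
      have hwn : w n = f y n := by
        simp only [f, ← h1]
        split_ifs at hy with h
        · simp [h, hy.2]
        · simp [h, hy.2]
      refine ⟨?_, ?_⟩
      · rw [cD y (n+1), DS, DS, ← cD y n, ← h1, hwn]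
      · intro k hk
        rcases Nat.lt_succ_iff_lt_or_eq.1 hk with h | rfl
        · exact h2 k h
        · exact hwn
  have fcont : Continuous f := by
    refine continuous_pi fun n => ?_
    refine (IsLocallyConstant.iff_exists_open _).2 (fun y => ?_) |>.continuous
    refine ⟨cell y (n+1), ?_, ymem y (n+1), ?_⟩
    · rw [cD y (n+1)]; exact (hD (f y) (n+1)).1.isOpen
    · intro z hz
      rw [cD y (n+1)] at hz
      exact ((key _ _ _ hz).2 n (Nat.lt_succ_self n)).symm
  have finj : Function.Injective f := by
    intro y z hyz
    by_contra hne
    obtain ⟨n, h1⟩ := hsep y z hne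
    have hc : cell y n = cell z n := by rw [cD, cD, hyz]
    have h3 := hidx (cell y n) n (by rw [cD]; exact (hD _ _).1.isOpen) ⟨y, ymem _ _⟩
    have h4 := h3.2.2 y (ymem _ _) z (by rw [hc]; exact ymem _ _)
    have h5 := congrFun hyz n
    simp only [f, ← hc, decide_eq_decide] at h5
    exact h1 (h4 h5)
  have fsurj : Function.Surjective f := by
    intro w
    obtain ⟨y, hy⟩ := IsCompact.nonempty_iInter_of_sequence_nonempty_isCompact_isClosed (D w)
      (fun n => by
        rw [DS]; split_ifs
        · exact inter_subset_left
        · exact sdiff_subset) (fun n => (hD w n).2) (hD w 0).1.isClosed.isCompact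
      (fun n => (hD w n).1.isClosed)
    refine ⟨y, ?_⟩
    funext n
    exact ((key w y (n+1) (mem_iInter.1 hy (n+1))).2 n (Nat.lt_succ_self n)).symm
  exact ⟨fcont.homeoOfEquivCompactToT2 (f := Equiv.ofBijective f ⟨finj, fsurj⟩)⟩
end

theorem aux_family {X : Type*} [MetricSpace X] [CompactSpace X] [Nonempty X]
    [MeasurableSpace X] [BorelSpace X] (μ : Measure X) [IsProbabilityMeasure μ] :
    ∃ U : ℕ → Set X, (∀ n, IsOpen (U n)) ∧ (∀ n, μ (frontier (U n)) = 0) ∧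
      ∀ x y : X, x ≠ y → ∃ n, x ∈ U n ∧ y ∉ closure (U n) := by
  have h : ∀ (x : X) (k : ℕ), ∃ r ∈ Set.Ioo (1 / ((k : ℝ) + 2)) (1 / ((k : ℝ) + 1)),
      μ (frontier (Metric.thickening r {x})) = 0 := fun x k =>
    exists_null_frontier_thickening μ {x} (by
      apply one_div_lt_one_div_of_lt <;> linarith [(Nat.cast_nonneg k : (0 : ℝ) ≤ k)])
  choose r hr hr0 using h
  let u := TopologicalSpace.denseSeq X
  refine ⟨fun n => Metric.ball (u n.unpair.1) (r (u n.unpair.1) n.unpair.2),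
    fun n => Metric.isOpen_ball, fun n => ?_, ?_⟩
  · have := hr0 (u n.unpair.1) n.unpair.2
    rwa [Metric.thickening_singleton] at this
  · intro x y hxy
    have hd : 0 < dist x y / 2 := half_pos (dist_pos.2 hxy)
    obtain ⟨k, hk⟩ := exists_nat_one_div_lt hd
    have hk2 : (0 : ℝ) < 1 / ((k : ℝ) + 2) := by positivity
    obtain ⟨m, hm⟩ := (TopologicalSpace.denseRange_denseSeq X).exists_dist_lt x hk2
    have h1 := hr (u m) k
    refine ⟨Nat.pair m k, ?_, ?_⟩
    · simp only [Nat.unpair_pair, Metric.mem_ball]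
      exact hm.trans h1.1
    · simp only [Nat.unpair_pair]
      intro hy
      have := Metric.closure_ball_subset_closedBall hy
      rw [Metric.mem_closedBall] at this
      have h3 : dist x (u m) < r (u m) k := hm.trans h1.1
      have h4 := dist_triangle_right x y (u m)
      linarith [h1.2]

theorem aux_transport {X : Type*} [MetricSpace X] [CompactSpace X]
    [MeasurableSpace X] [BorelSpace X]
    (d : ℕ) (hd : 0 < d) (α : Fin d → X ≃ₜ X) (μ : Measure X)
    {C : Type} [MetricSpace C] [CompactSpace C] [MeasurableSpace C] [BorelSpace C]
    (eC : C ≃ₜ (ℕ → Bool))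
    {Y : Type*} [TopologicalSpace Y] [MeasurableSpace Y] [BorelSpace Y]
    (e : Y ≃ₜ C) (β : Fin d → Y ≃ₜ Y) (ν : Measure Y) (s : C(Y, X))
    (h1 : ∀ i j : Fin d, ∀ y, β i (β j y) = β j (β i y))
    (h2 : IsMinimalHomeo (β ⟨0, hd⟩))
    (h3 : IsProbabilityMeasure ν)
    (h4 : ∀ j, MeasurePreserving (β j) ν ν)
    (h5 : Function.Surjective s)
    (h6 : ∀ (j : Fin d) y, s (β j y) = α j (s y))
    (h7 : Measure.map s ν = μ) :
    ∃ (Y : CompactMetricBundle) (β : Fin d → Y.carrier ≃ₜ Y.carrier)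
      (ν : Measure Y.carrier) (s : C(Y.carrier, X)),
      Nonempty (Y.carrier ≃ₜ (ℕ → Bool)) ∧
      (∀ i j : Fin d, ∀ y : Y.carrier, β i (β j y) = β j (β i y)) ∧
      IsMinimalHomeo (β ⟨0, hd⟩) ∧
      IsProbabilityMeasure ν ∧
      (∀ (j : Fin d) (E : Set Y.carrier), MeasurableSet E → ν ((β j) '' E) = ν E) ∧
      Function.Surjective s ∧
      (∀ (j : Fin d) (y : Y.carrier), s (β j y) = α j (s y)) ∧
      Measure.map s ν = μ := by
  refine ⟨⟨C⟩, fun j => (e.symm.trans (β j)).trans e, Measure.map e ν,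
    s.comp ⟨e.symm, e.symm.continuous⟩, ⟨eC⟩, ?_, ?_, ?_, ?_, ?_, ?_, ?_⟩
  · intro i j y
    simp [h1 i j]
  · intro F hF hFi
    have hF' : (β ⟨0, hd⟩) '' (e ⁻¹' F) = e ⁻¹' F := by
      rw [← e.image_symm]
      apply e.injective.image_injective
      have : e '' (e.symm '' F) = F := by simp [Set.image_image]
      rw [this]
      conv_rhs => rw [← hFi]
      simp only [Set.image_image]
      rfl
    rcases h2 (e ⁻¹' F) (hF.preimage e.continuous) hF' with h | h
    · left
      apply e.surjective.preimage_injective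
      simpa using h
    · right
      apply e.surjective.preimage_injective
      simpa using h
  · exact Measure.isProbabilityMeasure_map e.continuous.measurable.aemeasurable
  · intro j E hE
    change Measure.map e ν ((fun y => e (β j (e.symm y))) '' E) = _
    have : (fun y => e (β j (e.symm y))) '' E = e.symm ⁻¹' ((β j).symm ⁻¹' (e ⁻¹' E)) := by
      ext y
      constructor
      · rintro ⟨x, hx, rfl⟩
        simpa using hx
      · intro hy
        exact ⟨_, hy, by simp⟩
    have hE' : MeasurableSet (e ⁻¹' E) := e.continuous.measurable hE
    have hE2 : MeasurableSet ((β j).symm ⁻¹' (e ⁻¹' E)) := (β j).symm.continuous.measurable hE'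
    rw [this, Measure.map_apply e.continuous.measurable (e.symm.continuous.measurable hE2),
      Measure.map_apply e.continuous.measurable hE]
    have h8 : e ⁻¹' (e.symm ⁻¹' ((β j).symm ⁻¹' (e ⁻¹' E))) = (β j).symm ⁻¹' (e ⁻¹' E) := by
      ext; simp
    rw [h8]
    rw [← (h4 j).measure_preimage hE2.nullMeasurableSet]
    congr 1
    ext; simp
  · exact h5.comp e.symm.surjective
  · intro j y
    simp [h6]
  · rw [Measure.map_map (ContinuousMap.continuous _).measurable e.continuous.measurable, ← h7]
    congr 1
    ext y
    simp

theorem aux_countable {G : Type*} [Group G] {d : ℕ} (α : Fin d → G) :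
    Countable (Subgroup.closure (Set.range α)) := by
  have : Countable (FreeGroup (Fin d)) :=
    (FreeGroup.toWord_injective).countable
  rw [← FreeGroup.range_lift_eq_closure]
  exact (FreeGroup.lift α).rangeRestrict_surjective.countable

theorem stmt_5 {X : Type*} [MetricSpace X] [CompactSpace X] [Infinite X]
    [MeasurableSpace X] [BorelSpace X]
    (d : ℕ) (hd : 0 < d) (α : Fin d → X ≃ₜ X)
    (hcomm : ∀ i j : Fin d, ∀ x : X, α i (α j x) = α j (α i x))
    (hmin : IsMinimalHomeo (α ⟨0, hd⟩))
    (μ : Measure X) [IsProbabilityMeasure μ]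
    (hpos : ∀ U : Set X, IsOpen U → U.Nonempty → 0 < μ U)
    (hinv : ∀ (j : Fin d) (E : Set X), MeasurableSet E → μ ((α j) '' E) = μ E) :
    ∃ (Y : CompactMetricBundle) (β : Fin d → Y.carrier ≃ₜ Y.carrier)
      (ν : Measure Y.carrier) (s : C(Y.carrier, X)),
      Nonempty (Y.carrier ≃ₜ (ℕ → Bool)) ∧
      (∀ i j : Fin d, ∀ y : Y.carrier, β i (β j y) = β j (β i y)) ∧
      IsMinimalHomeo (β ⟨0, hd⟩) ∧
      IsProbabilityMeasure ν ∧
      (∀ (j : Fin d) (E : Set Y.carrier), MeasurableSet E → ν ((β j) '' E) = ν E) ∧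
      Function.Surjective s ∧
      (∀ (j : Fin d) (y : Y.carrier), s (β j y) = α j (s y)) ∧
      Measure.map s ν = μ := by
  classical
  obtain ⟨U, hUo, hU0, hUs⟩ := aux_family μ
  let H := Subgroup.closure (Set.range α)
  have : Countable H := aux_countable α
  have hmpα : ∀ j, MeasurePreserving (α j) μ μ := by
    intro j
    refine ⟨(α j).continuous.measurable, ?_⟩
    ext E hE
    rw [Measure.map_apply (α j).continuous.measurable hE,
      ← hinv j _ ((α j).continuous.measurable hE),
      Set.image_preimage_eq _ (α j).surjective]
  have hmp : ∀ h ∈ H, MeasurePreserving (h : X ≃ₜ X) μ μ := by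
    intro h hh
    induction hh using Subgroup.closure_induction with
    | mem x hx => obtain ⟨j, rfl⟩ := hx; exact hmpα j
    | one => exact MeasurePreserving.id μ
    | mul x y _ _ hx hy => exact hx.comp hy
    | inv x _ hx => exact hx.symm x.toMeasurableEquiv
  let ψ : X → (X × (H × ℕ → Bool)) := fun x => (x, fun p => decide ((p.1 : X ≃ₜ X) x ∈ U p.2))
  let G0 : Set X := {x | ∀ p : H × ℕ, (p.1 : X ≃ₜ X) x ∉ frontier (U p.2)}
  have hG0m : MeasurableSet G0 := by
    have : G0 = ⋂ p : H × ℕ, (p.1 : X ≃ₜ X) ⁻¹' (frontier (U p.2))ᶜ := by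
      ext; simp [G0]
    rw [this]
    exact MeasurableSet.iInter fun p =>
      (p.1 : X ≃ₜ X).continuous.measurable isClosed_frontier.measurableSet.compl
  have hG0ae : ∀ᵐ x ∂μ, x ∈ G0 := by
    refine ae_all_iff.2 fun p => ?_
    have h1 : ∀ᵐ x ∂μ, x ∉ frontier (U p.2) := measure_eq_zero_iff_ae_notMem.1 (hU0 p.2)
    exact (hmp p.1 p.1.2).quasiMeasurePreserving.ae h1
  have hG0d : Dense G0 := by
    rw [dense_iff_inter_open]
    intro V hV hVn
    by_contra hcon
    have : V ⊆ G0ᶜ := fun x hx hx' => hcon ⟨x, hx, hx'⟩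
    exact (hpos V hV hVn).ne' (measure_mono_null this hG0ae)
  have hG0i : ∀ (k : H), ∀ x ∈ G0, (k : X ≃ₜ X) x ∈ G0 := fun k x hx p => hx (p.1 * k, p.2)
  let T : H → (X × (H × ℕ → Bool)) ≃ₜ (X × (H × ℕ → Bool)) := fun k =>
    { toFun := fun z => ((k : X ≃ₜ X) z.1, fun p => z.2 (p.1 * k, p.2))
      invFun := fun z => ((k : X ≃ₜ X).symm z.1, fun p => z.2 (p.1 * k⁻¹, p.2))
      left_inv := fun z => by simp
      right_inv := fun z => by simp
      continuous_toFun := by fun_prop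
      continuous_invFun := by fun_prop }
  have hTψ : ∀ k x, T k (ψ x) = ψ ((k : X ≃ₜ X) x) := fun k x => rfl
  let Y : Set (X × (H × ℕ → Bool)) := closure (ψ '' G0)
  have hYc : IsClosed Y := isClosed_closure
  have hψY : ∀ x ∈ G0, ψ x ∈ Y := fun x hx => subset_closure ⟨x, hx, rfl⟩
  have hTY : ∀ k, ∀ z ∈ Y, T k z ∈ Y := by
    intro k z hz
    refine map_mem_closure (T k).continuous hz ?_
    rintro _ ⟨x, hx, rfl⟩
    exact ⟨_, hG0i k x hx, rfl⟩
  have hTsymm : ∀ k, ∀ z, (T k).symm z = T k⁻¹ z := fun k z => rfl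
  have hTY' : ∀ k z, z ∈ Y ↔ T k z ∈ Y := by
    intro k z
    refine ⟨hTY k z, fun h => ?_⟩
    have := hTY k⁻¹ _ h
    rwa [← hTsymm, Homeomorph.symm_apply_apply] at this
  have L1 : ∀ z ∈ Y, ∀ p : H × ℕ, (p.1 : X ≃ₜ X) z.1 ∈ U p.2 → z.2 p = true := by
    intro z hz p
    have hc : IsClosed {z : (X × (H × ℕ → Bool)) | z.2 p = true ∨ (p.1 : X ≃ₜ X) z.1 ∈ (U p.2)ᶜ} := by
      refine IsClosed.union ?_ ?_
      · exact isClosed_eq (by fun_prop) continuous_const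
      · exact (hUo p.2).isClosed_compl.preimage (by fun_prop)
    have hsub : Y ⊆ {z : (X × (H × ℕ → Bool)) | z.2 p = true ∨ (p.1 : X ≃ₜ X) z.1 ∈ (U p.2)ᶜ} := by
      refine closure_minimal ?_ hc
      rintro _ ⟨x, hx, rfl⟩
      simp only [ψ, Set.mem_ofPred_eq, decide_eq_true_eq, Set.mem_compl_iff]
      exact em _
    intro h
    exact (hsub hz).resolve_right (fun h' => h' h)
  have L2 : ∀ z ∈ Y, ∀ p : H × ℕ, z.2 p = true → (p.1 : X ≃ₜ X) z.1 ∈ closure (U p.2) := by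
    intro z hz p
    have hc : IsClosed {z : (X × (H × ℕ → Bool)) | z.2 p = false ∨ (p.1 : X ≃ₜ X) z.1 ∈ closure (U p.2)} := by
      refine IsClosed.union ?_ ?_
      · exact isClosed_eq (by fun_prop) continuous_const
      · exact isClosed_closure.preimage (by fun_prop)
    have hsub : Y ⊆ {z : (X × (H × ℕ → Bool)) | z.2 p = false ∨ (p.1 : X ≃ₜ X) z.1 ∈ closure (U p.2)} := by
      refine closure_minimal ?_ hc
      rintro _ ⟨x, hx, rfl⟩
      simp only [ψ, Set.mem_ofPred_eq, decide_eq_false_iff_not]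
      exact (em _).symm.imp id (fun h => subset_closure h)
    intro h
    exact (hsub hz).resolve_left (by simp [h])
  have huniq : ∀ z ∈ Y, z.1 ∈ G0 → z = ψ z.1 := by
    intro z hz hx
    refine Prod.ext rfl (funext fun p => ?_)
    have h1 := L1 z hz p
    have h2 := L2 z hz p
    have h3 := hx p
    rw [(hUo p.2).frontier_eq] at h3
    by_cases h : (p.1 : X ≃ₜ X) z.1 ∈ U p.2
    · simp [ψ, h, h1 h]
    · have : z.2 p = false := by
        by_contra hc
        exact h3 ⟨h2 (by simpa using hc), h⟩
      simp [ψ, h, this]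
  have hsurj : ∀ x, ∃ z ∈ Y, z.1 = x := by
    have hcl : IsClosed (Prod.fst '' Y) := (hYc.isCompact.image continuous_fst).isClosed
    have hs : G0 ⊆ Prod.fst '' Y := fun x hx => ⟨ψ x, hψY x hx, rfl⟩
    intro x
    have : x ∈ Prod.fst '' Y := by
      have := closure_minimal hs hcl
      rw [hG0d.closure_eq] at this
      exact this (Set.mem_univ x)
    exact this
  have : CompactSpace Y := isCompact_iff_compactSpace.1 hYc.isCompact
  obtain ⟨x0, hx0⟩ := hG0d.nonempty
  let y0 : Y := ⟨ψ x0, hψY x0 hx0⟩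
  let s : C(Y, X) := ⟨fun y => y.1.1, by fun_prop⟩
  have hss : Function.Surjective s := fun x => by
    obtain ⟨z, hz, h⟩ := hsurj x
    exact ⟨⟨z, hz⟩, h⟩
  have hαH : ∀ j, α j ∈ H := fun j => Subgroup.subset_closure ⟨j, rfl⟩
  let a : Fin d → H := fun j => ⟨α j, hαH j⟩
  have hac : ∀ i j, a i * a j = a j * a i := by
    intro i j
    ext x
    exact hcomm i j x
  let β : Fin d → Y ≃ₜ Y := fun j => (T (a j)).subtype (hTY' (a j))
  have hβval : ∀ j (y : Y), ((β j y : Y) : (X × (H × ℕ → Bool))) = T (a j) y := fun j y => rfl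
  have hβcomm : ∀ i j : Fin d, ∀ y, β i (β j y) = β j (β i y) := by
    intro i j y
    apply Subtype.ext
    simp only [hβval]
    refine Prod.ext (hcomm i j _) (funext fun p => ?_)
    change (y : (X × (H × ℕ → Bool))).2 (p.1 * a i * a j, p.2) = (y : (X × (H × ℕ → Bool))).2 (p.1 * a j * a i, p.2)
    rw [mul_assoc, hac, mul_assoc]
  have hsβ : ∀ (j : Fin d) y, s (β j y) = α j (s y) := fun j y => rfl
  have hβmin : IsMinimalHomeo (β ⟨0, hd⟩) := by
    intro F hF hFi
    rcases F.eq_empty_or_nonempty with h | hne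
    · exact Or.inl h
    right
    have hsF : s '' F = Set.univ := by
      refine (hmin (s '' F) (hF.isCompact.image s.continuous).isClosed ?_).resolve_left
        (hne.image s).ne_empty
      conv_rhs => rw [← hFi]
      simp only [Set.image_image]
      rfl
    have hFK : IsClosed (Subtype.val '' F : Set (X × (H × ℕ → Bool))) := hYc.isClosedEmbedding_subtypeVal.isClosedMap _ hF
    have hsub : Y ⊆ Subtype.val '' F := by
      refine closure_minimal ?_ hFK
      rintro _ ⟨x, hx, rfl⟩
      obtain ⟨y, hy, hyx⟩ : x ∈ s '' F := by rw [hsF]; trivial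
      refine ⟨y, hy, ?_⟩
      have hyx' : (y : (X × (H × ℕ → Bool))).1 = x := hyx
      have := huniq y y.2 (by rw [hyx']; exact hx)
      rw [this, hyx']
    ext y
    refine ⟨fun _ => trivial, fun _ => ?_⟩
    obtain ⟨y', h1, h2⟩ := hsub y.2
    rwa [← Subtype.ext h2]
  have : Infinite Y := Infinite.of_surjective s hss
  have hiso : ∀ y : Y, ¬ IsOpen ({y} : Set Y) := by
    intro y hy
    let b := β ⟨0, hd⟩
    let O : Set Y := {z | IsOpen ({z} : Set Y)}
    have hO : IsOpen O := by
      rw [isOpen_iff_forall_mem_open]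
      intro z hz
      exact ⟨{z}, by rintro _ rfl; exact hz, hz, rfl⟩
    have hOb : ∀ z, b z ∈ O ↔ z ∈ O := by
      intro z
      change IsOpen {b z} ↔ IsOpen {z}
      rw [← Set.image_singleton, b.isOpen_image]
    have hb : b '' Oᶜ = Oᶜ := by
      ext z
      constructor
      · rintro ⟨x, hx, rfl⟩
        exact fun h => hx ((hOb x).1 h)
      · intro hz
        refine ⟨b.symm z, fun h => hz ?_, by simp⟩
        have := (hOb (b.symm z)).2 h
        simpa using this
    rcases hβmin Oᶜ hO.isClosed_compl hb with h | h
    · have hdisc : DiscreteTopology Y := by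
        refine discreteTopology_iff_isOpen_singleton.2 fun z => ?_
        have : z ∈ O := by
          by_contra hz
          exact (h ▸ (hz : z ∈ Oᶜ) : z ∈ (∅ : Set Y))
        exact this
      have := finite_of_compact_of_discrete (X := Y)
      exact not_finite Y
    · have : y ∈ Oᶜ := by rw [h]; trivial
      exact this hy
  obtain ⟨en, hen⟩ := exists_surjective_nat (H × ℕ)
  obtain ⟨e⟩ : Nonempty (Y ≃ₜ (ℕ → Bool)) := by
    have : Nonempty Y := ⟨y0⟩
    refine aux_brouwer hiso (fun n => {y | (y : (X × (H × ℕ → Bool))).2 (en n) = true}) ?_ ?_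
    · intro n
      have : Continuous (fun y : Y => (y : (X × (H × ℕ → Bool))).2 (en n)) := by fun_prop
      exact (isClopen_discrete {true}).preimage this
    · intro y z hyz
      obtain ⟨p, hp⟩ : ∃ p, ¬ ((y : X × (H × ℕ → Bool)).2 p = true ↔
          (z : X × (H × ℕ → Bool)).2 p = true) := by
        by_contra! hcon
        apply hyz
        apply Subtype.ext
        refine Prod.ext ?_ (funext fun p => Bool.eq_iff_iff.2 (hcon p))
        by_contra hne
        obtain ⟨n, h1, h2⟩ := hUs _ _ hne
        exact h2 (L2 z z.2 (1, n) ((hcon (1, n)).1 (L1 y y.2 (1, n) h1)))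
      obtain ⟨n, rfl⟩ := hen p
      exact ⟨n, hp⟩
  let Φ : X → Y := fun x => if h : x ∈ G0 then ⟨ψ x, hψY x h⟩ else y0
  have hΦ : ∀ x (h : x ∈ G0), Φ x = ⟨ψ x, hψY x h⟩ := fun x h => dif_pos h
  have hψm : Measurable ψ := by
    refine measurable_id.prodMk (measurable_pi_lambda _ fun p => ?_)
    refine measurable_to_bool ?_
    have : (fun x => decide ((p.1 : X ≃ₜ X) x ∈ U p.2)) ⁻¹' {true} = (p.1 : X ≃ₜ X) ⁻¹' U p.2 := by
      ext; simp
    rw [this]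
    exact (p.1 : X ≃ₜ X).continuous.measurable (hUo p.2).measurableSet
  have hΦm : Measurable Φ := by
    have : Measurable (fun x => ((Φ x : Y) : X × (H × ℕ → Bool))) := by
      have h2 : (fun x => ((Φ x : Y) : X × (H × ℕ → Bool))) = fun x => if x ∈ G0 then ψ x else ψ x0 := by
        funext x
        by_cases h : x ∈ G0
        · simp [h, hΦ]
        · simp [h, Φ, y0]
      rw [h2]
      exact Measurable.ite hG0m hψm measurable_const
    exact this.subtype_mk (h := fun x => (Φ x).2)
  have hβΦ : ∀ j, ∀ x ∈ G0, β j (Φ x) = Φ (α j x) := by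
    intro j x hx
    rw [hΦ x hx, hΦ _ (hG0i (a j) x hx)]
    rfl
  let _ : MetricSpace (ℕ → Bool) := TopologicalSpace.metrizableSpaceMetric (ℕ → Bool)
  refine aux_transport d hd α μ (C := ℕ → Bool) (Homeomorph.refl _) (Y := Y) e β (Measure.map Φ μ) s
    hβcomm hβmin (Measure.isProbabilityMeasure_map hΦm.aemeasurable) ?_ hss hsβ ?_
  · intro j
    have hβm : Measurable (β j) := (β j).continuous.measurable
    refine ⟨hβm, ?_⟩
    rw [Measure.map_map hβm hΦm]
    have h1 : (β j) ∘ Φ =ᵐ[μ] Φ ∘ (α j) := by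
      filter_upwards [hG0ae] with x hx
      exact hβΦ j x hx
    rw [Measure.map_congr h1, ← Measure.map_map hΦm (hmpα j).measurable, (hmpα j).map_eq]
  · rw [Measure.map_map s.continuous.measurable hΦm]
    have h1 : s ∘ Φ =ᵐ[μ] id := by
      filter_upwards [hG0ae] with x hx
      simp only [Function.comp, hΦ x hx]
      rfl
    rw [Measure.map_congr h1, Measure.map_id]
end
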